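/- Let α ∈ (0,1), T > 0, ℓ > 0. Assume a, f ∈ C²([0,T]×[−ℓ,ℓ]×ℝ×ℝ) with a > 0, and assume b(·,±ℓ,·), g(·,±ℓ,·) ∈ C²([0,T]×ℝ) are gradient-independent with b > 0. Let u⁰ ∈ C^{2+α}([−ℓ,ℓ]) satisfy the compatibility condition ∓b(0,±ℓ,u⁰(±ℓ))u⁰ₓ(±ℓ) + g(0,±ℓ,u⁰(±ℓ)) = a(0,±ℓ,u⁰(±ℓ),u⁰ₓ(±ℓ))u⁰ₓₓ(±ℓ) + f(0,±ℓ,u⁰(±ℓ),u⁰ₓ(±ℓ)), and suppose u⁰ is Lipschitz with constant K. Suppose there is M > 0 and there are q₀ ≥ K and ψ ∈ C¹([0,∞),[1,∞)) with ∫_{q₀}^{∞} ρ/ψ(ρ) dρ > 2M such that |f(t,x,z,p)| ≤ a(t,x,z,p)ψ(|p|) for (t,x) ∈ closure(Ω_T), z ∈ [−M,M], p ∈ ℝ, and ±g(t,ℓ,z) ≤ b(t,ℓ,z)·p and ∓g(t,−ℓ,z) ≤ b(t,−ℓ,z)·p for t ∈ (0,T], z ∈ [−M,M], p ≥ q₀.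 If the unique maximal solution u of (1),(2a) with u(0,·) = u⁰ on [0,τ_∞) satisfies sup_{Ω_τ}|u| ≤ M for every τ < τ_∞, then u ∈ C^{1+α/2,2+α}(Ω_T), i.e. the solution is global on [0,T]. -/

import Mathlib

/-!
The theorem combines a priori bounds for the given solution `u` with the solvability, on the whole
of `[0,T]`, of a truncated problem that `u` also solves.

*Gradient bound.* If `h` is a concave modulus with `h'' = -ψ(h')`, `h' ∈ [q₀,q₁]` and final value
larger than `2M`, then `u(t,x) - u(t,y) ≤ h(x-y)` is preserved in time: at a first interior contact
point `u_x = h'` and `u_xx(t,x) ≤ -ψ(h')`, `u_xx(t,y) ≥ ψ(h')`, so the Nagumo condition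
`|f| ≤ aψ` gives `u_t(t,x) ≤ 0 ≤ u_t(t,y)`; the sign condition on `g` excludes contact at the ends.
Such an `h` exists because `∫ ρ/ψ > 2M`. Hence `|u_x| ≤ q₁` (`le_modulus`, `exists_modulus`,
`Facts.grad_bound`).

*Bound for `u_xx`.* Difference quotients of `u` in `x` satisfy an equation with quadratic growth in
their own slope, so the same modulus argument with `ψ(ρ) = Dρ²`, for which `∫ ρ/ψ` diverges, bounds
`u_xx` (`exists_snd_deriv_bound`, `Facts.snd_bound`).

*Truncation.* Cutting the coefficients off beyond these bounds, and continuing the equation and the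
boundary fluxes with slope one in `u_xx` resp. `u_x`, gives a problem `u_t = G(t,x,u,u_x,u_xx)`,
`u_t = H(t,u,u_x)` at the ends, uniformly parabolic and globally Lipschitz (`StarData`,
`starData_trunc`).

*Solvability of the truncated problem.* An explicit monotone finite-difference scheme is used.
Differenced in time, it is a linear monotone scheme for the discrete time derivative, with bounded
measurable coefficients; as the boundary conditions are dynamical, the maximum principle
and doubling of variables hold for it up to the boundary. They give sup, spatial Hölder and
temporal Hölder bounds for the discrete `u_t`, starting from the initial data through the
compatibility condition (`qsch_sup`, `qsch_space`, `qsch_time`, `qsch_init`). Solving the equation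
for the second differences yields bounds in `C^{1+α/2,2+α}` uniform in the mesh, and the limit of
the grid functions is a solution on `[0,T]` (`exists_gridApprox`, `limitSol_of_gridApprox`,
`smoothSol_of_limitSol`).

*Conclusion.* By the comparison principle this solution `v` equals `u` before `τ∞`
(`StarData.comparison`, `Facts.eq_smoothSol`), so `v` obeys the a priori bounds there and, by
continuity, slightly weaker ones a little longer (`SmoothSol.extend`). The cut-offs are placed above
the weaker bounds, so `v` solves the original problem beyond `τ∞` if `τ∞ < T`, against maximality.
Hence `τ∞ = T` and `v` is the global solution.
-/

open Set Filter MeasureTheory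
open scoped Topology

noncomputable section

/-- The time derivative `u_t` of a function `u = u(t,x)`. -/
def timeDeriv (u : ℝ → ℝ → ℝ) (t x : ℝ) : ℝ := deriv (fun s => u s x) t

/-- The spatial derivative `u_x` of a function `u = u(t,x)`. -/
def spaceDeriv (u : ℝ → ℝ → ℝ) (t x : ℝ) : ℝ := deriv (fun y => u t y) x

/-- The second spatial derivative `u_{xx}` of a function `u = u(t,x)`. -/
def spaceDeriv2 (u : ℝ → ℝ → ℝ) (t x : ℝ) : ℝ := deriv (fun y => spaceDeriv u t y) x

/-- `v` is uniformly `β`-Hölder continuous on `I` with constant `C`. -/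
def HolderBnd (β : ℝ) (I : Set ℝ) (v : ℝ → ℝ) (C : ℝ) : Prop :=
  ∀ s ∈ I, ∀ s' ∈ I, |v s - v s'| ≤ C * |s - s'| ^ β

/-- The `β`-Hölder seminorm `[v]^{(β)}_I`. -/
def hSemi (β : ℝ) (I : Set ℝ) (v : ℝ → ℝ) : ℝ :=
  sSup ((fun p : ℝ × ℝ => |v p.1 - v p.2| / |p.1 - p.2| ^ β) ''
    {p : ℝ × ℝ | p.1 ∈ I ∧ p.2 ∈ I ∧ p.1 ≠ p.2})

/-- The sup-norm of `v` on `I`. -/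
def supI (I : Set ℝ) (v : ℝ → ℝ) : ℝ := sSup ((fun s => |v s|) '' I)

/-- The `C^β` norm `|v|^{(β)}_I`. -/
def hNorm (β : ℝ) (I : Set ℝ) (v : ℝ → ℝ) : ℝ := supI I v + hSemi β I v

/-- The sup-norm of `w` on `(0,τ) × Q`. -/
def supN (τ : ℝ) (Q : Set ℝ) (w : ℝ → ℝ → ℝ) : ℝ :=
  sSup ((fun p : ℝ × ℝ => |w p.1 p.2|) '' (Ioo 0 τ ×ˢ Q))

/-- The parabolic Hölder seminorm `⟨w⟩^{(β/2,β)}_{(0,τ)×Q}`. -/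
def pSemi (β τ : ℝ) (Q : Set ℝ) (w : ℝ → ℝ → ℝ) : ℝ :=
  sSup ((fun x => hSemi (β / 2) (Ioo 0 τ) (fun t => w t x)) '' Q) +
    sSup ((fun t => hSemi β Q (fun x => w t x)) '' (Ioo 0 τ))

/-- Componentwise bound `C` for the parabolic Hölder seminorm `⟨w⟩^{(β/2,β)}_{(0,τ)×Q}`. -/
def PHolderBnd (β τ : ℝ) (Q : Set ℝ) (w : ℝ → ℝ → ℝ) (C : ℝ) : Prop :=
  (∀ x ∈ Q, HolderBnd (β / 2) (Ioo 0 τ) (fun t => w t x) C) ∧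
    ∀ t ∈ Ioo (0 : ℝ) τ, HolderBnd β Q (fun x => w t x) C

/-- The norm `|w|^{(β/2,β)}_{(0,τ)×Q}`. -/
def pNorm0 (β τ : ℝ) (Q : Set ℝ) (w : ℝ → ℝ → ℝ) : ℝ := supN τ Q w + pSemi β τ Q w

/-- The leading parabolic seminorm `⟨u⟩^{(1+α/2,2+α)}_{(0,τ)×Q}`. -/
def pSemi2 (α τ : ℝ) (Q : Set ℝ) (u : ℝ → ℝ → ℝ) : ℝ :=
  pSemi α τ Q (timeDeriv u) + pSemi α τ Q (spaceDeriv2 u) +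
    sSup ((fun x => hSemi ((1 + α) / 2) (Ioo 0 τ) (fun t => spaceDeriv u t x)) '' Q)

/-- The parabolic Hölder norm `|u|^{(1+α/2,2+α)}_{(0,τ)×Q}`. -/
def pNorm2 (α τ : ℝ) (Q : Set ℝ) (u : ℝ → ℝ → ℝ) : ℝ :=
  supN τ Q u + supN τ Q (timeDeriv u) + supN τ Q (spaceDeriv u) +
    supN τ Q (spaceDeriv2 u) + pSemi2 α τ Q u

/-- `C^{1,2}`-regularity (existence of `u_t`, `u_x`, `u_{xx}`) on `(0,τ) × Q`. -/
def Reg12 (τ : ℝ) (Q : Set ℝ) (u : ℝ → ℝ → ℝ) : Prop :=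
  ∀ t ∈ Ioo (0 : ℝ) τ, ∀ x ∈ Q,
    DifferentiableAt ℝ (fun s => u s x) t ∧
      DifferentiableAt ℝ (fun y => u t y) x ∧
        DifferentiableAt ℝ (fun y => spaceDeriv u t y) x

/-- Membership in the parabolic Hölder space `C^{1+α/2,2+α}((0,τ)×Q)`. -/
def MemP (α τ : ℝ) (Q : Set ℝ) (u : ℝ → ℝ → ℝ) : Prop :=
  ContinuousOn (fun p : ℝ × ℝ => u p.1 p.2) (Icc 0 τ ×ˢ closure Q) ∧
    Reg12 τ (closure Q) u ∧
      ∃ C : ℝ,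
        (∀ t ∈ Ioo (0 : ℝ) τ, ∀ x ∈ Q,
          |u t x| ≤ C ∧ |timeDeriv u t x| ≤ C ∧ |spaceDeriv u t x| ≤ C ∧
            |spaceDeriv2 u t x| ≤ C) ∧
          PHolderBnd α τ Q (timeDeriv u) C ∧ PHolderBnd α τ Q (spaceDeriv2 u) C ∧
            ∀ x ∈ Q, HolderBnd ((1 + α) / 2) (Ioo 0 τ) (fun t => spaceDeriv u t x) C

/-- Membership in `C^{2+α}([-ℓ,ℓ])`. -/
def MemC2 (α ℓ : ℝ) (v : ℝ → ℝ) : Prop :=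
  ContinuousOn v (Icc (-ℓ) ℓ) ∧
    (∀ x ∈ Icc (-ℓ) ℓ, DifferentiableAt ℝ v x ∧ DifferentiableAt ℝ (deriv v) x) ∧
      ContinuousOn (deriv (deriv v)) (Icc (-ℓ) ℓ) ∧
        ∃ C : ℝ, HolderBnd α (Icc (-ℓ) ℓ) (deriv (deriv v)) C

/-- The `C^{2+α}([-ℓ,ℓ])` norm. -/
def c2Norm (α ℓ : ℝ) (v : ℝ → ℝ) : ℝ :=
  supI (Icc (-ℓ) ℓ) v + supI (Icc (-ℓ) ℓ) (deriv v) + supI (Icc (-ℓ) ℓ) (deriv (deriv v)) +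
    hSemi α (Icc (-ℓ) ℓ) (deriv (deriv v))

/-- Regularity of a classical solution on `(0,τ) × (-ℓ,ℓ)` for a problem with dynamical
boundary conditions at `x = ±ℓ`: continuity on the closed cylinder, interior `C^{1,2}`
regularity and existence of `u_t` and `u_x` at the lateral boundary. -/
def ClassicalReg (τ ℓ : ℝ) (u : ℝ → ℝ → ℝ) : Prop :=
  ContinuousOn (fun p : ℝ × ℝ => u p.1 p.2) (Icc 0 τ ×ˢ Icc (-ℓ) ℓ) ∧
    Reg12 τ (Ioo (-ℓ) ℓ) u ∧
      ∀ t ∈ Ioo (0 : ℝ) τ,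
        DifferentiableAt ℝ (fun s => u s ℓ) t ∧ DifferentiableAt ℝ (fun y => u t y) ℓ ∧
          DifferentiableAt ℝ (fun s => u s (-ℓ)) t ∧ DifferentiableAt ℝ (fun y => u t y) (-ℓ)

/-- `u` is a classical solution on `(0,τ) × (-ℓ,ℓ)` of the quasilinear equation (1) with the
gradient-dependent dynamical boundary conditions (2) and initial value `u0`. -/
def SolQ (τ ℓ : ℝ) (a f b g : ℝ → ℝ → ℝ → ℝ → ℝ) (u0 : ℝ → ℝ) (u : ℝ → ℝ → ℝ) : Prop :=
  ClassicalReg τ ℓ u ∧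
    (∀ t ∈ Ioo (0 : ℝ) τ, ∀ x ∈ Ioo (-ℓ) ℓ,
      timeDeriv u t x - a t x (u t x) (spaceDeriv u t x) * spaceDeriv2 u t x
        = f t x (u t x) (spaceDeriv u t x)) ∧
      (∀ t ∈ Ioo (0 : ℝ) τ,
        timeDeriv u t ℓ + b t ℓ (u t ℓ) (spaceDeriv u t ℓ) * spaceDeriv u t ℓ
            = g t ℓ (u t ℓ) (spaceDeriv u t ℓ) ∧
          timeDeriv u t (-ℓ) - b t (-ℓ) (u t (-ℓ)) (spaceDeriv u t (-ℓ)) * spaceDeriv u t (-ℓ)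
            = g t (-ℓ) (u t (-ℓ)) (spaceDeriv u t (-ℓ))) ∧
        ∀ x ∈ Icc (-ℓ) ℓ, u 0 x = u0 x

/-- `u` is a classical solution on `(0,τ) × (-ℓ,ℓ)` of the quasilinear equation (1) with the
gradient-independent dynamical boundary conditions (2a) and initial value `u0`. -/
def SolQ2a (τ ℓ : ℝ) (a f : ℝ → ℝ → ℝ → ℝ → ℝ) (b g : ℝ → ℝ → ℝ → ℝ) (u0 : ℝ → ℝ)
    (u : ℝ → ℝ → ℝ) : Prop :=
  ClassicalReg τ ℓ u ∧
    (∀ t ∈ Ioo (0 : ℝ) τ, ∀ x ∈ Ioo (-ℓ) ℓ,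
      timeDeriv u t x - a t x (u t x) (spaceDeriv u t x) * spaceDeriv2 u t x
        = f t x (u t x) (spaceDeriv u t x)) ∧
      (∀ t ∈ Ioo (0 : ℝ) τ,
        timeDeriv u t ℓ + b t ℓ (u t ℓ) * spaceDeriv u t ℓ = g t ℓ (u t ℓ) ∧
          timeDeriv u t (-ℓ) - b t (-ℓ) (u t (-ℓ)) * spaceDeriv u t (-ℓ) = g t (-ℓ) (u t (-ℓ))) ∧
        ∀ x ∈ Icc (-ℓ) ℓ, u 0 x = u0 x

/-! ### Discrete maximum principles -/

/-- The admissible weights of a monotone three-point stencil at the node `i` of a grid with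
nodes `0, …, n` and mesh width `k`. An interior node carries `c δ² + d D⁺` (second difference
and forward difference), with `c ∈ [lam, Lam]` and `|d| ≤ C`; an end node carries the inward
difference quotient with a weight in `[lam, Lam]`. Here `A` multiplies the forward increment
and `B` the backward increment. -/
def IsCoef (lam Lam C k : ℝ) (n i : ℕ) (A B : ℝ) : Prop :=
  (0 < i ∧ i < n ∧ ∃ c d, lam ≤ c ∧ c ≤ Lam ∧ |d| ≤ C ∧ A = c / k ^ 2 + d / k ∧ B = c / k ^ 2) ∨
    (i = 0 ∧ ∃ β, lam ≤ β ∧ β ≤ Lam ∧ A = β / k ∧ B = 0) ∨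
      (i = n ∧ ∃ β, lam ≤ β ∧ β ≤ Lam ∧ A = 0 ∧ B = β / k)

/-- One explicit Euler step `z ↦ z'` of a linear monotone scheme, with source at the node `i`
bounded by `S i`. At `i = 0` the term `z (i - 1)` is harmless since its weight `B` vanishes. -/
def LinStep (lam Lam C k h : ℝ) (n : ℕ) (S : ℕ → ℝ) (z z' : ℕ → ℝ) : Prop :=
  ∀ i ≤ n, ∃ A B s, IsCoef lam Lam C k n i A B ∧ |s| ≤ S i ∧
    z' i = z i + h * (A * (z (i + 1) - z i) - B * (z i - z (i - 1)) + s)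

/-- Smallness of the mesh; the last condition is the CFL condition. -/
structure Mesh (lam Lam C k h : ℝ) : Prop where
  lam_pos : 0 < lam
  lam_le : lam ≤ Lam
  C_nonneg : 0 ≤ C
  k_pos : 0 < k
  h_pos : 0 < h
  k_le : k ≤ 1
  kC : k * C ≤ lam
  cfl : h * (2 * Lam + lam) ≤ k ^ 2 / 2

/-- Under the CFL condition the weights are nonnegative and the explicit step is monotone. -/
theorem IsCoef.weights {lam Lam C k h : ℝ} {n i : ℕ} {A B : ℝ} (hM : Mesh lam Lam C k h)
    (hc : IsCoef lam Lam C k n i A B) :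
    0 ≤ A ∧ 0 ≤ B ∧ h * (A + B) ≤ 1 / 2 := by
  obtain ⟨h1, h2, h3, h4, h5, h6, h7, h8⟩ := hM
  have hk2 : 0 < k ^ 2 := by positivity
  have key : ∀ X : ℝ, X ≤ 2 * Lam + lam → h * (X / k ^ 2) ≤ 1 / 2 := by
    intro X hX
    have : h * X ≤ k ^ 2 / 2 := le_trans (mul_le_mul_of_nonneg_left hX h5.le) h8
    rw [← mul_div_assoc, div_le_iff₀ hk2]; linarith
  have bd : ∀ β : ℝ, lam ≤ β → β ≤ Lam → 0 ≤ β / k ∧ h * (β / k) ≤ 1 / 2 := by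
    intro β hb hb'
    refine ⟨div_nonneg (by linarith) h4.le, ?_⟩
    have : β / k = (β * k) / k ^ 2 := by field_simp
    rw [this]; apply key
    nlinarith
  rcases hc with ⟨_, _, c, d, hc1, hc2, hd, rfl, rfl⟩ | ⟨_, β, hb, hb', rfl, rfl⟩ |
    ⟨_, β, hb, hb', rfl, rfl⟩
  · have hd' := abs_le.1 hd
    have e : c / k ^ 2 + d / k = (c + d * k) / k ^ 2 := by field_simp
    refine ⟨?_, div_nonneg (by linarith) hk2.le, ?_⟩
    · rw [e]; apply div_nonneg _ hk2.le; nlinarith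
    · have e2 : c / k ^ 2 + d / k + c / k ^ 2 = (2 * c + d * k) / k ^ 2 := by field_simp; ring
      rw [e2]; apply key; nlinarith
  · simpa using bd β hb hb'
  · simpa using bd β hb hb'

theorem LinStep.neg {lam Lam C k h : ℝ} {n : ℕ} {S : ℕ → ℝ} {z z' : ℕ → ℝ}
    (hs : LinStep lam Lam C k h n S z z') :
    LinStep lam Lam C k h n S (fun i => -z i) (fun i => -z' i) := by
  intro i hi
  obtain ⟨A, B, s, hc, hs, he⟩ := hs i hi
  exact ⟨A, B, -s, hc, by simpa using hs, by simp only [he]; ring⟩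

theorem LinStep.mono {lam Lam C k h : ℝ} {n : ℕ} {S S' : ℕ → ℝ} {z z' : ℕ → ℝ}
    (hs : LinStep lam Lam C k h n S z z') (hS : ∀ i ≤ n, S i ≤ S' i) :
    LinStep lam Lam C k h n S' z z' := by
  intro i hi
  obtain ⟨A, B, s, hc, hs, he⟩ := hs i hi
  exact ⟨A, B, s, hc, hs.trans (hS i hi), he⟩

theorem IsCoef.cases_zero {lam Lam C k : ℝ} {n i : ℕ} {A B : ℝ} (hn : 0 < n)
    (hc : IsCoef lam Lam C k n i A B) : (i = 0 → B = 0) ∧ (i = n → A = 0) := by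
  rcases hc with ⟨a1, a2, _⟩ | ⟨a1, β, hb, hb', rfl, rfl⟩ | ⟨a1, β, hb, hb', rfl, rfl⟩
  · exact ⟨fun h => by omega, fun h => by omega⟩
  · exact ⟨fun h => rfl, fun h => by omega⟩
  · exact ⟨fun h => by omega, fun h => rfl⟩

/-- Discrete comparison: an upper barrier `β` for `z` propagates through one step. -/
theorem LinStep.comparison {lam Lam C k h : ℝ} {n : ℕ} {S : ℕ → ℝ} {z z' β : ℕ → ℝ} {E : ℝ}
    (hM : Mesh lam Lam C k h) (hn : 0 < n) (hs : LinStep lam Lam C k h n S z z')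
    (hz : ∀ i ≤ n, z i ≤ β i)
    (hβ : ∀ i ≤ n, ∀ A B, IsCoef lam Lam C k n i A B →
      A * (β (i + 1) - β i) - B * (β i - β (i - 1)) + S i ≤ E) :
    ∀ i ≤ n, z' i ≤ β i + h * E := by
  intro i hi
  obtain ⟨A, B, s, hc, hs, he⟩ := hs i hi
  obtain ⟨hA, hB, hAB⟩ := hc.weights hM
  have hE := hβ i hi A B hc
  have h0 := hM.h_pos
  have s1 : s ≤ S i := (abs_le.1 hs).2
  have a1 : A * (z (i + 1) - z i) ≤ A * (β (i + 1) - z i) := by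
    by_cases hin : i = n
    · rw [(hc.cases_zero hn).2 hin]; simp
    · exact mul_le_mul_of_nonneg_left (by have := hz (i + 1) (by omega); linarith) hA
  have a2 : B * (z (i - 1) - z i) ≤ B * (β (i - 1) - z i) :=
    mul_le_mul_of_nonneg_left (by have := hz (i - 1) (by omega); linarith) hB
  have hzi := hz i hi
  have hm : A * (z (i + 1) - z i) - B * (z i - z (i - 1)) + s
      ≤ E + (A + B) * (β i - z i) := by nlinarith
  have hm2 : h * (A * (z (i + 1) - z i) - B * (z i - z (i - 1)) + s)
      ≤ h * (E + (A + B) * (β i - z i)) := mul_le_mul_of_nonneg_left hm h0.le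
  have hm3 : h * (A + B) * (β i - z i) ≤ 1 / 2 * (β i - z i) :=
    mul_le_mul_of_nonneg_right hAB (by linarith)
  rw [he]; nlinarith

/-- Sup bound after one step. -/
theorem LinStep.sup_bound {lam Lam C k h : ℝ} {n : ℕ} {S : ℕ → ℝ} {z z' : ℕ → ℝ} {X Y : ℝ}
    (hM : Mesh lam Lam C k h) (hn : 0 < n) (hs : LinStep lam Lam C k h n S z z')
    (hz : ∀ i ≤ n, |z i| ≤ X) (hS : ∀ i ≤ n, S i ≤ Y) :
    ∀ i ≤ n, |z' i| ≤ X + h * Y := by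
  intro i hi
  have h1 := hs.comparison (β := fun _ => X) (E := Y) hM hn (fun i hi => (abs_le.1 (hz i hi)).2)
    (fun i hi A B _ => by have := hS i hi; simpa using this) i hi
  have h2 := hs.neg.comparison (β := fun _ => X) (E := Y) hM hn
    (fun i hi => by have := (abs_le.1 (hz i hi)).1; linarith)
    (fun i hi A B _ => by have := hS i hi; simpa using this) i hi
  rw [abs_le]; constructor <;> linarith

/-- The concave quadratic modulus used for the doubling of variables. -/
def quadMod (σ₀ σ₁ N r : ℝ) : ℝ := σ₀ + σ₁ * (2 * r - N * r ^ 2)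

/-- The stencil at the right-hand point of a pair of nodes at distance `r` decreases a concave
quadratic modulus. -/
theorem IsCoef.right_mod {lam Lam C k h : ℝ} {n i : ℕ} {A B S σ₀ σ₁ N r : ℝ}
    (hM : Mesh lam Lam C k h) (hc : IsCoef lam Lam C k n i A B) (hi : 0 < i)
    (hN : N * lam = C + 1) (hσ : S ≤ σ₁) (hσ' : S ≤ lam * σ₁) (hσ0 : 0 ≤ σ₁)
    (hr : 2 * N * r ≤ 1) (hk : 2 * N * k ≤ 1) (hrk : k ≤ r) :
    A * (quadMod σ₀ σ₁ N (r + k) - quadMod σ₀ σ₁ N r)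
      - B * (quadMod σ₀ σ₁ N r - quadMod σ₀ σ₁ N (r - k)) + S ≤ 0 := by
  obtain ⟨h1, h2, h3, h4, h5, h6, h7, h8⟩ := hM
  have hN0 : 0 < N := by
    by_contra hcon
    have : N * lam ≤ 0 := mul_nonpos_of_nonpos_of_nonneg (not_lt.1 hcon) h1.le
    linarith
  have e1 : quadMod σ₀ σ₁ N (r + k) - quadMod σ₀ σ₁ N r = σ₁ * k * (2 - 2 * N * r - N * k) := by
    unfold quadMod; ring
  have e2 : quadMod σ₀ σ₁ N r - quadMod σ₀ σ₁ N (r - k) = σ₁ * k * (2 - 2 * N * r + N * k) := by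
    unfold quadMod; ring
  rw [e1, e2]
  rcases hc with ⟨_, _, c, d, hc1, hc2, hd, rfl, rfl⟩ | ⟨hi0, _⟩ | ⟨_, β, hb, hb', rfl, rfl⟩
  · have hd' := abs_le.1 hd
    have e : (c / k ^ 2 + d / k) * (σ₁ * k * (2 - 2 * N * r - N * k))
        - c / k ^ 2 * (σ₁ * k * (2 - 2 * N * r + N * k)) + S
        = -(2 * N * c * σ₁) + d * σ₁ * (2 - 2 * N * r - N * k) + S := by
      field_simp; ring
    rw [e]
    have t1 : N * lam ≤ N * c := mul_le_mul_of_nonneg_left hc1 hN0.le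
    have t2 : (C + 1) * σ₁ ≤ N * c * σ₁ := mul_le_mul_of_nonneg_right (by linarith) hσ0
    have u0 : 0 ≤ 2 - 2 * N * r - N * k := by linarith
    have u1 : 2 - 2 * N * r - N * k ≤ 2 := by nlinarith
    have t3 : d * σ₁ * (2 - 2 * N * r - N * k) ≤ C * σ₁ * (2 - 2 * N * r - N * k) := by
      apply mul_le_mul_of_nonneg_right _ u0
      exact mul_le_mul_of_nonneg_right hd'.2 hσ0
    have t4 : C * σ₁ * (2 - 2 * N * r - N * k) ≤ C * σ₁ * 2 :=
      mul_le_mul_of_nonneg_left u1 (by positivity)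
    nlinarith
  · omega
  · have e : (0:ℝ) * (σ₁ * k * (2 - 2 * N * r - N * k))
        - β / k * (σ₁ * k * (2 - 2 * N * r + N * k)) + S
        = S - β * σ₁ * (2 - 2 * N * r + N * k) := by field_simp; ring
    rw [e]
    have u0 : 1 ≤ 2 - 2 * N * r + N * k := by nlinarith
    have t1 : lam * σ₁ ≤ β * σ₁ := mul_le_mul_of_nonneg_right hb hσ0
    have t2 : β * σ₁ * 1 ≤ β * σ₁ * (2 - 2 * N * r + N * k) :=
      mul_le_mul_of_nonneg_left u0 (mul_nonneg (by linarith) hσ0)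
    linarith

/-- Mirror image of `IsCoef.right_mod` for the left-hand point of the pair. -/
theorem IsCoef.left_mod {lam Lam C k h : ℝ} {n i : ℕ} {A B S σ₀ σ₁ N r : ℝ}
    (hM : Mesh lam Lam C k h) (hc : IsCoef lam Lam C k n i A B) (hi : i < n)
    (hN : N * lam = C + 1) (hσ : S ≤ σ₁) (hσ' : S ≤ lam * σ₁) (hσ0 : 0 ≤ σ₁)
    (hr : 2 * N * r ≤ 1) (hrk : k ≤ r) :
    B * (quadMod σ₀ σ₁ N (r + k) - quadMod σ₀ σ₁ N r)
      - A * (quadMod σ₀ σ₁ N r - quadMod σ₀ σ₁ N (r - k)) + S ≤ 0 := by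
  obtain ⟨h1, h2, h3, h4, h5, h6, h7, h8⟩ := hM
  have hN0 : 0 < N := by
    by_contra hcon
    have : N * lam ≤ 0 := mul_nonpos_of_nonpos_of_nonneg (not_lt.1 hcon) h1.le
    linarith
  have e1 : quadMod σ₀ σ₁ N (r + k) - quadMod σ₀ σ₁ N r = σ₁ * k * (2 - 2 * N * r - N * k) := by
    unfold quadMod; ring
  have e2 : quadMod σ₀ σ₁ N r - quadMod σ₀ σ₁ N (r - k) = σ₁ * k * (2 - 2 * N * r + N * k) := by
    unfold quadMod; ring
  rw [e1, e2]
  rcases hc with ⟨_, _, c, d, hc1, hc2, hd, rfl, rfl⟩ | ⟨_, β, hb, hb', rfl, rfl⟩ | ⟨hi0, _⟩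
  · have hd' := abs_le.1 hd
    have e : c / k ^ 2 * (σ₁ * k * (2 - 2 * N * r - N * k))
        - (c / k ^ 2 + d / k) * (σ₁ * k * (2 - 2 * N * r + N * k)) + S
        = -(2 * N * c * σ₁) + (-d) * σ₁ * (2 - 2 * N * r + N * k) + S := by
      field_simp; ring
    rw [e]
    have t1 : N * lam ≤ N * c := mul_le_mul_of_nonneg_left hc1 hN0.le
    have t2 : (C + 1) * σ₁ ≤ N * c * σ₁ := mul_le_mul_of_nonneg_right (by linarith) hσ0
    have u0 : 0 ≤ 2 - 2 * N * r + N * k := by nlinarith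
    have u1 : 2 - 2 * N * r + N * k ≤ 2 := by nlinarith
    have t3 : (-d) * σ₁ * (2 - 2 * N * r + N * k) ≤ C * σ₁ * (2 - 2 * N * r + N * k) := by
      apply mul_le_mul_of_nonneg_right _ u0
      exact mul_le_mul_of_nonneg_right (by linarith) hσ0
    have t4 : C * σ₁ * (2 - 2 * N * r + N * k) ≤ C * σ₁ * 2 :=
      mul_le_mul_of_nonneg_left u1 (by positivity)
    nlinarith
  · have e : (0:ℝ) * (σ₁ * k * (2 - 2 * N * r - N * k))
        - β / k * (σ₁ * k * (2 - 2 * N * r + N * k)) + S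
        = S - β * σ₁ * (2 - 2 * N * r + N * k) := by field_simp; ring
    rw [e]
    have u0 : 1 ≤ 2 - 2 * N * r + N * k := by nlinarith
    have t1 : lam * σ₁ ≤ β * σ₁ := mul_le_mul_of_nonneg_right hb hσ0
    have t2 : β * σ₁ * 1 ≤ β * σ₁ * (2 - 2 * N * r + N * k) :=
      mul_le_mul_of_nonneg_left u0 (mul_nonneg (by linarith) hσ0)
    linarith
  · omega

/-- Doubling of variables: a one-sided modulus of continuity of the form `quadMod` is
preserved by one step. At distances beyond `1 / (2 N)` it holds for free because of the sup
bound `Q`. -/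
theorem LinStep.doubling {lam Lam C k h : ℝ} {n : ℕ} {z z' : ℕ → ℝ} {S Q σ₀ σ₁ N : ℝ}
    (hM : Mesh lam Lam C k h) (hn : 0 < n) (hs : LinStep lam Lam C k h n (fun _ => S) z z')
    (hN : N * lam = C + 1) (hσ : S ≤ σ₁) (hσ' : S ≤ lam * σ₁) (hσ0 : 0 ≤ σ₁) (hσ00 : 0 ≤ σ₀)
    (hk : 2 * N * k ≤ 1) (hQ : 4 * N * Q ≤ σ₁) (hz' : ∀ i ≤ n, |z' i| ≤ Q)
    (hz : ∀ i ≤ n, ∀ l ≤ i, N * (k * ((i:ℝ) - l)) ≤ 1 →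
      z i - z l ≤ quadMod σ₀ σ₁ N (k * ((i:ℝ) - l))) :
    ∀ i ≤ n, ∀ l ≤ i, N * (k * ((i:ℝ) - l)) ≤ 1 →
      z' i - z' l ≤ quadMod σ₀ σ₁ N (k * ((i:ℝ) - l)) := by
  have hN0 : 0 < N := by
    by_contra hcon
    have : N * lam ≤ 0 := mul_nonpos_of_nonpos_of_nonneg (not_lt.1 hcon) hM.lam_pos.le
    linarith [hM.C_nonneg]
  have hk0 := hM.k_pos
  intro i hi l hl hNr
  rcases hl.eq_or_lt with rfl | hlt
  · simpa [quadMod] using hσ00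
  have hil : (1:ℝ) ≤ (i:ℝ) - l := by
    have : (l:ℝ) + 1 ≤ i := by exact_mod_cast hlt
    linarith
  set r := k * ((i:ℝ) - l) with hr
  have hrk : k ≤ r := by nlinarith
  by_cases hfar : 1 < 2 * N * r
  · have h1 := (abs_le.1 (hz' i hi)).2
    have h2 := (abs_le.1 (hz' l (by omega))).1
    have h3 : r ≤ 2 * r - N * r ^ 2 := by nlinarith
    have h4 : σ₁ * r ≤ σ₁ * (2 * r - N * r ^ 2) := mul_le_mul_of_nonneg_left h3 hσ0
    have h5 : 2 * Q ≤ σ₁ * r := by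
      have : 4 * N * Q * r ≤ σ₁ * r := mul_le_mul_of_nonneg_right hQ (by linarith)
      have hQ0 : 0 ≤ Q := (abs_nonneg _).trans (hz' i hi)
      nlinarith
    unfold quadMod; linarith
  push Not at hfar
  obtain ⟨A, B, s, hc, hsS, he⟩ := hs i hi
  obtain ⟨A', B', s', hc', hsS', he'⟩ := hs l (by omega)
  obtain ⟨hA, hB, hAB⟩ := hc.weights hM
  obtain ⟨hA', hB', hAB'⟩ := hc'.weights hM
  have h0 := hM.h_pos
  have m1 := hc.right_mod (σ₀ := σ₀) hM (by omega) hN hσ hσ' hσ0 hfar hk hrk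
  have m2 := hc'.left_mod (σ₀ := σ₀) hM (by omega) hN hσ hσ' hσ0 hfar hrk
  have s1 := (abs_le.1 hsS).2
  have s2 := (abs_le.1 hsS').1
  have hD := hz i hi l hl hNr
  rw [← hr] at hD
  have hNk0 : 0 < N * k := mul_pos hN0 hk0
  have hNp : N * (r + k) ≤ 1 := by linarith
  have hNm : N * (r - k) ≤ 1 := by linarith
  generalize hP : quadMod σ₀ σ₁ N (r + k) = P at m1 m2
  generalize hR : quadMod σ₀ σ₁ N (r - k) = R at m1 m2
  generalize hF : quadMod σ₀ σ₁ N r = F at m1 m2 hD ⊢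
  have q1 : A * (z (i + 1) - z l) ≤ A * P := by
    by_cases hin : i = n
    · rw [(hc.cases_zero hn).2 hin]; simp
    · refine mul_le_mul_of_nonneg_left ?_ hA
      have e : k * (((i + 1 : ℕ):ℝ) - l) = r + k := by rw [hr]; push_cast; ring
      have := hz (i + 1) (by omega) l (by omega) (by rw [e]; exact hNp)
      rwa [e, hP] at this
  have q2 : B' * (z i - z (l - 1)) ≤ B' * P := by
    by_cases hin : l = 0
    · rw [(hc'.cases_zero hn).1 hin]; simp
    · refine mul_le_mul_of_nonneg_left ?_ hB'
      have e : k * ((i:ℝ) - ((l - 1 : ℕ):ℝ)) = r + k := by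
        rw [hr, Nat.cast_sub (by omega)]; push_cast; ring
      have := hz i hi (l - 1) (by omega) (by rw [e]; exact hNp)
      rwa [e, hP] at this
  have q3 : B * (z (i - 1) - z l) ≤ B * R := by
    refine mul_le_mul_of_nonneg_left ?_ hB
    have e : k * (((i - 1 : ℕ):ℝ) - l) = r - k := by
      rw [hr, Nat.cast_sub (by omega)]; push_cast; ring
    have := hz (i - 1) (by omega) l (by omega) (by rw [e]; exact hNm)
    rwa [e, hR] at this
  have q4 : A' * (z i - z (l + 1)) ≤ A' * R := by
    refine mul_le_mul_of_nonneg_left ?_ hA'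
    have e : k * ((i:ℝ) - ((l + 1 : ℕ):ℝ)) = r - k := by rw [hr]; push_cast; ring
    have := hz i hi (l + 1) (by omega) (by rw [e]; exact hNm)
    rwa [e, hR] at this
  have main : (A * (z (i + 1) - z i) - B * (z i - z (i - 1)) + s)
      - (A' * (z (l + 1) - z l) - B' * (z l - z (l - 1)) + s')
      ≤ (A + B + (A' + B')) * (F - (z i - z l)) := by
    linarith [q1, q2, q3, q4, m1, m2]
  have main2 := mul_le_mul_of_nonneg_left main h0.le
  have main3 : (h * (A + B) + h * (A' + B')) * (F - (z i - z l)) ≤ 1 * (F - (z i - z l)) :=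
    mul_le_mul_of_nonneg_right (by linarith) (by linarith)
  rw [he, he']; linarith [main2, main3]

/-! ### The explicit scheme -/

/-- Structural conditions on a fully nonlinear problem `u_t = G(t,x,u,u_x,u_xx)` with dynamical
boundary conditions `u_t = Hl(t,u,u_x)`, `u_t = Hr(t,u,u_x)` at the left and right end:
uniform ellipticity, obliqueness, and a global Lipschitz bound in the remaining variables. -/
structure StarData (lam Lam C : ℝ) (G : ℝ → ℝ → ℝ → ℝ → ℝ → ℝ) (Hl Hr : ℝ → ℝ → ℝ → ℝ) :
    Prop where
  lam_pos : 0 < lam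
  lam_le : lam ≤ Lam
  C_nonneg : 0 ≤ C
  G_mono : ∀ t x z p r r', r' ≤ r → lam * (r - r') ≤ G t x z p r - G t x z p r' ∧
    G t x z p r - G t x z p r' ≤ Lam * (r - r')
  G_lip : ∀ t t' x x' z z' p p' r, |G t x z p r - G t' x' z' p' r| ≤
    C * (|t - t'| + |x - x'| + |z - z'| + |p - p'|)
  G_zero : ∀ t x z p, |G t x z p 0| ≤ C
  Hl_mono : ∀ t z p p', p' ≤ p → lam * (p - p') ≤ Hl t z p - Hl t z p' ∧
    Hl t z p - Hl t z p' ≤ Lam * (p - p')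
  Hr_mono : ∀ t z p p', p' ≤ p → lam * (p - p') ≤ Hr t z p' - Hr t z p ∧
    Hr t z p' - Hr t z p ≤ Lam * (p - p')
  Hl_lip : ∀ t t' z z' p, |Hl t z p - Hl t' z' p| ≤ C * (|t - t'| + |z - z'|)
  Hr_lip : ∀ t t' z z' p, |Hr t z p - Hr t' z' p| ≤ C * (|t - t'| + |z - z'|)
  Hl_zero : ∀ t z, |Hl t z 0| ≤ C
  Hr_zero : ∀ t z, |Hr t z 0| ≤ C

/-- The spatially discretized right-hand side on the grid `-ℓ + i k`, `i = 0, …, n`. -/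
def rhs (ℓ : ℝ) (G : ℝ → ℝ → ℝ → ℝ → ℝ → ℝ) (Hl Hr : ℝ → ℝ → ℝ → ℝ) (k : ℝ) (n : ℕ) (t : ℝ)
    (v : ℕ → ℝ) (i : ℕ) : ℝ :=
  if i = 0 then Hl t (v 0) ((v 1 - v 0) / k)
  else if i = n then Hr t (v n) ((v n - v (n - 1)) / k)
  else G t (-ℓ + i * k) (v i) ((v (i + 1) - v i) / k) ((v (i + 1) - 2 * v i + v (i - 1)) / k ^ 2)

/-- The explicit Euler scheme: `sch … j i` approximates the solution at time `j h` and
position `-ℓ + i k`. -/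
def sch (ℓ : ℝ) (G : ℝ → ℝ → ℝ → ℝ → ℝ → ℝ) (Hl Hr : ℝ → ℝ → ℝ → ℝ) (u0 : ℝ → ℝ) (k h : ℝ)
    (n : ℕ) : ℕ → ℕ → ℝ
  | 0, i => u0 (-ℓ + i * k)
  | j + 1, i => sch ℓ G Hl Hr u0 k h n j i +
      h * rhs ℓ G Hl Hr k n (j * h) (sch ℓ G Hl Hr u0 k h n j) i

/-- The discrete time derivative of the scheme. -/
def qsch (ℓ : ℝ) (G : ℝ → ℝ → ℝ → ℝ → ℝ → ℝ) (Hl Hr : ℝ → ℝ → ℝ → ℝ) (u0 : ℝ → ℝ) (k h : ℝ)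
    (n j i : ℕ) : ℝ :=
  rhs ℓ G Hl Hr k n (j * h) (sch ℓ G Hl Hr u0 k h n j) i

theorem sch_succ {ℓ : ℝ} {G : ℝ → ℝ → ℝ → ℝ → ℝ → ℝ} {Hl Hr : ℝ → ℝ → ℝ → ℝ} {u0 : ℝ → ℝ}
    {k h : ℝ} {n j i : ℕ} : sch ℓ G Hl Hr u0 k h n (j + 1) i =
      sch ℓ G Hl Hr u0 k h n j i + h * qsch ℓ G Hl Hr u0 k h n j i := rfl

theorem exists_slope_of_mono {φ : ℝ → ℝ} {a b : ℝ} (hab : a ≤ b)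
    (h : ∀ r r', r' ≤ r → a * (r - r') ≤ φ r - φ r' ∧ φ r - φ r' ≤ b * (r - r')) (r r' : ℝ) :
    ∃ c, a ≤ c ∧ c ≤ b ∧ φ r - φ r' = c * (r - r') := by
  rcases lt_trichotomy r r' with hlt | rfl | hlt
  · obtain ⟨h1, h2⟩ := h r' r hlt.le
    have hp : 0 < r' - r := by linarith
    refine ⟨(φ r' - φ r) / (r' - r), ?_, ?_, ?_⟩
    · rwa [le_div_iff₀ hp]
    · rwa [div_le_iff₀ hp]
    · have : r' - r ≠ 0 := hp.ne'
      field_simp; ring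
  · exact ⟨a, le_rfl, hab, by simp⟩
  · obtain ⟨h1, h2⟩ := h r r' hlt.le
    have hp : 0 < r - r' := by linarith
    refine ⟨(φ r - φ r') / (r - r'), ?_, ?_, ?_⟩
    · rwa [le_div_iff₀ hp]
    · rwa [div_le_iff₀ hp]
    · field_simp

theorem exists_mul_of_abs_le {X Y C : ℝ} (hC : 0 ≤ C) (h : |X| ≤ C * |Y|) :
    ∃ d, |d| ≤ C ∧ X = d * Y := by
  by_cases hY : Y = 0
  · subst hY
    refine ⟨0, by simpa using hC, ?_⟩
    have : |X| ≤ 0 := by simpa using h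
    simpa using this
  · refine ⟨X / Y, ?_, by field_simp⟩
    rw [abs_div, div_le_iff₀ (abs_pos.2 hY)]; exact h

section scheme
variable {lam Lam C : ℝ} {G : ℝ → ℝ → ℝ → ℝ → ℝ → ℝ} {Hl Hr : ℝ → ℝ → ℝ → ℝ}

theorem source_slope {h C q X : ℝ} (hh : 0 < h) (hX : |X| ≤ C * (h + |h * q|)) :
    ∃ s, |s| ≤ C * (1 + |q|) ∧ X = h * s := by
  refine ⟨X / h, ?_, by field_simp⟩
  rw [abs_div, abs_of_pos hh, div_le_iff₀ hh]
  rw [abs_mul, abs_of_pos hh] at hX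
  linarith

/-- Differencing the scheme in time: the discrete time derivative performs a linear monotone
step. -/
theorem qsch_linStep (D : StarData lam Lam C G Hl Hr) {ℓ : ℝ} {u0 : ℝ → ℝ} {k h : ℝ} {n : ℕ}
    (hk : 0 < k) (hh : 0 < h) (j : ℕ) :
    LinStep lam Lam C k h n (fun i => C * (1 + |qsch ℓ G Hl Hr u0 k h n j i|))
      (qsch ℓ G Hl Hr u0 k h n j) (qsch ℓ G Hl Hr u0 k h n (j + 1)) := by
  intro i hi
  set q := qsch ℓ G Hl Hr u0 k h n j with hq
  set v := sch ℓ G Hl Hr u0 k h n j with hv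
  have hv' : sch ℓ G Hl Hr u0 k h n (j + 1) = fun i => v i + h * q i := by
    funext i; rw [sch_succ]
  have ht : ((j + 1 : ℕ) : ℝ) * h = j * h + h := by push_cast; ring
  have htt : |(j:ℝ) * h + h - j * h| = h := by rw [add_sub_cancel_left, abs_of_pos hh]
  have e0 : q i = rhs ℓ G Hl Hr k n (j * h) v i := rfl
  have e1 : qsch ℓ G Hl Hr u0 k h n (j + 1) i
      = rhs ℓ G Hl Hr k n (j * h + h) (fun i => v i + h * q i) i := by
    unfold qsch; rw [hv', ht]
  rw [e1]
  by_cases hi0 : i = 0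
  · subst hi0
    simp only [rhs, if_true] at e0 ⊢
    obtain ⟨β, hb, hb', hβ⟩ := exists_slope_of_mono (φ := fun p => Hl (j * h + h) (v 0 + h * q 0) p)
      D.lam_le (fun r r' hr => D.Hl_mono _ _ _ _ hr)
      ((v 1 + h * q 1 - (v 0 + h * q 0)) / k) ((v 1 - v 0) / k)
    have hl := D.Hl_lip (j * h + h) (j * h) (v 0 + h * q 0) (v 0) ((v 1 - v 0) / k)
    rw [htt, add_sub_cancel_left] at hl
    obtain ⟨s, hs, hs'⟩ := source_slope hh hl
    refine ⟨β / k, 0, s, Or.inr (Or.inl ⟨rfl, β, hb, hb', rfl, rfl⟩), hs, ?_⟩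
    have : h * (β / k * (q (0 + 1) - q 0))
        = β * ((v 1 + h * q 1 - (v 0 + h * q 0)) / k - (v 1 - v 0) / k) := by
      field_simp; ring_nf
    linarith
  by_cases hin : i = n
  · subst hin
    simp only [rhs, hi0, if_false, if_true] at e0 ⊢
    obtain ⟨β, hb, hb', hβ⟩ := exists_slope_of_mono
      (φ := fun p => -Hr (j * h + h) (v i + h * q i) p) D.lam_le
      (fun r r' hr => by
        obtain ⟨a1, a2⟩ := D.Hr_mono (j * h + h) (v i + h * q i) _ _ hr
        constructor <;> linarith)
      ((v i + h * q i - (v (i - 1) + h * q (i - 1))) / k) ((v i - v (i - 1)) / k)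
    have hl := D.Hr_lip (j * h + h) (j * h) (v i + h * q i) (v i) ((v i - v (i - 1)) / k)
    rw [htt, add_sub_cancel_left] at hl
    obtain ⟨s, hs, hs'⟩ := source_slope hh hl
    refine ⟨0, β / k, s, Or.inr (Or.inr ⟨rfl, β, hb, hb', rfl, rfl⟩), hs, ?_⟩
    have : h * (β / k * (q i - q (i - 1)))
        = β * ((v i + h * q i - (v (i - 1) + h * q (i - 1))) / k - (v i - v (i - 1)) / k) := by
      field_simp; ring_nf
    have e2 : q i + h * (0 * (q (i + 1) - q i) - β / k * (q i - q (i - 1)) + s)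
      = q i - h * (β / k * (q i - q (i - 1))) + h * s := by ring
    rw [e2, this]
    linarith
  · simp only [rhs, hi0, hin, if_false] at e0 ⊢
    set x := -ℓ + (i:ℝ) * k
    set t := (j:ℝ) * h
    set p := (v (i + 1) - v i) / k with hp
    set r := (v (i + 1) - 2 * v i + v (i - 1)) / k ^ 2 with hr
    set p' := (v (i + 1) + h * q (i + 1) - (v i + h * q i)) / k with hp'
    set r' := (v (i + 1) + h * q (i + 1) - 2 * (v i + h * q i) + (v (i - 1) + h * q (i - 1)))
      / k ^ 2 with hr'
    obtain ⟨c, hc, hc', hce⟩ := exists_slope_of_mono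
      (φ := fun r => G (t + h) x (v i + h * q i) p' r) D.lam_le
      (fun r r' hr => D.G_mono _ _ _ _ _ _ hr) r' r
    have hl1 := D.G_lip (t + h) (t + h) x x (v i + h * q i) (v i + h * q i) p' p r
    simp only [sub_self, abs_zero, zero_add] at hl1
    obtain ⟨d, hd, hde⟩ := exists_mul_of_abs_le D.C_nonneg hl1
    have hl := D.G_lip (t + h) t x x (v i + h * q i) (v i) p p r
    rw [htt, add_sub_cancel_left] at hl
    simp only [sub_self, abs_zero, add_zero] at hl
    obtain ⟨s, hs, hs'⟩ := source_slope hh hl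
    refine ⟨c / k ^ 2 + d / k, c / k ^ 2, s,
      Or.inl ⟨by omega, by omega, c, d, hc, hc', hd, rfl, rfl⟩, hs, ?_⟩
    have f1 : r' - r = h * ((q (i + 1) - q i) - (q i - q (i - 1))) / k ^ 2 := by
      rw [hr, hr']; field_simp; ring
    have f2 : p' - p = h * (q (i + 1) - q i) / k := by
      rw [hp, hp']; field_simp; ring
    have f3 : h * ((c / k ^ 2 + d / k) * (q (i + 1) - q i) - c / k ^ 2 * (q i - q (i - 1)) + s)
        = c * (r' - r) + d * (p' - p) + h * s := by
      rw [f1, f2]; field_simp; ring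
    rw [f3]
    linarith

end scheme

/-! ### Hölder estimates for the discrete time derivative -/

theorem rpow_le_split {r ρ α : ℝ} (hα : 0 < α) (hα1 : α < 1) (hr : 0 ≤ r) (hρ : 0 < ρ) :
    r ^ α ≤ ρ ^ α + ρ ^ (α - 1) * r := by
  rcases le_or_gt r ρ with h | h
  · have h1 := Real.rpow_le_rpow hr h hα.le
    have : 0 ≤ ρ ^ (α - 1) * r := by positivity
    linarith
  · have hr0 : 0 < r := hρ.trans h
    have e : r ^ α = r ^ (α - 1) * r := by
      rw [← Real.rpow_add_one hr0.ne']; ring_nf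
    have h2 : r ^ (α - 1) ≤ ρ ^ (α - 1) :=
      Real.rpow_le_rpow_of_nonpos hρ h.le (by linarith)
    have h3 : r ^ (α - 1) * r ≤ ρ ^ (α - 1) * r := mul_le_mul_of_nonneg_right h2 hr
    have : 0 < ρ ^ α := by positivity
    linarith

theorem rpow_le_split2 {r ρ α : ℝ} (hα : 0 < α) (hα1 : α < 1) (hr : 0 ≤ r) (hρ : 0 < ρ) :
    r ^ α ≤ ρ ^ α + ρ ^ (α - 2) * r ^ 2 := by
  rcases le_or_gt r ρ with h | h
  · have h1 := Real.rpow_le_rpow hr h hα.le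
    have : 0 ≤ ρ ^ (α - 2) * r ^ 2 := by positivity
    linarith
  · have hr0 : 0 < r := hρ.trans h
    have e : r ^ α = r ^ (α - 2) * r ^ 2 := by
      rw [← Real.rpow_natCast r 2, ← Real.rpow_add hr0]; norm_num
    have h2 : r ^ (α - 2) ≤ ρ ^ (α - 2) :=
      Real.rpow_le_rpow_of_nonpos hρ h.le (by linarith)
    have h3 : r ^ (α - 2) * r ^ 2 ≤ ρ ^ (α - 2) * r ^ 2 :=
      mul_le_mul_of_nonneg_right h2 (by positivity)
    have : 0 < ρ ^ α := by positivity
    linarith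

section
variable {lam Lam C : ℝ} {G : ℝ → ℝ → ℝ → ℝ → ℝ → ℝ} {Hl Hr : ℝ → ℝ → ℝ → ℝ}

/-- Discrete Grönwall estimate for the time derivative, from `LinStep.sup_bound`. -/
theorem qsch_sup (D : StarData lam Lam C G Hl Hr) {ℓ : ℝ} {u0 : ℝ → ℝ} {k h X : ℝ} {n : ℕ}
    (hM : Mesh lam Lam C k h) (hn : 0 < n)
    (h0 : ∀ i ≤ n, |qsch ℓ G Hl Hr u0 k h n 0 i| ≤ X) (j : ℕ) :
    ∀ i ≤ n, |qsch ℓ G Hl Hr u0 k h n j i| ≤ (1 + X) * Real.exp (C * (j * h)) := by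
  have hX : 0 ≤ X := (abs_nonneg _).trans (h0 0 (by omega))
  have hCh : 0 ≤ C * h := mul_nonneg D.C_nonneg hM.h_pos.le
  have key : ∀ j : ℕ, ∀ i ≤ n, |qsch ℓ G Hl Hr u0 k h n j i| ≤ (1 + X) * (1 + C * h) ^ j - 1 := by
    intro j
    induction j with
    | zero => intro i hi; simpa using h0 i hi
    | succ j ih =>
      have h1 := (qsch_linStep D (ℓ := ℓ) (u0 := u0) (n := n) hM.k_pos hM.h_pos j).sup_bound
        (Y := C * ((1 + X) * (1 + C * h) ^ j)) hM hn ih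
        (fun i hi => mul_le_mul_of_nonneg_left (by linarith [ih i hi]) D.C_nonneg)
      intro i hi
      refine (h1 i hi).trans (le_of_eq ?_)
      ring
  intro i hi
  have h2 : (1 + C * h) ^ j ≤ Real.exp (C * (j * h)) := by
    have : 1 + C * h ≤ Real.exp (C * h) := by linarith [Real.add_one_le_exp (C * h)]
    calc (1 + C * h) ^ j ≤ Real.exp (C * h) ^ j := by gcongr
      _ = Real.exp (C * (j * h)) := by rw [← Real.exp_nat_mul]; ring_nf
  have h3 := key j i hi
  have h4 : (1 + X) * (1 + C * h) ^ j ≤ (1 + X) * Real.exp (C * (j * h)) :=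
    mul_le_mul_of_nonneg_left h2 (by linarith)
  linarith

set_option maxHeartbeats 1000000 in
/-- Propagation of the spatial Hölder modulus. For a pair at distance `ρ` the modulus
`quadMod` with `σ₀ ~ ρ^α` and `σ₁ ~ ρ^(α-1)` is used. -/
theorem qsch_space (D : StarData lam Lam C G Hl Hr) {ℓ : ℝ} {u0 : ℝ → ℝ} {k h Q S C0 N α : ℝ}
    {n J : ℕ} (hα : 0 < α) (hα1 : α < 1) (hℓ : 0 < ℓ)
    (hM : Mesh lam Lam C k h) (hn : 0 < n) (hkn : k * n = 2 * ℓ)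
    (hN : N * lam = C + 1) (hNk : 2 * N * k ≤ 1) (hC0 : 0 ≤ C0) (hS : S = C * (1 + Q))
    (hQ : ∀ j ≤ J, ∀ i ≤ n, |qsch ℓ G Hl Hr u0 k h n j i| ≤ Q)
    (h0 : ∀ i ≤ n, ∀ l ≤ n, |qsch ℓ G Hl Hr u0 k h n 0 i - qsch ℓ G Hl Hr u0 k h n 0 l|
      ≤ C0 * (k * |(i:ℝ) - l|) ^ α) :
    ∀ j ≤ J, ∀ i ≤ n, ∀ l ≤ n, |qsch ℓ G Hl Hr u0 k h n j i - qsch ℓ G Hl Hr u0 k h n j l|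
      ≤ (C0 + 2 * (C0 + (S + S / lam + 4 * N * Q) * (2 * ℓ) ^ (1 - α))) *
        (k * |(i:ℝ) - l|) ^ α := by
  have hlam := hM.lam_pos
  have hN0 : 0 < N := by
    by_contra hcon
    have : N * lam ≤ 0 := mul_nonpos_of_nonpos_of_nonneg (not_lt.1 hcon) hM.lam_pos.le
    linarith [hM.C_nonneg]
  have hQ0 : 0 ≤ Q := (abs_nonneg _).trans (hQ 0 (by omega) 0 (by omega))
  have hS0 : 0 ≤ S := by rw [hS]; exact mul_nonneg D.C_nonneg (by linarith)
  set A := C0 + (S + S / lam + 4 * N * Q) * (2 * ℓ) ^ (1 - α) with hA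
  have hA0 : 0 ≤ A := by positivity
  have hk := hM.k_pos
  -- the one-sided bound for both signs of `q`
  have main : ∀ e : ℝ, (e = 1 ∨ e = -1) → ∀ i ≤ n, ∀ l < i, ∀ j ≤ J,
      e * qsch ℓ G Hl Hr u0 k h n j i - e * qsch ℓ G Hl Hr u0 k h n j l
        ≤ (C0 + 2 * A) * (k * ((i:ℝ) - l)) ^ α := by
    intro e he i hi l hl j hj
    have habs : |e| = 1 := by rcases he with rfl | rfl <;> simp
    have hil : (1:ℝ) ≤ (i:ℝ) - l := by
      have : (l:ℝ) + 1 ≤ i := by exact_mod_cast hl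
      linarith
    set ρ := k * ((i:ℝ) - l) with hρ
    have hρ0 : 0 < ρ := mul_pos hk (by linarith)
    have hρ2 : ρ ≤ 2 * ℓ := by
      rw [← hkn, hρ]
      apply mul_le_mul_of_nonneg_left _ hk.le
      have : (i:ℝ) ≤ n := by exact_mod_cast hi
      have : (0:ℝ) ≤ l := by positivity
      linarith
    have hpw : (2 * ℓ) ^ (α - 1) ≤ ρ ^ (α - 1) :=
      Real.rpow_le_rpow_of_nonpos hρ0 hρ2 (by linarith)
    have hpw1 : (2 * ℓ) ^ (1 - α) * (2 * ℓ) ^ (α - 1) = 1 := by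
      rw [← Real.rpow_add (by positivity)]; simp
    have hσ : S + S / lam + 4 * N * Q ≤ A * ρ ^ (α - 1) := by
      have hB : 0 ≤ (S + S / lam + 4 * N * Q) * (2 * ℓ) ^ (1 - α) := by positivity
      calc S + S / lam + 4 * N * Q
          = ((S + S / lam + 4 * N * Q) * (2 * ℓ) ^ (1 - α)) * (2 * ℓ) ^ (α - 1) := by
            rw [mul_assoc (S + S / lam + 4 * N * Q), hpw1, mul_one]
        _ ≤ ((S + S / lam + 4 * N * Q) * (2 * ℓ) ^ (1 - α)) * ρ ^ (α - 1) :=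
            mul_le_mul_of_nonneg_left hpw hB
        _ ≤ A * ρ ^ (α - 1) := by
            apply mul_le_mul_of_nonneg_right _ (by positivity)
            rw [hA]; linarith
    have hSl : 0 ≤ S / lam := by positivity
    have hNQ : 0 ≤ 4 * N * Q := by positivity
    have step : ∀ j ≤ J, ∀ i ≤ n, ∀ l ≤ i, N * (k * ((i:ℝ) - l)) ≤ 1 →
        e * qsch ℓ G Hl Hr u0 k h n j i - e * qsch ℓ G Hl Hr u0 k h n j l
          ≤ quadMod (C0 * ρ ^ α) (A * ρ ^ (α - 1)) N (k * ((i:ℝ) - l)) := by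
      intro j
      induction j with
      | zero =>
        intro _ i hi l hl hNr
        have hil0 : (0:ℝ) ≤ (i:ℝ) - l := by
          have : (l:ℝ) ≤ i := by exact_mod_cast hl
          linarith
        have h1 := h0 i hi l (by omega)
        have h2 : e * qsch ℓ G Hl Hr u0 k h n 0 i - e * qsch ℓ G Hl Hr u0 k h n 0 l
            ≤ |qsch ℓ G Hl Hr u0 k h n 0 i - qsch ℓ G Hl Hr u0 k h n 0 l| := by
          rw [← mul_sub]
          refine (le_abs_self _).trans ?_
          rw [abs_mul, habs, one_mul]
        rw [abs_of_nonneg hil0] at h1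
        set r := k * ((i:ℝ) - l)
        have hr0 : 0 ≤ r := by positivity
        have h3 := rpow_le_split hα hα1 hr0 hρ0
        have h4 : C0 * r ^ α ≤ C0 * (ρ ^ α + ρ ^ (α - 1) * r) :=
          mul_le_mul_of_nonneg_left h3 hC0
        have h5 : C0 * (ρ ^ (α - 1) * r) ≤ A * (ρ ^ (α - 1) * r) := by
          apply mul_le_mul_of_nonneg_right _ (by positivity)
          have hB : 0 ≤ (S + S / lam + 4 * N * Q) * (2 * ℓ) ^ (1 - α) := by positivity
          rw [hA]; linarith
        have h6 : r ≤ 2 * r - N * r ^ 2 := by nlinarith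
        have h7 : A * ρ ^ (α - 1) * r ≤ A * ρ ^ (α - 1) * (2 * r - N * r ^ 2) :=
          mul_le_mul_of_nonneg_left h6 (by positivity)
        unfold quadMod
        linarith
      | succ j ih =>
        intro hj
        have hL : LinStep lam Lam C k h n (fun _ => S) (fun i => e * qsch ℓ G Hl Hr u0 k h n j i)
            (fun i => e * qsch ℓ G Hl Hr u0 k h n (j + 1) i) := by
          have h1 := (qsch_linStep D (ℓ := ℓ) (u0 := u0) (n := n) hM.k_pos hM.h_pos j).mono
            (S' := fun _ => S) (fun i hi => by
              rw [hS]
              exact mul_le_mul_of_nonneg_left (by linarith [hQ j (by omega) i hi]) D.C_nonneg)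
          rcases he with rfl | rfl
          · simpa using h1
          · simpa using h1.neg
        have hσ0 : 0 ≤ A * ρ ^ (α - 1) := by positivity
        have hσ00 : 0 ≤ C0 * ρ ^ α := by positivity
        refine LinStep.doubling (Q := Q) hM hn hL hN (by linarith) ?_ hσ0 hσ00 hNk
          (by linarith) ?_ (ih (by omega))
        · have h8 : S / lam ≤ A * ρ ^ (α - 1) := by linarith
          rw [div_le_iff₀ hlam] at h8; linarith
        · intro i hi
          rw [abs_mul, habs, one_mul]
          exact hQ _ hj i hi
    have hee : ρ ^ (α - 1) * ρ = ρ ^ α := by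
      rw [← Real.rpow_add_one hρ0.ne']; ring_nf
    have hσ0 : 0 ≤ A * ρ ^ (α - 1) := by positivity
    have hCρ : 0 ≤ C0 * ρ ^ α := by positivity
    by_cases hNρ : N * ρ ≤ 1
    · have h1 := step j hj i hi l hl.le hNρ
      have h2 : A * ρ ^ (α - 1) * (2 * ρ - N * ρ ^ 2) ≤ A * ρ ^ (α - 1) * (2 * ρ) :=
        mul_le_mul_of_nonneg_left (by have : 0 ≤ N * ρ ^ 2 := by positivity
                                      linarith) hσ0
      unfold quadMod at h1
      rw [← hρ] at h1
      have h3 : A * ρ ^ (α - 1) * (2 * ρ) = 2 * A * ρ ^ α := by rw [← hee]; ring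
      linarith
    · push Not at hNρ
      have h1 : e * qsch ℓ G Hl Hr u0 k h n j i - e * qsch ℓ G Hl Hr u0 k h n j l ≤ 2 * Q := by
        have a1 : |e * qsch ℓ G Hl Hr u0 k h n j i| ≤ Q := by
          rw [abs_mul, habs, one_mul]; exact hQ j hj i hi
        have a2 : |e * qsch ℓ G Hl Hr u0 k h n j l| ≤ Q := by
          rw [abs_mul, habs, one_mul]; exact hQ j hj l (by omega)
        linarith [(abs_le.1 a1).2, (abs_le.1 a2).1]
      have h2 : A * ρ ^ α = A * ρ ^ (α - 1) * ρ := by rw [← hee]; ring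
      have h3 : 4 * N * Q * ρ ≤ A * ρ ^ (α - 1) * ρ :=
        mul_le_mul_of_nonneg_right (by linarith) hρ0.le
      have h4 : 4 * Q * 1 ≤ 4 * Q * (N * ρ) :=
        mul_le_mul_of_nonneg_left hNρ.le (by linarith)
      have h5 : 0 ≤ A * ρ ^ α := by positivity
      linarith
  intro j hj i hi l hl
  rcases lt_trichotomy i l with hlt | rfl | hlt
  · have h1 := main 1 (Or.inl rfl) l hl i hlt j hj
    have h2 := main (-1) (Or.inr rfl) l hl i hlt j hj
    have : |(i:ℝ) - l| = (l:ℝ) - i := by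
      rw [abs_sub_comm, abs_of_pos]
      have : (i:ℝ) < l := by exact_mod_cast hlt
      linarith
    rw [this, abs_le]; constructor <;> linarith
  · simp [Real.zero_rpow hα.ne']
  · have h1 := main 1 (Or.inl rfl) i hi l hlt j hj
    have h2 := main (-1) (Or.inr rfl) i hi l hlt j hj
    have : |(i:ℝ) - l| = (i:ℝ) - l := by
      rw [abs_of_pos]
      have : (l:ℝ) < i := by exact_mod_cast hlt
      linarith
    rw [this, abs_le]; constructor <;> linarith

/-- Action of a stencil on a quadratic barrier. -/
theorem IsCoef.quad_barrier {k h ℓ : ℝ} {n i i0 : ℕ} {A B : ℝ} (hM : Mesh lam Lam C k h)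
    (hc : IsCoef lam Lam C k n i A B) (hkn : k * n = 2 * ℓ) (hi : i ≤ n) (hi0 : i0 ≤ n) :
    A * ((k * (((i + 1 : ℕ):ℝ) - i0)) ^ 2 - (k * ((i:ℝ) - i0)) ^ 2)
      - B * ((k * ((i:ℝ) - i0)) ^ 2 - (k * (((i - 1 : ℕ):ℝ) - i0)) ^ 2)
      ≤ (Lam + C) * (4 * ℓ + 2) := by
  obtain ⟨h1, h2, h3, h4, h5, h6, h7, h8⟩ := hM
  set X := k * ((i:ℝ) - i0) with hX
  have hXb : |X| ≤ 2 * ℓ := by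
    rw [hX, abs_mul, abs_of_pos h4, ← hkn]
    apply mul_le_mul_of_nonneg_left _ h4.le
    have a1 : (i:ℝ) ≤ n := by exact_mod_cast hi
    have a2 : (i0:ℝ) ≤ n := by exact_mod_cast hi0
    have a3 : (0:ℝ) ≤ i := by positivity
    have a4 : (0:ℝ) ≤ i0 := by positivity
    rw [abs_le]; constructor <;> linarith
  have hX' := abs_le.1 hXb
  have hℓ : 0 ≤ ℓ := by linarith
  have e1 : k * (((i + 1 : ℕ):ℝ) - i0) = X + k := by rw [hX]; push_cast; ring
  rw [e1]
  have hLam : 0 < Lam := by linarith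
  have hCℓ : 0 ≤ C * ℓ := by positivity
  rcases hc with ⟨g1, g2, c, d, hc1, hc2, hd, rfl, rfl⟩ | ⟨g1, β, hb, hb', rfl, rfl⟩ |
    ⟨g1, β, hb, hb', rfl, rfl⟩
  · have e2 : k * (((i - 1 : ℕ):ℝ) - i0) = X - k := by
      rw [hX, Nat.cast_sub (by omega)]; push_cast; ring
    rw [e2]
    have e : (c / k ^ 2 + d / k) * ((X + k) ^ 2 - X ^ 2) - c / k ^ 2 * (X ^ 2 - (X - k) ^ 2)
        = 2 * c + d * (2 * X + k) := by field_simp; ring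
    rw [e]
    have t1 : d * (2 * X + k) ≤ C * (4 * ℓ + 1) := by
      refine (le_abs_self _).trans ?_
      rw [abs_mul]
      apply mul_le_mul hd _ (abs_nonneg _) h3
      rw [abs_le]; constructor <;> linarith
    have : 0 ≤ Lam * ℓ := by positivity
    nlinarith
  · have e : β / k * ((X + k) ^ 2 - X ^ 2) - 0 * (X ^ 2 - (k * (((i - 1 : ℕ):ℝ) - i0)) ^ 2)
        = β * (2 * X + k) := by field_simp; ring
    rw [e]
    have t1 : β * (2 * X + k) ≤ Lam * (4 * ℓ + 2) :=
      (mul_le_mul_of_nonneg_left (by linarith) (by linarith)).trans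
        (mul_le_mul_of_nonneg_right hb' (by linarith))
    nlinarith
  · by_cases hi00 : i = 0
    · subst hi00
      obtain rfl : i0 = 0 := by omega
      have : 0 ≤ (Lam + C) * (4 * ℓ + 2) := by positivity
      simpa [hX] using this
    have e2 : k * (((i - 1 : ℕ):ℝ) - i0) = X - k := by
      rw [hX, Nat.cast_sub (by omega)]; push_cast; ring
    rw [e2]
    have e : (0:ℝ) * ((X + k) ^ 2 - X ^ 2) - β / k * (X ^ 2 - (X - k) ^ 2)
        = β * (-2 * X + k) := by field_simp; ring
    rw [e]
    have t1 : β * (-2 * X + k) ≤ Lam * (4 * ℓ + 2) :=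
      (mul_le_mul_of_nonneg_left (by linarith) (by linarith)).trans
        (mul_le_mul_of_nonneg_right hb' (by linarith))
    nlinarith

/-- Time regularity from space regularity, by comparison with a quadratic barrier of spatial
scale `ρ = √(t' - t)`. -/
theorem qsch_time (D : StarData lam Lam C G Hl Hr) {ℓ : ℝ} {u0 : ℝ → ℝ} {k h Q S C1 α T : ℝ}
    {n J : ℕ} (hα : 0 < α) (hα1 : α < 1)
    (hM : Mesh lam Lam C k h) (hn : 0 < n) (hkn : k * n = 2 * ℓ)
    (hC1 : 0 ≤ C1) (hS : S = C * (1 + Q)) (hJ : J * h ≤ T)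
    (hQ : ∀ j ≤ J, ∀ i ≤ n, |qsch ℓ G Hl Hr u0 k h n j i| ≤ Q)
    (hsp : ∀ j ≤ J, ∀ i ≤ n, ∀ l ≤ n,
      |qsch ℓ G Hl Hr u0 k h n j i - qsch ℓ G Hl Hr u0 k h n j l| ≤ C1 * (k * |(i:ℝ) - l|) ^ α) :
    ∀ j' ≤ J, ∀ j ≤ j', ∀ i ≤ n, |qsch ℓ G Hl Hr u0 k h n j' i - qsch ℓ G Hl Hr u0 k h n j i|
      ≤ (C1 * (1 + (Lam + C) * (4 * ℓ + 2)) + S * T ^ (1 - α / 2)) *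
        (h * |(j':ℝ) - j|) ^ (α / 2) := by
  have hk := hM.k_pos
  have hh := hM.h_pos
  have hQ0 : 0 ≤ Q := (abs_nonneg _).trans (hQ 0 (by omega) 0 (by omega))
  have hS0 : 0 ≤ S := by rw [hS]; exact mul_nonneg D.C_nonneg (by linarith)
  set K := (Lam + C) * (4 * ℓ + 2) with hK
  have main : ∀ e : ℝ, (e = 1 ∨ e = -1) → ∀ i ≤ n, ∀ j m, j + m ≤ J → 0 < m →
      e * qsch ℓ G Hl Hr u0 k h n (j + m) i - e * qsch ℓ G Hl Hr u0 k h n j i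
        ≤ (C1 * (1 + K) + S * T ^ (1 - α / 2)) * (m * h) ^ (α / 2) := by
    intro e he i0 hi0 j m hjm hm
    have habs : |e| = 1 := by rcases he with rfl | rfl <;> simp
    have hs0 : 0 < (m:ℝ) * h := by positivity
    set s := (m:ℝ) * h with hs
    set ρ := Real.sqrt s with hρ
    have hρ0 : 0 < ρ := Real.sqrt_pos.2 hs0
    have hρs : ρ ^ 2 = s := Real.sq_sqrt hs0.le
    have hρα : ρ ^ α = s ^ (α / 2) := by
      rw [hρ, Real.sqrt_eq_rpow, ← Real.rpow_mul hs0.le]; ring_nf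
    set c0 := e * qsch ℓ G Hl Hr u0 k h n j i0 + C1 * ρ ^ α with hc0
    set E := C1 * ρ ^ (α - 2) with hE
    have hE0 : 0 ≤ E := by positivity
    have step : ∀ m', j + m' ≤ J → ∀ i ≤ n, e * qsch ℓ G Hl Hr u0 k h n (j + m') i
        ≤ c0 + E * (k * ((i:ℝ) - i0)) ^ 2 + m' * (h * (E * K + S)) := by
      intro m'
      induction m' with
      | zero =>
        intro _ i hi
        have h1 := hsp j (by omega) i hi i0 hi0
        have h2 : e * qsch ℓ G Hl Hr u0 k h n j i - e * qsch ℓ G Hl Hr u0 k h n j i0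
            ≤ |qsch ℓ G Hl Hr u0 k h n j i - qsch ℓ G Hl Hr u0 k h n j i0| := by
          rw [← mul_sub]
          refine (le_abs_self _).trans ?_
          rw [abs_mul, habs, one_mul]
        have h3 := rpow_le_split2 hα hα1 (r := k * |(i:ℝ) - i0|) (by positivity) hρ0
        have h4 := mul_le_mul_of_nonneg_left h3 hC1
        have h5 : (k * |(i:ℝ) - i0|) ^ 2 = (k * ((i:ℝ) - i0)) ^ 2 := by
          rw [mul_pow, mul_pow, sq_abs]
        rw [h5] at h4
        simp only [Nat.cast_zero, zero_mul, add_zero]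
        rw [hc0, hE]; linarith
      | succ m' ih =>
        intro hm'
        have hL : LinStep lam Lam C k h n (fun _ => S)
            (fun i => e * qsch ℓ G Hl Hr u0 k h n (j + m') i)
            (fun i => e * qsch ℓ G Hl Hr u0 k h n (j + m' + 1) i) := by
          have h1 := (qsch_linStep D (ℓ := ℓ) (u0 := u0) (n := n) hM.k_pos hM.h_pos (j + m')).mono
            (S' := fun _ => S) (fun i hi => by
              rw [hS]
              exact mul_le_mul_of_nonneg_left (by linarith [hQ (j + m') (by omega) i hi])
                D.C_nonneg)
          rcases he with rfl | rfl
          · simpa using h1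
          · simpa using h1.neg
        have := hL.comparison (E := E * K + S) hM hn (ih (by omega)) (by
          intro i hi A B hc
          have h1 := hc.quad_barrier hM hkn hi hi0
          have h2 := mul_le_mul_of_nonneg_left h1 hE0
          rw [← hK] at h2
          linarith)
        intro i hi
        have := this i hi
        push_cast
        rw [← add_assoc]
        linarith
    have h1 := step m hjm i0 hi0
    have hEs : E * s = C1 * ρ ^ α := by
      rw [hE, mul_assoc, ← hρs, ← Real.rpow_natCast ρ 2, ← Real.rpow_add hρ0]; norm_num
    have hsT : s ≤ T := by
      refine le_trans ?_ hJ
      rw [hs]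
      apply mul_le_mul_of_nonneg_right _ hh.le
      exact_mod_cast (by omega : m ≤ J)
    have hss : s ≤ T ^ (1 - α / 2) * s ^ (α / 2) := by
      have : s = s ^ (1 - α / 2) * s ^ (α / 2) := by
        rw [← Real.rpow_add hs0]; simp
      nth_rewrite 1 [this]
      apply mul_le_mul_of_nonneg_right _ (by positivity)
      exact Real.rpow_le_rpow hs0.le hsT (by linarith)
    have hSs := mul_le_mul_of_nonneg_left hss hS0
    simp only [sub_self, mul_zero, ne_eq, OfNat.ofNat_ne_zero, not_false_eq_true, zero_pow,
      add_zero] at h1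
    have h2 : (m:ℝ) * (h * (E * K + S)) = E * s * K + S * s := by rw [hs]; ring
    rw [h2, hEs, hc0, hρα] at h1
    linarith
  intro j' hj' j hj i hi
  rcases hj.eq_or_lt with rfl | hlt
  · simp [Real.zero_rpow (by positivity : α / 2 ≠ 0)]
  obtain ⟨m, rfl⟩ := Nat.exists_eq_add_of_le hj
  have h1 := main 1 (Or.inl rfl) i hi j m hj' (by omega)
  have h2 := main (-1) (Or.inr rfl) i hi j m hj' (by omega)
  have : h * |((j + m : ℕ):ℝ) - j| = m * h := by
    push_cast; rw [add_sub_cancel_left, abs_of_nonneg (by positivity), mul_comm]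
  rw [this, abs_le]; constructor <;> linarith
end

/-! ### Uniform estimates for the scheme -/

/-- Grid approximations of `u`, `u_t`, `u_x`, `u_xx` (written `v, q, w, r`) which satisfy the
equation, the boundary conditions and parabolic Hölder estimates with the constant `B`. -/
structure GridApprox (ℓ T α B : ℝ) (G : ℝ → ℝ → ℝ → ℝ → ℝ → ℝ) (Hl Hr : ℝ → ℝ → ℝ → ℝ)
    (u0 : ℝ → ℝ) (k h : ℝ) (n J : ℕ) (v q w r : ℕ → ℕ → ℝ) : Prop where
  k_pos : 0 < k
  h_pos : 0 < h
  kn : k * n = 2 * ℓ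
  hJ : J * h = T
  n_ge : 2 ≤ n
  v_bd : ∀ j ≤ J, ∀ i ≤ n, |v j i| ≤ B
  q_bd : ∀ j ≤ J, ∀ i ≤ n, |q j i| ≤ B
  w_bd : ∀ j ≤ J, ∀ i ≤ n, |w j i| ≤ B
  r_bd : ∀ j ≤ J, ∀ i ≤ n, |r j i| ≤ B
  q_sp : ∀ j ≤ J, ∀ i ≤ n, ∀ l ≤ n, |q j i - q j l| ≤ B * (k * |(i:ℝ) - l|) ^ α
  r_sp : ∀ j ≤ J, ∀ i ≤ n, ∀ l ≤ n, |r j i - r j l| ≤ B * (k * |(i:ℝ) - l|) ^ α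
  q_tm : ∀ j ≤ J, ∀ j' ≤ J, ∀ i ≤ n, |q j i - q j' i| ≤ B * (h * |(j:ℝ) - j'|) ^ (α / 2)
  v_tm : ∀ j ≤ J, ∀ j' ≤ J, ∀ i ≤ n, |v j' i - v j i - h * ((j':ℝ) - j) * q j i| ≤
    (h * |(j':ℝ) - j|) * (B * (h * |(j':ℝ) - j|) ^ (α / 2))
  v_sp : ∀ j ≤ J, ∀ i ≤ n, ∀ l ≤ n, |v j l - v j i - k * ((l:ℝ) - i) * w j i| ≤
    (k * |(l:ℝ) - i|) * (B * (k * |(l:ℝ) - i|))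
  w_sp : ∀ j ≤ J, ∀ i ≤ n, ∀ l ≤ n, |w j l - w j i - k * ((l:ℝ) - i) * r j i| ≤
    (k * |(l:ℝ) - i|) * (B * (k * (|(l:ℝ) - i| + 1)) ^ α) + B * k
  eq_int : ∀ j ≤ J, ∀ i, 0 < i → i < n →
    q j i = G (j * h) (-ℓ + i * k) (v j i) (w j i) (r j i)
  eq_l : ∀ j ≤ J, q j 0 = Hl (j * h) (v j 0) (w j 0)
  eq_r : ∀ j ≤ J, q j n = Hr (j * h) (v j n) (w j n)
  init : ∀ i ≤ n, v 0 i = u0 (-ℓ + i * k)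

/-- Forward difference quotient at the node `i`, with the last node using the previous one. -/
def wd (k : ℝ) (n : ℕ) (v : ℕ → ℝ) (i : ℕ) : ℝ := (v (min i (n - 1) + 1) - v (min i (n - 1))) / k

/-- Second difference quotient, at the end nodes taken from the neighbouring interior node. -/
def rd (k : ℝ) (n : ℕ) (v : ℕ → ℝ) (i : ℕ) : ℝ :=
  (v (max 1 (min i (n - 1)) + 1) - 2 * v (max 1 (min i (n - 1))) + v (max 1 (min i (n - 1)) - 1))
    / k ^ 2

theorem sum_slope {v d : ℕ → ℝ} {k D E : ℝ} {i l : ℕ} (hil : i ≤ l) (hk : 0 ≤ k)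
    (h : ∀ a, i ≤ a → a < l → v (a + 1) - v a = k * d a ∧ |d a - D| ≤ E) :
    |v l - v i - k * ((l:ℝ) - i) * D| ≤ (k * ((l:ℝ) - i)) * E := by
  induction l, hil using Nat.le_induction with
  | base => simp
  | succ l hl ih =>
    have h1 := ih (fun a h1 h2 => h a h1 (by omega))
    obtain ⟨h2, h3⟩ := h l hl (by omega)
    have h4 := mul_le_mul_of_nonneg_left h3 hk
    rw [← abs_of_nonneg hk, ← abs_mul, abs_of_nonneg hk] at h4
    have e : v (l + 1) - v i - k * (((l + 1 : ℕ):ℝ) - i) * D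
        = (v l - v i - k * ((l:ℝ) - i) * D) + k * (d l - D) := by
      push_cast; linear_combination h2
    rw [e]
    refine (abs_add_le _ _).trans ?_
    push_cast
    linarith

theorem sum_slope' {v d : ℕ → ℝ} {k D E : ℝ} {i l : ℕ} (hk : 0 ≤ k)
    (h : ∀ a, min i l ≤ a → a < max i l → v (a + 1) - v a = k * d a ∧ |d a - D| ≤ E) :
    |v l - v i - k * ((l:ℝ) - i) * D| ≤ (k * |(l:ℝ) - i|) * E := by
  rcases le_total i l with hil | hil
  · have : (i:ℝ) ≤ l := by exact_mod_cast hil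
    rw [abs_of_nonneg (by linarith : (0:ℝ) ≤ (l:ℝ) - i)]
    exact sum_slope hil hk (by simpa [hil] using h)
  · have : (l:ℝ) ≤ i := by exact_mod_cast hil
    rw [abs_of_nonpos (by linarith : (l:ℝ) - i ≤ 0), neg_sub]
    have := sum_slope (v := v) (d := d) (D := D) (E := E) hil hk (by simpa [hil] using h)
    rw [← abs_neg] at this
    convert this using 2
    ring

theorem abs_natCast_sub_le_of_le {i l a : ℕ} (h1 : min i l ≤ a) (h2 : a ≤ max i l) :
    |(a:ℝ) - i| ≤ |(l:ℝ) - i| := by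
  rcases le_total i l with hil | hil
  · have e1 : (i:ℝ) ≤ a := by exact_mod_cast (by omega : i ≤ a)
    have e2 : (a:ℝ) ≤ l := by exact_mod_cast (by omega : a ≤ l)
    rw [abs_of_nonneg (by linarith), abs_of_nonneg (by linarith)]; linarith
  · have e1 : (a:ℝ) ≤ i := by exact_mod_cast (by omega : a ≤ i)
    have e2 : (l:ℝ) ≤ a := by exact_mod_cast (by omega : l ≤ a)
    rw [abs_of_nonpos (by linarith), abs_of_nonpos (by linarith)]; linarith

theorem abs_clamp_sub_le (c d i l : ℕ) :
    |((max c (min i d) : ℕ):ℝ) - (max c (min l d) : ℕ)| ≤ |(i:ℝ) - l| := by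
  push_cast
  have h1 := abs_max_sub_max_le_max (c:ℝ) (min (i:ℝ) d) c (min (l:ℝ) d)
  have h2 := abs_min_sub_min_le_max (i:ℝ) d l d
  simp only [sub_self, abs_zero] at h1 h2
  rw [max_eq_left (abs_nonneg _)] at h2
  exact h1.trans (max_le (abs_nonneg _) h2)

section
variable {lam Lam C : ℝ} {G : ℝ → ℝ → ℝ → ℝ → ℝ → ℝ} {Hl Hr : ℝ → ℝ → ℝ → ℝ}

theorem abs_le_of_mono {φ : ℝ → ℝ} {lam Q C p : ℝ} (hlam : 0 < lam)
    (h : ∀ r r', r' ≤ r → lam * (r - r') ≤ φ r - φ r') (h1 : |φ p| ≤ Q) (h2 : |φ 0| ≤ C) :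
    |p| ≤ (Q + C) / lam := by
  rw [le_div_iff₀ hlam]
  have a1 := abs_le.1 h1
  have a2 := abs_le.1 h2
  rcases le_total 0 p with hp | hp
  · rw [abs_of_nonneg hp]
    have := h p 0 hp
    linarith
  · rw [abs_of_nonpos hp]
    have := h 0 p hp
    linarith

/-- Once the discrete time derivative is controlled in `C^{α/2,α}`, the equation controls the
second differences, and all the remaining estimates follow by summation. -/
theorem gridApprox_sch (D : StarData lam Lam C G Hl Hr) {ℓ : ℝ} {u0 : ℝ → ℝ}
    {k h Q C1 C2 U0 α T B R W : ℝ}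
    {n J : ℕ} (hα : 0 < α) (hα1 : α < 1)
    (hM : Mesh lam Lam C k h) (hn : 2 ≤ n) (hkn : k * n = 2 * ℓ) (hJ : J * h = T)
    (hu0 : ∀ x ∈ Icc (-ℓ) ℓ, |u0 x| ≤ U0)
    (hQ : ∀ j ≤ J, ∀ i ≤ n, |qsch ℓ G Hl Hr u0 k h n j i| ≤ Q)
    (hsp : ∀ j ≤ J, ∀ i ≤ n, ∀ l ≤ n,
      |qsch ℓ G Hl Hr u0 k h n j i - qsch ℓ G Hl Hr u0 k h n j l| ≤ C1 * (k * |(i:ℝ) - l|) ^ α)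
    (htm : ∀ j' ≤ J, ∀ j ≤ j', ∀ i ≤ n,
      |qsch ℓ G Hl Hr u0 k h n j' i - qsch ℓ G Hl Hr u0 k h n j i| ≤
        C2 * (h * |(j':ℝ) - j|) ^ (α / 2))
    (hR : R = (Q + C) / lam) (hW : W = R + 2 * ℓ * R)
    (b1 : Q ≤ B) (b2 : C1 ≤ B) (b3 : C2 ≤ B) (b4 : U0 + T * Q ≤ B) (b5 : W ≤ B)
    (b6 : (C1 + C * (1 + W + R) * (2 * ℓ) ^ (1 - α)) / lam ≤ B) :
    GridApprox ℓ T α B G Hl Hr u0 k h n J (sch ℓ G Hl Hr u0 k h n) (qsch ℓ G Hl Hr u0 k h n)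
      (fun j => wd k n (sch ℓ G Hl Hr u0 k h n j)) (fun j => rd k n (sch ℓ G Hl Hr u0 k h n j)) := by
  have hlam := hM.lam_pos
  have hk := hM.k_pos
  have hh := hM.h_pos
  have hC := D.C_nonneg
  have hQ0 : 0 ≤ Q := (abs_nonneg _).trans (hQ 0 (by omega) 0 (by omega))
  have hR0 : 0 ≤ R := by rw [hR]; positivity
  have hn0 : (0:ℝ) < n := by exact_mod_cast (by omega : 0 < n)
  have hℓ : 0 < ℓ := by nlinarith
  have hW0 : 0 ≤ W := by rw [hW]; positivity
  have hRB : R ≤ B := by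
    have : 0 ≤ 2 * ℓ * R := by positivity
    linarith
  have hB0 : 0 ≤ B := hQ0.trans b1
  set v := sch ℓ G Hl Hr u0 k h n with hv
  set q := qsch ℓ G Hl Hr u0 k h n with hq
  -- the equation in terms of the difference quotients
  have hint : ∀ j i, 0 < i → i < n →
      q j i = G (j * h) (-ℓ + i * k) (v j i) (wd k n (v j) i) (rd k n (v j) i) := by
    intro j i h1 h2
    have e1 : min i (n - 1) = i := by omega
    have e2 : max 1 i = i := by omega
    simp only [hq, qsch, rhs, wd, rd, e1, e2, if_neg h1.ne', if_neg h2.ne]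
    rfl
  have hleft : ∀ j, q j 0 = Hl (j * h) (v j 0) (wd k n (v j) 0) := by
    intro j
    simp [hq, qsch, rhs, wd, hv]
  have hright : ∀ j, q j n = Hr (j * h) (v j n) (wd k n (v j) n) := by
    intro j
    have e1 : min n (n - 1) = n - 1 := by omega
    have e2 : n - 1 + 1 = n := by omega
    have e3 : n ≠ 0 := by omega
    simp only [hq, qsch, rhs, wd, e1, e2, if_neg e3, if_true]
    rfl
  have r_cl : ∀ j i, rd k n (v j) i = rd k n (v j) (max 1 (min i (n - 1))) := by
    intro j i
    have : max 1 (min (max 1 (min i (n - 1))) (n - 1)) = max 1 (min i (n - 1)) := by omega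
    simp only [rd, this]
  have r_bd : ∀ j ≤ J, ∀ i ≤ n, |rd k n (v j) i| ≤ R := by
    intro j hj i hi
    rw [r_cl, hR]
    set m := max 1 (min i (n - 1)) with hm
    apply abs_le_of_mono hlam (φ := G (j * h) (-ℓ + m * k) (v j m) (wd k n (v j) m))
      (fun r r' hr => (D.G_mono _ _ _ _ _ _ hr).1)
    · rw [← hint j m (by omega) (by omega)]; exact hQ j hj m (by omega)
    · exact D.G_zero _ _ _ _
  have w_step : ∀ j a, a < n - 1 →
      wd k n (v j) (a + 1) - wd k n (v j) a = k * rd k n (v j) (a + 1) := by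
    intro j a ha
    have e1 : min (a + 1) (n - 1) = a + 1 := by omega
    have e2 : min a (n - 1) = a := by omega
    have e3 : max 1 (a + 1) = a + 1 := by omega
    simp only [wd, rd, e1, e2, e3, Nat.add_sub_cancel]
    field_simp; ring
  have v_step : ∀ j a, a < n → v j (a + 1) - v j a = k * wd k n (v j) a := by
    intro j a ha
    have e2 : min a (n - 1) = a := by omega
    simp only [wd, e2]
    field_simp
  have w_cl : ∀ j i, wd k n (v j) i = wd k n (v j) (min i (n - 1)) := by
    intro j i
    simp only [wd, min_assoc, min_self]
  have w_zero : ∀ j ≤ J, |wd k n (v j) 0| ≤ R := by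
    intro j hj
    rw [hR]
    apply abs_le_of_mono hlam (φ := Hl (j * h) (v j 0)) (fun r r' hr => (D.Hl_mono _ _ _ _ hr).1)
    · rw [← hleft]; exact hQ j hj 0 (by omega)
    · exact D.Hl_zero _ _
  have w_lip' : ∀ j ≤ J, ∀ i ≤ n - 1, ∀ l ≤ n - 1,
      |wd k n (v j) l - wd k n (v j) i| ≤ (k * |(l:ℝ) - i|) * R := by
    intro j hj i hi l hl
    have := sum_slope' (v := wd k n (v j)) (d := fun a => rd k n (v j) (a + 1)) (i := i) (l := l)
      (D := 0) (E := R) hk.le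
      (fun a h1 h2 => ⟨w_step j a (by omega), by
        rw [sub_zero]; exact r_bd j hj (a + 1) (by omega)⟩)
    simpa using this
  have w_lip : ∀ j ≤ J, ∀ i l,
      |wd k n (v j) l - wd k n (v j) i| ≤ (k * |(l:ℝ) - i|) * R := by
    intro j hj i l
    rw [w_cl j i, w_cl j l]
    refine (w_lip' j hj _ (by omega) _ (by omega)).trans ?_
    apply mul_le_mul_of_nonneg_right _ hR0
    apply mul_le_mul_of_nonneg_left _ hk.le
    have := abs_clamp_sub_le 0 (n - 1) l i
    simpa using this
  have kbd : ∀ i ≤ n, ∀ l ≤ n, k * |(i:ℝ) - l| ≤ 2 * ℓ := by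
    intro i hi l hl
    rw [← hkn]
    apply mul_le_mul_of_nonneg_left _ hk.le
    have a1 : (i:ℝ) ≤ n := by exact_mod_cast hi
    have a2 : (l:ℝ) ≤ n := by exact_mod_cast hl
    have a3 : (0:ℝ) ≤ i := by positivity
    have a4 : (0:ℝ) ≤ l := by positivity
    rw [abs_le]; constructor <;> linarith
  have w_bd : ∀ j ≤ J, ∀ i ≤ n, |wd k n (v j) i| ≤ W := by
    intro j hj i hi
    have h1 := w_lip j hj 0 i
    have h2 := w_zero j hj
    have h3 := mul_le_mul_of_nonneg_right (kbd i hi 0 (by omega)) hR0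
    have h4 := abs_sub_abs_le_abs_sub (wd k n (v j) i) (wd k n (v j) 0)
    linarith
  have v_lip : ∀ j ≤ J, ∀ i ≤ n, ∀ l ≤ n, |v j l - v j i| ≤ (k * |(l:ℝ) - i|) * W := by
    intro j hj i hi l hl
    have := sum_slope' (v := v j) (d := wd k n (v j)) (i := i) (l := l)
      (D := 0) (E := W) hk.le
      (fun a h1 h2 => ⟨v_step j a (by omega), by
        rw [sub_zero]; exact w_bd j hj a (by omega)⟩)
    simpa using this
  have pw : ∀ i ≤ n, ∀ l ≤ n,
      k * |(i:ℝ) - l| ≤ (2 * ℓ) ^ (1 - α) * (k * |(i:ℝ) - l|) ^ α := by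
    intro i hi l hl
    rcases eq_or_ne (k * |(i:ℝ) - l|) 0 with h0 | h0
    · rw [h0, Real.zero_rpow hα.ne']; simp
    have hp : 0 < k * |(i:ℝ) - l| := lt_of_le_of_ne (by positivity) h0.symm
    have e : k * |(i:ℝ) - l| = (k * |(i:ℝ) - l|) ^ (1 - α) * (k * |(i:ℝ) - l|) ^ α := by
      rw [← Real.rpow_add hp]; simp
    nth_rewrite 1 [e]
    apply mul_le_mul_of_nonneg_right _ (by positivity)
    exact Real.rpow_le_rpow hp.le (kbd i hi l hl) (by linarith)
  have r_sp' : ∀ j ≤ J, ∀ i l, 0 < i → i < n → 0 < l → l < n →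
      |rd k n (v j) i - rd k n (v j) l| ≤ B * (k * |(i:ℝ) - l|) ^ α := by
    intro j hj i l i0 i1 l0 l1
    obtain ⟨c, hc, hc', hce⟩ := exists_slope_of_mono
      (φ := fun r => G (j * h) (-ℓ + i * k) (v j i) (wd k n (v j) i) r) D.lam_le
      (fun r r' hr => D.G_mono _ _ _ _ _ _ hr) (rd k n (v j) i) (rd k n (v j) l)
    have h1 := D.G_lip (j * h) (j * h) (-ℓ + i * k) (-ℓ + l * k) (v j i) (v j l)
      (wd k n (v j) i) (wd k n (v j) l) (rd k n (v j) l)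
    have h2 := hsp j hj i i1.le l l1.le
    rw [hint j i i0 i1, hint j l l0 l1] at h2
    have h3 := v_lip j hj l l1.le i i1.le
    have h4 := w_lip j hj l i
    have h5 : |(-ℓ + (i:ℝ) * k) - (-ℓ + l * k)| = k * |(i:ℝ) - l| := by
      rw [← abs_of_pos hk, ← abs_mul, abs_of_pos hk]; ring_nf
    rw [h5, sub_self, abs_zero, zero_add] at h1
    set ρ := k * |(i:ℝ) - l| with hρ
    have h6 : |c * (rd k n (v j) i - rd k n (v j) l)| ≤
        C1 * ρ ^ α + C * (ρ + ρ * W + ρ * R) := by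
      rw [← hce]
      have h7 : C * (ρ + |v j i - v j l| + |wd k n (v j) i - wd k n (v j) l|)
          ≤ C * (ρ + ρ * W + ρ * R) := mul_le_mul_of_nonneg_left (by linarith) hC
      rw [abs_le] at h1 h2 ⊢
      constructor <;> linarith [h1.1, h1.2, h2.1, h2.2]
    have h8 : C * (ρ + ρ * W + ρ * R) ≤ C * (1 + W + R) * (2 * ℓ) ^ (1 - α) * ρ ^ α := by
      have h9 := mul_le_mul_of_nonneg_left (pw i i1.le l l1.le)
        (by positivity : 0 ≤ C * (1 + W + R))
      rw [← hρ] at h9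
      linarith
    have h10 : lam * |rd k n (v j) i - rd k n (v j) l| ≤
        |c * (rd k n (v j) i - rd k n (v j) l)| := by
      rw [abs_mul]
      exact mul_le_mul_of_nonneg_right (hc.trans (le_abs_self _)) (abs_nonneg _)
    have h11 : |rd k n (v j) i - rd k n (v j) l| ≤
        (C1 + C * (1 + W + R) * (2 * ℓ) ^ (1 - α)) / lam * ρ ^ α := by
      rw [div_mul_eq_mul_div, le_div_iff₀ hlam]; linarith
    exact h11.trans (mul_le_mul_of_nonneg_right b6 (by positivity))
  have r_sp : ∀ j ≤ J, ∀ i l,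
      |rd k n (v j) i - rd k n (v j) l| ≤ B * (k * |(i:ℝ) - l|) ^ α := by
    intro j hj i l
    rw [r_cl j i, r_cl j l]
    refine (r_sp' j hj _ _ (by omega) (by omega) (by omega) (by omega)).trans ?_
    apply mul_le_mul_of_nonneg_left _ hB0
    apply Real.rpow_le_rpow (by positivity) _ hα.le
    exact mul_le_mul_of_nonneg_left (abs_clamp_sub_le _ _ _ _) hk.le
  have hTn : 0 ≤ T := by rw [← hJ]; positivity
  refine ⟨hk, hh, hkn, hJ, hn, ?_, fun j hj i hi => (hQ j hj i hi).trans b1,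
    fun j hj i hi => (w_bd j hj i hi).trans b5, fun j hj i hi => (r_bd j hj i hi).trans hRB,
    fun j hj i hi l hl => (hsp j hj i hi l hl).trans (mul_le_mul_of_nonneg_right b2 (by positivity)),
    fun j hj i hi l hl => r_sp j hj i l, ?_, ?_, ?_, ?_, fun j hj i => hint j i,
    fun j hj => hleft j, fun j hj => hright j, fun i hi => rfl⟩
  · intro j hj i hi
    have h1 := sum_slope' (v := fun j => v j i) (d := fun j => q j i) (i := 0) (l := j)
      (D := 0) (E := Q) hh.le
      (fun a h1 h2 => ⟨by simp [hv, hq, sch_succ], by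
        rw [sub_zero]; exact hQ a (by omega) i hi⟩)
    have h2 : |v 0 i| ≤ U0 := by
      apply hu0
      have a1 : (i:ℝ) * k ≤ n * k := by
        apply mul_le_mul_of_nonneg_right _ hk.le
        exact_mod_cast hi
      have a2 : 0 ≤ (i:ℝ) * k := by positivity
      constructor <;> linarith
    have h3 : h * |(j:ℝ) - (0:ℕ)| ≤ T := by
      rw [← hJ, Nat.cast_zero, sub_zero, abs_of_nonneg (by positivity), mul_comm]
      apply mul_le_mul_of_nonneg_right _ hh.le
      exact_mod_cast hj
    have h4 := mul_le_mul_of_nonneg_right h3 hQ0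
    have h5 := abs_sub_abs_le_abs_sub (v j i) (v 0 i)
    simp only [mul_zero, sub_zero] at h1
    linarith
  · intro j hj j' hj' i hi
    have hp : ∀ j j' : ℕ, 0 ≤ (h * |(j:ℝ) - j'|) ^ (α / 2) := fun j j' => by positivity
    rcases le_total j j' with hle | hle
    · rw [abs_sub_comm, abs_sub_comm (j:ℝ)]
      exact (htm j' hj' j hle i hi).trans (mul_le_mul_of_nonneg_right b3 (hp _ _))
    · exact (htm j hj j' hle i hi).trans (mul_le_mul_of_nonneg_right b3 (hp _ _))
  · intro j hj j' hj' i hi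
    apply sum_slope' (v := fun j => v j i) (d := fun j => q j i) hh.le
    intro a h1 h2
    refine ⟨by simp [hv, hq, sch_succ], ?_⟩
    have key : |q a i - q j i| ≤ C2 * (h * |(a:ℝ) - j|) ^ (α / 2) := by
      rcases le_total j a with hle | hle
      · exact htm a (by omega) j hle i hi
      · rw [abs_sub_comm, abs_sub_comm (a:ℝ)]
        exact htm j hj a hle i hi
    refine key.trans ((mul_le_mul_of_nonneg_right b3 (by positivity)).trans ?_)
    apply mul_le_mul_of_nonneg_left _ hB0
    apply Real.rpow_le_rpow (by positivity) _ (by positivity)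
    exact mul_le_mul_of_nonneg_left (abs_natCast_sub_le_of_le h1 h2.le) hh.le
  · intro j hj i hi l hl
    apply sum_slope' (d := wd k n (v j)) hk.le
    intro a h1 h2
    refine ⟨v_step j a (by omega), (w_lip j hj i a).trans ?_⟩
    rw [mul_comm]
    apply mul_le_mul hRB _ (by positivity) hB0
    exact mul_le_mul_of_nonneg_left (abs_natCast_sub_le_of_le h1 h2.le) hk.le
  · intro j hj i hi l hl
    have h1 := sum_slope' (v := wd k n (v j)) (d := fun a => rd k n (v j) (a + 1))
      (i := min i (n - 1)) (l := min l (n - 1))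
      (D := rd k n (v j) i) (E := B * (k * (|(l:ℝ) - i| + 1)) ^ α) hk.le (by
        intro a h1 h2
        refine ⟨w_step j a (by omega), (r_sp j hj _ _).trans ?_⟩
        apply mul_le_mul_of_nonneg_left _ hB0
        apply Real.rpow_le_rpow (by positivity) _ hα.le
        apply mul_le_mul_of_nonneg_left _ hk.le
        have h3 := abs_natCast_sub_le_of_le (i := i) (l := l) (a := max (min i l) a) (by omega)
          (by omega)
        have h4 : |((a + 1 : ℕ):ℝ) - (max (min i l) a : ℕ)| ≤ 1 := by
          rw [abs_le]
          have h5 : max (min i l) a ≤ a + 2 := by omega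
          have h6 : a ≤ max (min i l) a := by omega
          have h5' : ((max (min i l) a : ℕ):ℝ) ≤ a + 2 := by exact_mod_cast h5
          have h6' : (a:ℝ) ≤ (max (min i l) a : ℕ) := by exact_mod_cast h6
          push_cast at h5' h6' ⊢
          constructor <;> linarith
        have h7 := abs_sub_le (((a + 1 : ℕ):ℝ)) ((max (min i l) a : ℕ):ℝ) (i:ℝ)
        linarith)
    rw [← w_cl, ← w_cl] at h1
    set i' := min i (n - 1) with hi'
    set l' := min l (n - 1) with hl'
    have h2 : |((l':ℝ) - i') - ((l:ℝ) - i)| ≤ 1 := by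
      have a1 : (i':ℝ) ≤ i := by exact_mod_cast (by omega : i' ≤ i)
      have a2 : (l':ℝ) ≤ l := by exact_mod_cast (by omega : l' ≤ l)
      have a3 : (i:ℝ) ≤ i' + 1 := by exact_mod_cast (by omega : i ≤ i' + 1)
      have a4 : (l:ℝ) ≤ l' + 1 := by exact_mod_cast (by omega : l ≤ l' + 1)
      rw [abs_le]; constructor <;> linarith
    have h3 : |k * (((l':ℝ) - i') - ((l:ℝ) - i)) * rd k n (v j) i| ≤ k * 1 * B := by
      rw [abs_mul, abs_mul, abs_of_pos hk]
      exact mul_le_mul (mul_le_mul_of_nonneg_left h2 hk.le) ((r_bd j hj i hi).trans hRB)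
        (abs_nonneg _) (by positivity)
    have h4 : |(l':ℝ) - i'| ≤ |(l:ℝ) - i| := by
      have := abs_clamp_sub_le 0 (n - 1) l i
      simpa [hi', hl'] using this
    have h5 : k * |(l':ℝ) - i'| * (B * (k * (|(l:ℝ) - i| + 1)) ^ α)
        ≤ k * |(l:ℝ) - i| * (B * (k * (|(l:ℝ) - i| + 1)) ^ α) :=
      mul_le_mul_of_nonneg_right (mul_le_mul_of_nonneg_left h4 hk.le) (by positivity)
    have e : wd k n (v j) l - wd k n (v j) i - k * ((l:ℝ) - i) * rd k n (v j) i
        = (wd k n (v j) l - wd k n (v j) i - k * ((l':ℝ) - i') * rd k n (v j) i)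
          + k * (((l':ℝ) - i') - ((l:ℝ) - i)) * rd k n (v j) i := by ring
    rw [e]
    refine (abs_add_le _ _).trans ?_
    linarith

end

/-! ### Initial data -/

theorem mvt_bound {f f' : ℝ → ℝ} {x y D E : ℝ} (hf : ∀ z ∈ uIcc x y, HasDerivAt f (f' z) z)
    (hE : ∀ z ∈ uIcc x y, |f' z - D| ≤ E) : |f y - f x - (y - x) * D| ≤ E * |y - x| := by
  have h := (convex_uIcc x y).norm_image_sub_le_of_norm_hasDerivWithin_le
    (f := fun z => f z - z * D) (f' := fun z => f' z - D) (C := E)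
    (fun z hz => (((hf z hz).sub ((hasDerivAt_id' z).mul_const D)).congr_deriv
      (by rw [one_mul])).hasDerivWithinAt)
    (fun z hz => by simpa using hE z hz) left_mem_uIcc right_mem_uIcc
  simp only [Real.norm_eq_abs] at h
  convert h using 2
  ring

theorem abs_sub_le_of_mem_uIcc {x y z : ℝ} (hz : z ∈ uIcc x y) : |z - x| ≤ |y - x| := by
  exact abs_sub_left_of_mem_uIcc hz

/-- `u1` and `u2` are the first two derivatives of `u0` on `[-ℓ, ℓ]` and `u2` is `α`-Hölder. -/
structure InitData (ℓ α A : ℝ) (u0 u1 u2 : ℝ → ℝ) : Prop where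
  d1 : ∀ x ∈ Icc (-ℓ) ℓ, HasDerivAt u0 (u1 x) x
  d2 : ∀ x ∈ Icc (-ℓ) ℓ, HasDerivAt u1 (u2 x) x
  holder : ∀ x ∈ Icc (-ℓ) ℓ, ∀ y ∈ Icc (-ℓ) ℓ, |u2 x - u2 y| ≤ A * |x - y| ^ α

section
variable {ℓ α A : ℝ} {u0 u1 u2 : ℝ → ℝ}

theorem InitData.taylor1 (I : InitData ℓ α A u0 u1 u2) (hα : 0 < α) (hA : 0 ≤ A) {x y : ℝ}
    (hx : x ∈ Icc (-ℓ) ℓ) (hy : y ∈ Icc (-ℓ) ℓ) :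
    |u1 y - u1 x - (y - x) * u2 x| ≤ A * |y - x| ^ α * |y - x| := by
  have hsub : uIcc x y ⊆ Icc (-ℓ) ℓ := ordConnected_Icc.uIcc_subset hx hy
  refine mvt_bound (fun z hz => I.d2 z (hsub hz)) (fun z hz => ?_)
  refine (I.holder z (hsub hz) x hx).trans (mul_le_mul_of_nonneg_left ?_ hA)
  exact Real.rpow_le_rpow (abs_nonneg _) (abs_sub_le_of_mem_uIcc hz) hα.le

theorem InitData.taylor2 (I : InitData ℓ α A u0 u1 u2) (hα : 0 < α) (hA : 0 ≤ A) {x y : ℝ}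
    (hx : x ∈ Icc (-ℓ) ℓ) (hy : y ∈ Icc (-ℓ) ℓ) :
    |u0 y - u0 x - (y - x) * u1 x - (y - x) ^ 2 / 2 * u2 x| ≤ A * |y - x| ^ α * |y - x| ^ 2 := by
  have hsub : uIcc x y ⊆ Icc (-ℓ) ℓ := ordConnected_Icc.uIcc_subset hx hy
  have h := mvt_bound (f := fun z => u0 z - (z - x) ^ 2 / 2 * u2 x)
    (f' := fun z => u1 z - (z - x) * u2 x) (x := x) (y := y) (D := u1 x)
    (E := A * |y - x| ^ α * |y - x|) (fun z hz => ?_) (fun z hz => ?_)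
  · simp only [sub_self, ne_eq, OfNat.ofNat_ne_zero, not_false_eq_true, zero_pow, zero_div,
      zero_mul, sub_zero] at h
    calc _ = |u0 y - (y - x) ^ 2 / 2 * u2 x - u0 x - (y - x) * u1 x| := by congr 1; ring
      _ ≤ _ := h
      _ = _ := by ring
  · have h1 := (((hasDerivAt_id' z).sub_const x).pow 2).div_const 2 |>.mul_const (u2 x)
    exact ((I.d1 z (hsub hz)).sub h1).congr_deriv (by ring)
  · have h1 := I.taylor1 hα hA hx (hsub hz)
    have h2 : |z - x| ≤ |y - x| := abs_sub_le_of_mem_uIcc hz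
    have h3 : A * |z - x| ^ α * |z - x| ≤ A * |y - x| ^ α * |y - x| := by gcongr
    calc _ = |u1 z - u1 x - (z - x) * u2 x| := by congr 1; ring
      _ ≤ _ := h1.trans h3

end

theorem rpow_self_le {α k : ℝ} (hα1 : α ≤ 1) (hk : 0 < k) (hk1 : k ≤ 1) : k ≤ k ^ α := by
  have := Real.rpow_le_rpow_of_exponent_ge hk hk1 hα1
  simpa using this

theorem le_rpow_of_le {α x L : ℝ} (hα : 0 < α) (hα1 : α < 1) (hx : 0 ≤ x) (hL : x ≤ L) :
    x ≤ L ^ (1 - α) * x ^ α := by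
  rcases hx.eq_or_lt with rfl | hp
  · rw [Real.zero_rpow hα.ne']; simp
  have e : x = x ^ (1 - α) * x ^ α := by
    rw [← Real.rpow_add hp]; simp
  nth_rewrite 1 [e]
  apply mul_le_mul_of_nonneg_right _ (by positivity)
  exact Real.rpow_le_rpow hp.le hL (by linarith)

theorem abs_sub_le_of_mono {φ : ℝ → ℝ} {a b : ℝ} (ha : 0 ≤ a) (hab : a ≤ b)
    (h : ∀ r r', r' ≤ r → a * (r - r') ≤ φ r - φ r' ∧ φ r - φ r' ≤ b * (r - r')) (r r' : ℝ) :
    |φ r - φ r'| ≤ b * |r - r'| := by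
  obtain ⟨c, h1, h2, h3⟩ := exists_slope_of_mono hab h r r'
  rw [h3, abs_mul, abs_of_nonneg (ha.trans h1)]
  exact mul_le_mul_of_nonneg_right h2 (abs_nonneg _)

section
variable {lam Lam C : ℝ} {G : ℝ → ℝ → ℝ → ℝ → ℝ → ℝ} {Hl Hr : ℝ → ℝ → ℝ → ℝ}

/-- For compatible initial data the initial discrete time derivative is bounded and Hölder
continuous, uniformly in the mesh: it is `O(k^α)`-close to `G(0, x, u0, u0', u0'')` up to and
including the end points. -/
theorem qsch_init (D : StarData lam Lam C G Hl Hr) {ℓ α A U1 U2 : ℝ} {u0 u1 u2 : ℝ → ℝ}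
    (hα : 0 < α) (hα1 : α < 1) (hℓ : 0 < ℓ) (hA : 0 ≤ A) (I : InitData ℓ α A u0 u1 u2)
    (hU1 : ∀ x ∈ Icc (-ℓ) ℓ, |u1 x| ≤ U1) (hU2 : ∀ x ∈ Icc (-ℓ) ℓ, |u2 x| ≤ U2)
    (cl : G 0 (-ℓ) (u0 (-ℓ)) (u1 (-ℓ)) (u2 (-ℓ)) = Hl 0 (u0 (-ℓ)) (u1 (-ℓ)))
    (cr : G 0 ℓ (u0 ℓ) (u1 ℓ) (u2 ℓ) = Hr 0 (u0 ℓ) (u1 ℓ)) :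
    ∃ X C0, 0 ≤ C0 ∧ ∀ k h : ℝ, ∀ n : ℕ, 0 < k → k ≤ 1 → 0 < n → k * n = 2 * ℓ →
      (∀ i ≤ n, |qsch ℓ G Hl Hr u0 k h n 0 i| ≤ X) ∧
      ∀ i ≤ n, ∀ l ≤ n, |qsch ℓ G Hl Hr u0 k h n 0 i - qsch ℓ G Hl Hr u0 k h n 0 l|
        ≤ C0 * (k * |(i:ℝ) - l|) ^ α := by
  have hC := D.C_nonneg
  have hlam := D.lam_pos
  have hLam : 0 < Lam := hlam.trans_le D.lam_le
  have hz : (0:ℝ) ∈ Icc (-ℓ) ℓ := ⟨by linarith, hℓ.le⟩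
  have hU10 : 0 ≤ U1 := (abs_nonneg _).trans (hU1 0 hz)
  have hU20 : 0 ≤ U2 := (abs_nonneg _).trans (hU2 0 hz)
  set Q0 : ℝ → ℝ := fun x => G 0 x (u0 x) (u1 x) (u2 x) with hQ0
  set A1 := C * (1 + U1 + U2) * (2 * ℓ) ^ (1 - α) + Lam * A with hA1
  set E := C * U2 + Lam * U2 + 2 * Lam * A with hE
  have hA10 : 0 ≤ A1 := by positivity
  have hE0 : 0 ≤ E := by positivity
  have lip0 : ∀ x ∈ Icc (-ℓ) ℓ, ∀ y ∈ Icc (-ℓ) ℓ, |u0 y - u0 x| ≤ U1 * |y - x| := by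
    intro x hx y hy
    have hsub : uIcc x y ⊆ Icc (-ℓ) ℓ := ordConnected_Icc.uIcc_subset hx hy
    simpa using mvt_bound (D := 0) (fun z hz => I.d1 z (hsub hz))
      (fun z hz => by simpa using hU1 z (hsub hz))
  have lip1 : ∀ x ∈ Icc (-ℓ) ℓ, ∀ y ∈ Icc (-ℓ) ℓ, |u1 y - u1 x| ≤ U2 * |y - x| := by
    intro x hx y hy
    have hsub : uIcc x y ⊆ Icc (-ℓ) ℓ := ordConnected_Icc.uIcc_subset hx hy
    simpa using mvt_bound (D := 0) (fun z hz => I.d2 z (hsub hz))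
      (fun z hz => by simpa using hU2 z (hsub hz))
  have hdiff : ∀ x ∈ Icc (-ℓ) ℓ, ∀ y ∈ Icc (-ℓ) ℓ, |Q0 x - Q0 y| ≤ A1 * |x - y| ^ α := by
    intro x hx y hy
    have h1 := D.G_lip 0 0 x y (u0 x) (u0 y) (u1 x) (u1 y) (u2 x)
    have h2 := abs_sub_le_of_mono hlam.le D.lam_le
      (fun r r' hr => D.G_mono 0 y (u0 y) (u1 y) r r' hr) (u2 x) (u2 y)
    have h3 := I.holder x hx y hy
    have h4 := lip0 y hy x hx
    have h5 := lip1 y hy x hx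
    have h6 : |x - y| ≤ (2 * ℓ) ^ (1 - α) * |x - y| ^ α := by
      apply le_rpow_of_le hα hα1 (abs_nonneg _)
      rw [abs_le]; constructor <;> linarith [hx.1, hx.2, hy.1, hy.2]
    rw [sub_self, abs_zero, zero_add] at h1
    have h7 : C * (|x - y| + |u0 x - u0 y| + |u1 x - u1 y|) ≤
        C * (1 + U1 + U2) * ((2 * ℓ) ^ (1 - α) * |x - y| ^ α) := by
      refine le_trans ?_ (mul_le_mul_of_nonneg_left h6 (by positivity))
      rw [mul_assoc]
      exact mul_le_mul_of_nonneg_left (by linarith) hC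
    have h8 := mul_le_mul_of_nonneg_left h3 hLam.le
    have h9 := abs_sub_le (Q0 x) (G 0 y (u0 y) (u1 y) (u2 x)) (Q0 y)
    rw [hA1, add_mul]
    linarith
  have hQb : ∀ x ∈ Icc (-ℓ) ℓ, |Q0 x| ≤ C + Lam * U2 := by
    intro x hx
    have h2 := abs_sub_le_of_mono hlam.le D.lam_le
      (fun r r' hr => D.G_mono 0 x (u0 x) (u1 x) r r' hr) (u2 x) 0
    have h3 := D.G_zero 0 x (u0 x) (u1 x)
    have h4 := abs_sub_abs_le_abs_sub (Q0 x) (G 0 x (u0 x) (u1 x) 0)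
    rw [sub_zero] at h2
    have h5 := mul_le_mul_of_nonneg_left (hU2 x hx) hLam.le
    linarith
  refine ⟨C + Lam * U2 + E, 2 * E + A1, by positivity, ?_⟩
  intro k h n hk hk1 hn hkn
  have hkα : k ≤ k ^ α := rpow_self_le hα1.le hk hk1
  have hkα0 : 0 < k ^ α := by positivity
  have hn0 : (1:ℝ) ≤ n := by exact_mod_cast hn
  have hmem : ∀ i ≤ n, -ℓ + (i:ℝ) * k ∈ Icc (-ℓ) ℓ := by
    intro i hi
    have a1 : (i:ℝ) * k ≤ n * k := by
      apply mul_le_mul_of_nonneg_right _ hk.le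
      exact_mod_cast hi
    have a2 : 0 ≤ (i:ℝ) * k := by positivity
    constructor <;> linarith
  have hslope : ∀ x ∈ Icc (-ℓ) ℓ, ∀ y ∈ Icc (-ℓ) ℓ, |y - x| = k →
      |u0 y - u0 x - (y - x) * u1 x| ≤ U2 * k * k := by
    intro x hx y hy hxy
    have hsub : uIcc x y ⊆ Icc (-ℓ) ℓ := ordConnected_Icc.uIcc_subset hx hy
    have := mvt_bound (D := u1 x) (E := U2 * k) (fun z hz => I.d1 z (hsub hz))
      (fun z hz => by
        refine (lip1 x hx z (hsub hz)).trans ?_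
        rw [← hxy]
        exact mul_le_mul_of_nonneg_left (abs_sub_le_of_mem_uIcc hz) hU20)
    rwa [hxy] at this
  have herr : ∀ i ≤ n, |qsch ℓ G Hl Hr u0 k h n 0 i - Q0 (-ℓ + i * k)| ≤ E * k ^ α := by
    intro i hi
    have hx := hmem i hi
    have hUk : Lam * (U2 * k) ≤ E * k ^ α := by
      have : Lam * U2 * k ≤ Lam * U2 * k ^ α := mul_le_mul_of_nonneg_left hkα (by positivity)
      have : 0 ≤ (C * U2 + 2 * Lam * A) * k ^ α := by positivity
      rw [hE]; linarith
    by_cases hi0 : i = 0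
    · subst hi0
      have hx1 := hmem 1 (by omega)
      have e1 : Q0 (-ℓ + (0:ℕ) * k) = Hl 0 (u0 (-ℓ)) (u1 (-ℓ)) := by
        simp only [hQ0, Nat.cast_zero, zero_mul, add_zero]; exact cl
      rw [e1]
      simp only [qsch, rhs, if_true, sch, Nat.cast_zero, zero_mul, add_zero, Nat.cast_one, one_mul]
      have h2 := abs_sub_le_of_mono hlam.le D.lam_le
        (fun r r' hr => D.Hl_mono 0 (u0 (-ℓ)) r r' hr) ((u0 (-ℓ + k) - u0 (-ℓ)) / k) (u1 (-ℓ))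
      have h3 := hslope (-ℓ) (by simpa using hx) (-ℓ + k) (by simpa using hx1)
        (by rw [add_sub_cancel_left, abs_of_pos hk])
      have h4 : |(u0 (-ℓ + k) - u0 (-ℓ)) / k - u1 (-ℓ)| ≤ U2 * k := by
        have : (u0 (-ℓ + k) - u0 (-ℓ)) / k - u1 (-ℓ)
          = (u0 (-ℓ + k) - u0 (-ℓ) - (-ℓ + k - -ℓ) * u1 (-ℓ)) / k := by field_simp; ring
        rw [this, abs_div, abs_of_pos hk, div_le_iff₀ hk]; exact h3
      exact h2.trans ((mul_le_mul_of_nonneg_left h4 hLam.le).trans hUk)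
    by_cases hin : i = n
    · subst hin
      have hx1 := hmem (i - 1) (by omega)
      have e0 : -ℓ + (i:ℝ) * k = ℓ := by linarith
      have e0' : -ℓ + ((i - 1 : ℕ):ℝ) * k = ℓ - k := by
        rw [Nat.cast_sub (by omega)]; push_cast; linarith
      have e1 : Q0 ℓ = Hr 0 (u0 ℓ) (u1 ℓ) := cr
      rw [e0, e1]
      simp only [qsch, rhs, hi0, if_false, if_true, sch, Nat.cast_zero, zero_mul, e0, e0']
      have h2 := abs_sub_le_of_mono (φ := fun p => - Hr 0 (u0 ℓ) p) hlam.le D.lam_le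
        (fun r r' hr => by
          obtain ⟨a1, a2⟩ := D.Hr_mono 0 (u0 ℓ) r r' hr
          constructor <;> linarith) ((u0 ℓ - u0 (ℓ - k)) / k) (u1 ℓ)
      have h3 := hslope ℓ (by rwa [e0] at hx) (ℓ - k) (by rwa [e0'] at hx1)
        (by rw [sub_sub_cancel_left, abs_neg, abs_of_pos hk])
      have h4 : |(u0 ℓ - u0 (ℓ - k)) / k - u1 ℓ| ≤ U2 * k := by
        have : (u0 ℓ - u0 (ℓ - k)) / k - u1 ℓ
          = -(u0 (ℓ - k) - u0 ℓ - (ℓ - k - ℓ) * u1 ℓ) / k := by field_simp; ring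
        rw [this, abs_div, abs_neg, abs_of_pos hk, div_le_iff₀ hk]; exact h3
      have h5 := h2.trans ((mul_le_mul_of_nonneg_left h4 hLam.le).trans hUk)
      rw [abs_sub_comm]
      have e : ∀ a b : ℝ, a - b = -b - -a := fun a b => by ring
      rwa [e]
    · have hx1 := hmem (i + 1) (by omega)
      have hx2 := hmem (i - 1) (by omega)
      have e1 : -ℓ + ((i + 1 : ℕ):ℝ) * k = (-ℓ + i * k) + k := by push_cast; ring
      have e2 : -ℓ + ((i - 1 : ℕ):ℝ) * k = (-ℓ + i * k) - k := by
        rw [Nat.cast_sub (by omega)]; push_cast; ring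
      rw [e1] at hx1
      rw [e2] at hx2
      simp only [qsch, rhs, hi0, hin, if_false, sch, Nat.cast_zero, zero_mul, e1, e2]
      set x := -ℓ + (i:ℝ) * k
      set w := (u0 (x + k) - u0 x) / k with hw
      set r := (u0 (x + k) - 2 * u0 x + u0 (x - k)) / k ^ 2 with hr
      have h1 := D.G_lip 0 0 x x (u0 x) (u0 x) w (u1 x) r
      have h2 := abs_sub_le_of_mono hlam.le D.lam_le
        (fun r r' hr => D.G_mono 0 x (u0 x) (u1 x) r r' hr) r (u2 x)
      simp only [sub_self, abs_zero, zero_add] at h1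
      have h3 := hslope x hx (x + k) hx1 (by rw [add_sub_cancel_left, abs_of_pos hk])
      have h4 : |w - u1 x| ≤ U2 * k := by
        have : w - u1 x = (u0 (x + k) - u0 x - (x + k - x) * u1 x) / k := by
          rw [hw]; field_simp; ring
        rw [this, abs_div, abs_of_pos hk, div_le_iff₀ hk]; exact h3
      have h5 := I.taylor2 hα hA hx hx1
      have h6 := I.taylor2 hα hA hx hx2
      rw [add_sub_cancel_left, abs_of_pos hk] at h5
      rw [sub_sub_cancel_left, abs_neg, abs_of_pos hk] at h6
      have h7 : |r - u2 x| ≤ 2 * A * k ^ α := by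
        have : r - u2 x = ((u0 (x + k) - u0 x - k * u1 x - k ^ 2 / 2 * u2 x) +
            (u0 (x - k) - u0 x - -k * u1 x - (-k) ^ 2 / 2 * u2 x)) / k ^ 2 := by
          rw [hr]; field_simp; ring
        rw [this, abs_div, abs_of_pos (by positivity : 0 < k ^ 2), div_le_iff₀ (by positivity)]
        refine (abs_add_le _ _).trans ?_
        linarith
      have h8 := abs_sub_le (G 0 x (u0 x) w r) (G 0 x (u0 x) (u1 x) r) (Q0 x)
      have h9 := mul_le_mul_of_nonneg_left h4 hC
      have h10 := mul_le_mul_of_nonneg_left h7 hLam.le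
      have h11 : C * U2 * k ≤ C * U2 * k ^ α := mul_le_mul_of_nonneg_left hkα (by positivity)
      have h12 : 0 ≤ Lam * U2 * k ^ α := by positivity
      rw [hE]
      linarith
  constructor
  · intro i hi
    have h1 := herr i hi
    have h2 := hQb _ (hmem i hi)
    have h3 := abs_sub_abs_le_abs_sub (qsch ℓ G Hl Hr u0 k h n 0 i) (Q0 (-ℓ + i * k))
    have h4 : k ^ α ≤ 1 := Real.rpow_le_one hk.le hk1 hα.le
    have h5 := mul_le_mul_of_nonneg_left h4 hE0
    linarith
  · intro i hi l hl
    rcases eq_or_ne i l with rfl | hne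
    · simp [Real.zero_rpow hα.ne']
    have h1 := herr i hi
    have h2 := herr l hl
    have h3 := hdiff _ (hmem i hi) _ (hmem l hl)
    have h5 : |(-ℓ + (i:ℝ) * k) - (-ℓ + l * k)| = k * |(i:ℝ) - l| := by
      rw [← abs_of_pos hk, ← abs_mul, abs_of_pos hk]; ring_nf
    rw [h5] at h3
    have h6 : (1:ℝ) ≤ |(i:ℝ) - l| := by
      have : (1:ℤ) ≤ |(i:ℤ) - l| := Int.one_le_abs (by omega)
      exact_mod_cast this
    have h7 : k ^ α ≤ (k * |(i:ℝ) - l|) ^ α := by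
      apply Real.rpow_le_rpow hk.le _ hα.le
      nlinarith
    have h8 := mul_le_mul_of_nonneg_left h7 hE0
    have h9 := abs_sub_le (qsch ℓ G Hl Hr u0 k h n 0 i) (Q0 (-ℓ + i * k))
      (qsch ℓ G Hl Hr u0 k h n 0 l)
    have h10 := abs_sub_le (Q0 (-ℓ + i * k)) (Q0 (-ℓ + l * k)) (qsch ℓ G Hl Hr u0 k h n 0 l)
    rw [abs_sub_comm (Q0 (-ℓ + l * k))] at h10
    linarith

/-- Grid approximations with uniform constants exist on all sufficiently fine meshes. -/
theorem exists_gridApprox (D : StarData lam Lam C G Hl Hr) {ℓ T α A : ℝ} {u0 u1 u2 : ℝ → ℝ}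
    (hα : 0 < α) (hα1 : α < 1) (hℓ : 0 < ℓ) (hT : 0 < T) (hA : 0 ≤ A)
    (I : InitData ℓ α A u0 u1 u2)
    (cl : G 0 (-ℓ) (u0 (-ℓ)) (u1 (-ℓ)) (u2 (-ℓ)) = Hl 0 (u0 (-ℓ)) (u1 (-ℓ)))
    (cr : G 0 ℓ (u0 ℓ) (u1 ℓ) (u2 ℓ) = Hr 0 (u0 ℓ) (u1 ℓ)) :
    ∃ B : ℝ, ∃ P : ℕ, 0 < P ∧ ∃ n0 : ℕ, ∀ n ≥ n0, ∃ v q w r,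
      GridApprox ℓ T α B G Hl Hr u0 (2 * ℓ / n) (T / (n ^ 2 * P)) n (n ^ 2 * P) v q w r := by
  have hC := D.C_nonneg
  have hlam := D.lam_pos
  have hLam : 0 < Lam := hlam.trans_le D.lam_le
  have c0 : ContinuousOn u0 (Icc (-ℓ) ℓ) := fun x hx => (I.d1 x hx).continuousAt.continuousWithinAt
  have c1 : ContinuousOn u1 (Icc (-ℓ) ℓ) := fun x hx => (I.d2 x hx).continuousAt.continuousWithinAt
  obtain ⟨U0, hU0⟩ := isCompact_Icc.exists_bound_of_continuousOn c0
  obtain ⟨U1, hU1⟩ := isCompact_Icc.exists_bound_of_continuousOn c1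
  have hz : (0:ℝ) ∈ Icc (-ℓ) ℓ := ⟨by linarith, hℓ.le⟩
  have hU2 : ∀ x ∈ Icc (-ℓ) ℓ, |u2 x| ≤ |u2 0| + A * (2 * ℓ) ^ α := by
    intro x hx
    have h1 := I.holder x hx 0 hz
    have h2 := abs_sub_abs_le_abs_sub (u2 x) (u2 0)
    have h3 : |x - 0| ^ α ≤ (2 * ℓ) ^ α := by
      apply Real.rpow_le_rpow (abs_nonneg _) _ hα.le
      rw [abs_le]; constructor <;> linarith [hx.1, hx.2]
    have h4 := mul_le_mul_of_nonneg_left h3 hA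
    linarith
  obtain ⟨X, C0, hC0, hinit⟩ := qsch_init D hα hα1 hℓ hA I hU1 hU2 cl cr
  set N := (C + 1) / lam with hNdef
  have hN : N * lam = C + 1 := by rw [hNdef]; field_simp
  have hN0 : 0 < N := by positivity
  set Q := (1 + X) * Real.exp (C * T) with hQdef
  set S := C * (1 + Q) with hSdef
  set C1 := C0 + 2 * (C0 + (S + S / lam + 4 * N * Q) * (2 * ℓ) ^ (1 - α)) with hC1def
  set C2 := C1 * (1 + (Lam + C) * (4 * ℓ + 2)) + S * T ^ (1 - α / 2) with hC2def
  set R := (Q + C) / lam with hRdef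
  set W := R + 2 * ℓ * R with hWdef
  set Y := (C1 + C * (1 + W + R) * (2 * ℓ) ^ (1 - α)) / lam with hYdef
  obtain ⟨P, hP⟩ := exists_nat_gt (T * (2 * Lam + lam) / (2 * ℓ ^ 2))
  obtain ⟨n0, hn0⟩ := exists_nat_gt (2 * ℓ + 2 * ℓ * C / lam + 4 * N * ℓ + 2)
  have hP0 : (0:ℝ) < P := lt_of_le_of_lt (by positivity) hP
  refine ⟨|Q| + |C1| + |C2| + |U0 + T * Q| + |W| + |Y|, P, by exact_mod_cast hP0, n0, ?_⟩
  intro n hn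
  have hnn : 2 * ℓ + 2 * ℓ * C / lam + 4 * N * ℓ + 2 < n := hn0.trans_le (by exact_mod_cast hn)
  have p1 : 0 ≤ 2 * ℓ * C / lam := by positivity
  have p2 : 0 ≤ 4 * N * ℓ := by positivity
  have hnp : (0:ℝ) < n := by linarith
  have hn2 : 2 < n := by exact_mod_cast (by linarith : (2:ℝ) < n)
  set k := 2 * ℓ / n with hk
  set h := T / (n ^ 2 * P) with hh
  have hk0 : 0 < k := by positivity
  have hkn : k * n = 2 * ℓ := by rw [hk]; field_simp
  have hk1 : k ≤ 1 := by rw [hk, div_le_one hnp]; linarith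
  have hM : Mesh lam Lam C k h := by
    refine ⟨hlam, D.lam_le, hC, hk0, by positivity, hk1, ?_, ?_⟩
    · rw [hk, div_mul_eq_mul_div, div_le_iff₀ hnp, ← div_le_iff₀' hlam]; linarith
    · rw [div_lt_iff₀ (by positivity)] at hP
      rw [hk, hh, div_mul_eq_mul_div, div_le_iff₀ (by positivity)]
      have : (2 * ℓ / (n:ℝ)) ^ 2 / 2 * (n ^ 2 * P) = P * (2 * ℓ ^ 2) := by field_simp
      rw [this]; exact hP.le
  have hNk : 2 * N * k ≤ 1 := by
    rw [hk, ← mul_div_assoc, div_le_one hnp]; linarith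
  have hJ : ((n ^ 2 * P : ℕ):ℝ) * h = T := by
    rw [hh]; push_cast; field_simp
  obtain ⟨i1, i2⟩ := hinit k h n hk0 hk1 (by omega) hkn
  have hX0 : 0 ≤ X := (abs_nonneg _).trans (i1 0 (by omega))
  have hQ : ∀ j ≤ n ^ 2 * P, ∀ i ≤ n, |qsch ℓ G Hl Hr u0 k h n j i| ≤ Q := by
    intro j hj i hi
    refine (qsch_sup D hM (by omega) i1 j i hi).trans ?_
    apply mul_le_mul_of_nonneg_left _ (by linarith)
    apply Real.exp_le_exp.2
    apply mul_le_mul_of_nonneg_left _ hC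
    rw [← hJ]
    apply mul_le_mul_of_nonneg_right _ hM.h_pos.le
    exact_mod_cast hj
  have hQ0 : 0 ≤ Q := (abs_nonneg _).trans (hQ 0 (by omega) 0 (by omega))
  have hS0 : 0 ≤ S := by positivity
  have hsp := qsch_space D hα hα1 hℓ hM (by omega) hkn hN hNk hC0 hSdef hQ i2
  have hC10 : 0 ≤ C1 := by positivity
  have htm := qsch_time D hα hα1 hM (by omega) hkn hC10 hSdef hJ.le hQ hsp
  have a1 := abs_nonneg Q
  have a2 := abs_nonneg C1
  have a3 := abs_nonneg C2
  have a4 := abs_nonneg (U0 + T * Q)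
  have a5 := abs_nonneg W
  have a6 := abs_nonneg Y
  exact ⟨_, _, _, _, gridApprox_sch D hα hα1 hM (by omega) hkn hJ (U0 := U0) hU0 hQ hsp htm
    hRdef hWdef (by linarith [le_abs_self Q]) (by linarith [le_abs_self C1])
    (by linarith [le_abs_self C2]) (by linarith [le_abs_self (U0 + T * Q)])
    (by linarith [le_abs_self W]) (by linarith [le_abs_self Y])⟩

end

/-! ### Passage to the limit -/

/-- The limits `v, q, w, r` of the grid approximations of `u, u_t, u_x, u_xx` on
`[0,T] × [-ℓ,ℓ]`: they satisfy the equation, Hölder bounds, and Taylor expansions with uniform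
remainders. -/
structure LimitSol (ℓ T α B : ℝ) (G : ℝ → ℝ → ℝ → ℝ → ℝ → ℝ) (Hl Hr : ℝ → ℝ → ℝ → ℝ)
    (u0 : ℝ → ℝ) (v q w r : ℝ → ℝ → ℝ) : Prop where
  v_bd : ∀ t ∈ Icc 0 T, ∀ x ∈ Icc (-ℓ) ℓ, |v t x| ≤ B
  q_bd : ∀ t ∈ Icc 0 T, ∀ x ∈ Icc (-ℓ) ℓ, |q t x| ≤ B
  w_bd : ∀ t ∈ Icc 0 T, ∀ x ∈ Icc (-ℓ) ℓ, |w t x| ≤ B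
  r_bd : ∀ t ∈ Icc 0 T, ∀ x ∈ Icc (-ℓ) ℓ, |r t x| ≤ B
  q_sp : ∀ t ∈ Icc 0 T, ∀ x ∈ Icc (-ℓ) ℓ, ∀ y ∈ Icc (-ℓ) ℓ, |q t x - q t y| ≤ B * |x - y| ^ α
  r_sp : ∀ t ∈ Icc 0 T, ∀ x ∈ Icc (-ℓ) ℓ, ∀ y ∈ Icc (-ℓ) ℓ, |r t x - r t y| ≤ B * |x - y| ^ α
  q_tm : ∀ t ∈ Icc 0 T, ∀ s ∈ Icc 0 T, ∀ x ∈ Icc (-ℓ) ℓ, |q t x - q s x| ≤ B * |t - s| ^ (α / 2)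
  v_tm : ∀ t ∈ Icc 0 T, ∀ s ∈ Icc 0 T, ∀ x ∈ Icc (-ℓ) ℓ,
    |v s x - v t x - (s - t) * q t x| ≤ |s - t| * (B * |s - t| ^ (α / 2))
  v_sp : ∀ t ∈ Icc 0 T, ∀ x ∈ Icc (-ℓ) ℓ, ∀ y ∈ Icc (-ℓ) ℓ,
    |v t y - v t x - (y - x) * w t x| ≤ |y - x| * (B * |y - x|)
  w_sp : ∀ t ∈ Icc 0 T, ∀ x ∈ Icc (-ℓ) ℓ, ∀ y ∈ Icc (-ℓ) ℓ,
    |w t y - w t x - (y - x) * r t x| ≤ |y - x| * (B * |y - x| ^ α)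
  eq_int : ∀ t ∈ Icc 0 T, ∀ x ∈ Ioo (-ℓ) ℓ, q t x = G t x (v t x) (w t x) (r t x)
  eq_l : ∀ t ∈ Icc 0 T, q t (-ℓ) = Hl t (v t (-ℓ)) (w t (-ℓ))
  eq_r : ∀ t ∈ Icc 0 T, q t ℓ = Hr t (v t ℓ) (w t ℓ)
  init : ∀ x ∈ Icc (-ℓ) ℓ, v 0 x = u0 x

theorem exists_ultralimit (F : Ultrafilter ℕ) {a : ℕ → ℝ} {B : ℝ} (h : ∀ n, |a n| ≤ B) :
    ∃ L, Tendsto a F (𝓝 L) := by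
  obtain ⟨L, -, hL⟩ := (isCompact_Icc (a := -B) (b := B)).ultrafilter_le_nhds (F.map a)
    (le_principal_iff.2 (by
      rw [Ultrafilter.mem_coe, Ultrafilter.mem_map]
      exact Filter.univ_mem' fun n => abs_le.1 (h n)))
  exact ⟨L, hL⟩

theorem floor_div_bounds {y k : ℝ} (hk : 0 < k) (hy : 0 ≤ y) :
    k * (⌊y / k⌋₊ : ℝ) ≤ y ∧ y ≤ k * (⌊y / k⌋₊ : ℝ) + k := by
  have h1 := Nat.floor_le (div_nonneg hy hk.le)
  have h2 := (Nat.lt_floor_add_one (y / k)).le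
  rw [le_div_iff₀ hk] at h1
  rw [div_le_iff₀ hk] at h2
  constructor <;> linarith

section
variable {lam Lam C : ℝ} {G : ℝ → ℝ → ℝ → ℝ → ℝ → ℝ} {Hl Hr : ℝ → ℝ → ℝ → ℝ}

/-- Passage to the limit along an ultrafilter: at a point `(t,x)` the limit of the values at the
grid node below it. The uniform Hölder estimates make every bound pass to the limit, and the
equation passes by continuity of `G`, `Hl`, `Hr`. -/
theorem limitSol_of_gridApprox (D : StarData lam Lam C G Hl Hr) {ℓ T α B : ℝ} {u0 : ℝ → ℝ}
    (hα : 0 < α) (hℓ : 0 < ℓ) (hT : 0 < T) (hc : ContinuousOn u0 (Icc (-ℓ) ℓ))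
    {K H : ℕ → ℝ} {N J : ℕ → ℕ} {V Q W R : ℕ → ℕ → ℕ → ℝ}
    (hK : Tendsto K atTop (𝓝 0)) (hH : Tendsto H atTop (𝓝 0))
    (hG : ∀ n, GridApprox ℓ T α B G Hl Hr u0 (K n) (H n) (N n) (J n) (V n) (Q n) (W n) (R n)) :
    ∃ v q w r, LimitSol ℓ T α B G Hl Hr u0 v q w r := by
  have hlam := D.lam_pos
  set F : Ultrafilter ℕ := hyperfilter ℕ with hF
  have hFa : (F : Filter ℕ) ≤ atTop := Nat.hyperfilter_le_atTop
  have hK' : Tendsto K F (𝓝 0) := hK.mono_left hFa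
  have hH' : Tendsto H F (𝓝 0) := hH.mono_left hFa
  set I : ℕ → ℝ → ℕ := fun n x => ⌊(x + ℓ) / K n⌋₊ with hI
  set Jt : ℕ → ℝ → ℕ := fun n t => ⌊t / H n⌋₊ with hJt
  have hIN : ∀ n, ∀ x ∈ Icc (-ℓ) ℓ, I n x ≤ N n := by
    intro n x hx
    apply Nat.floor_le_of_le
    rw [div_le_iff₀ (hG n).k_pos, mul_comm, (hG n).kn]
    linarith [hx.2]
  have hJJ : ∀ n, ∀ t ∈ Icc 0 T, Jt n t ≤ J n := by
    intro n t ht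
    apply Nat.floor_le_of_le
    rw [div_le_iff₀ (hG n).h_pos, (hG n).hJ]
    exact ht.2
  have hIx : ∀ x ∈ Icc (-ℓ) ℓ, Tendsto (fun n => K n * (I n x : ℝ)) F (𝓝 (x + ℓ)) := by
    intro x hx
    have h1 : Tendsto (fun n => x + ℓ - K n) F (𝓝 (x + ℓ)) := by
      simpa using tendsto_const_nhds.sub hK'
    refine tendsto_of_tendsto_of_tendsto_of_le_of_le h1 tendsto_const_nhds (fun n => ?_)
      (fun n => ?_)
    · have := (floor_div_bounds (hG n).k_pos (by linarith [hx.1] : 0 ≤ x + ℓ)).2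
      simp only [hI]; linarith
    · exact (floor_div_bounds (hG n).k_pos (by linarith [hx.1] : 0 ≤ x + ℓ)).1
  have hJx : ∀ t ∈ Icc 0 T, Tendsto (fun n => H n * (Jt n t : ℝ)) F (𝓝 t) := by
    intro t ht
    have h1 : Tendsto (fun n => t - H n) F (𝓝 t) := by
      simpa using tendsto_const_nhds.sub hH'
    refine tendsto_of_tendsto_of_tendsto_of_le_of_le h1 tendsto_const_nhds (fun n => ?_)
      (fun n => ?_)
    · have := (floor_div_bounds (hG n).h_pos ht.1).2
      simp only [hJt]; linarith
    · exact (floor_div_bounds (hG n).h_pos ht.1).1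
  have hd : ∀ x ∈ Icc (-ℓ) ℓ, ∀ y ∈ Icc (-ℓ) ℓ,
      Tendsto (fun n => K n * ((I n y : ℝ) - I n x)) F (𝓝 (y - x)) := by
    intro x hx y hy
    have := (hIx y hy).sub (hIx x hx)
    simp only [← mul_sub, add_sub_add_right_eq_sub] at this
    exact this
  have hdt : ∀ t ∈ Icc 0 T, ∀ s ∈ Icc 0 T,
      Tendsto (fun n => H n * ((Jt n s : ℝ) - Jt n t)) F (𝓝 (s - t)) := by
    intro t ht s hs
    have := (hJx s hs).sub (hJx t ht)
    simp only [← mul_sub] at this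
    exact this
  have had : ∀ x ∈ Icc (-ℓ) ℓ, ∀ y ∈ Icc (-ℓ) ℓ,
      Tendsto (fun n => K n * |(I n y : ℝ) - I n x|) F (𝓝 |y - x|) := by
    intro x hx y hy
    refine (hd x hx y hy).abs.congr (fun n => ?_)
    rw [abs_mul, abs_of_pos (hG n).k_pos]
  have hadt : ∀ t ∈ Icc 0 T, ∀ s ∈ Icc 0 T,
      Tendsto (fun n => H n * |(Jt n s : ℝ) - Jt n t|) F (𝓝 |s - t|) := by
    intro t ht s hs
    refine (hdt t ht s hs).abs.congr (fun n => ?_)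
    rw [abs_mul, abs_of_pos (hG n).h_pos]
  -- the limits along the ultrafilter
  have key : ∀ X : ℕ → ℕ → ℕ → ℝ, (∀ n, ∀ j ≤ J n, ∀ i ≤ N n, |X n j i| ≤ B) →
      ∃ Y : ℝ → ℝ → ℝ, ∀ t ∈ Icc 0 T, ∀ x ∈ Icc (-ℓ) ℓ,
        Tendsto (fun n => X n (Jt n t) (I n x)) F (𝓝 (Y t x)) := by
    intro X hX
    have : ∀ t x, ∃ L, t ∈ Icc 0 T → x ∈ Icc (-ℓ) ℓ →
        Tendsto (fun n => X n (Jt n t) (I n x)) F (𝓝 L) := by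
      intro t x
      by_cases h : t ∈ Icc 0 T ∧ x ∈ Icc (-ℓ) ℓ
      · obtain ⟨L, hL⟩ := exists_ultralimit F (a := fun n => X n (Jt n t) (I n x))
          (fun n => hX n _ (hJJ n t h.1) _ (hIN n x h.2))
        exact ⟨L, fun _ _ => hL⟩
      · exact ⟨0, fun h1 h2 => absurd ⟨h1, h2⟩ h⟩
    choose Y hY using this
    exact ⟨Y, fun t ht x hx => hY t x ht hx⟩
  obtain ⟨v, hv⟩ := key V (fun n => (hG n).v_bd)
  obtain ⟨q, hq⟩ := key Q (fun n => (hG n).q_bd)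
  obtain ⟨w, hw⟩ := key W (fun n => (hG n).w_bd)
  obtain ⟨r, hr⟩ := key R (fun n => (hG n).r_bd)
  have bd : ∀ (X : ℕ → ℕ → ℕ → ℝ) (Y : ℝ → ℝ → ℝ),
      (∀ n, ∀ j ≤ J n, ∀ i ≤ N n, |X n j i| ≤ B) →
      (∀ t ∈ Icc 0 T, ∀ x ∈ Icc (-ℓ) ℓ, Tendsto (fun n => X n (Jt n t) (I n x)) F (𝓝 (Y t x))) →
      ∀ t ∈ Icc 0 T, ∀ x ∈ Icc (-ℓ) ℓ, |Y t x| ≤ B := by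
    intro X Y hX hY t ht x hx
    exact le_of_tendsto' (hY t ht x hx).abs (fun n => hX n _ (hJJ n t ht) _ (hIN n x hx))
  have hpow : ∀ {a : ℕ → ℝ} {L β : ℝ}, 0 < β → Tendsto a F (𝓝 L) →
      Tendsto (fun n => a n ^ β) F (𝓝 (L ^ β)) := fun hβ h =>
    h.rpow_const (Or.inr hβ.le)
  refine ⟨v, q, w, r, bd V v (fun n => (hG n).v_bd) hv, bd Q q (fun n => (hG n).q_bd) hq,
    bd W w (fun n => (hG n).w_bd) hw, bd R r (fun n => (hG n).r_bd) hr, ?_, ?_, ?_, ?_, ?_, ?_, ?_,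
    ?_, ?_, ?_⟩
  · intro t ht x hx y hy
    exact le_of_tendsto_of_tendsto' ((hq t ht x hx).sub (hq t ht y hy)).abs
      ((hpow hα (had y hy x hx)).const_mul B)
      (fun n => (hG n).q_sp _ (hJJ n t ht) _ (hIN n x hx) _ (hIN n y hy))
  · intro t ht x hx y hy
    exact le_of_tendsto_of_tendsto' ((hr t ht x hx).sub (hr t ht y hy)).abs
      ((hpow hα (had y hy x hx)).const_mul B)
      (fun n => (hG n).r_sp _ (hJJ n t ht) _ (hIN n x hx) _ (hIN n y hy))
  · intro t ht s hs x hx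
    exact le_of_tendsto_of_tendsto' ((hq t ht x hx).sub (hq s hs x hx)).abs
      ((hpow (half_pos hα) (hadt s hs t ht)).const_mul B)
      (fun n => (hG n).q_tm _ (hJJ n t ht) _ (hJJ n s hs) _ (hIN n x hx))
  · intro t ht s hs x hx
    exact le_of_tendsto_of_tendsto'
      (((hv s hs x hx).sub (hv t ht x hx)).sub ((hdt t ht s hs).mul (hq t ht x hx))).abs
      ((hadt t ht s hs).mul ((hpow (half_pos hα) (hadt t ht s hs)).const_mul B))
      (fun n => (hG n).v_tm _ (hJJ n t ht) _ (hJJ n s hs) _ (hIN n x hx))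
  · intro t ht x hx y hy
    exact le_of_tendsto_of_tendsto'
      (((hv t ht y hy).sub (hv t ht x hx)).sub ((hd x hx y hy).mul (hw t ht x hx))).abs
      ((had x hx y hy).mul ((had x hx y hy).const_mul B))
      (fun n => (hG n).v_sp _ (hJJ n t ht) _ (hIN n x hx) _ (hIN n y hy))
  · intro t ht x hx y hy
    have h1 : Tendsto (fun n => K n * (|(I n y : ℝ) - I n x| + 1)) F (𝓝 |y - x|) := by
      have := (had x hx y hy).add hK'
      rw [add_zero] at this
      refine this.congr (fun n => by ring)
    have h2 : Tendsto (fun n => (K n * |(I n y : ℝ) - I n x|) *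
        (B * (K n * (|(I n y : ℝ) - I n x| + 1)) ^ α) + B * K n) F
        (𝓝 (|y - x| * (B * |y - x| ^ α))) := by
      have := ((had x hx y hy).mul ((hpow hα h1).const_mul B)).add (hK'.const_mul B)
      simpa using this
    exact le_of_tendsto_of_tendsto'
      (((hw t ht y hy).sub (hw t ht x hx)).sub ((hd x hx y hy).mul (hr t ht x hx))).abs h2
      (fun n => (hG n).w_sp _ (hJJ n t ht) _ (hIN n x hx) _ (hIN n y hy))
  · intro t ht x hx
    have hx' := Ioo_subset_Icc_self hx
    have e1 : ∀ᶠ n in (F : Filter ℕ), 0 < K n * (I n x : ℝ) :=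
      (hIx x hx').eventually (lt_mem_nhds (by linarith [hx.1]))
    have e2 : ∀ᶠ n in (F : Filter ℕ), K n * (I n x : ℝ) < 2 * ℓ :=
      (hIx x hx').eventually (gt_mem_nhds (by linarith [hx.2]))
    have h0 : Tendsto (fun n => C * (|(Jt n t : ℝ) * H n - t| + |(-ℓ + (I n x : ℝ) * K n) - x| +
        |V n (Jt n t) (I n x) - v t x| + |W n (Jt n t) (I n x) - w t x|)
        + Lam * |R n (Jt n t) (I n x) - r t x|) F (𝓝 0) := by
      have a1 : Tendsto (fun n => |(Jt n t : ℝ) * H n - t|) F (𝓝 0) := by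
        have := ((hJx t ht).sub_const t).abs
        simp only [sub_self, abs_zero] at this
        exact this.congr (fun n => by rw [mul_comm])
      have a2 : Tendsto (fun n => |(-ℓ + (I n x : ℝ) * K n) - x|) F (𝓝 0) := by
        have := ((hIx x hx').sub_const (x + ℓ)).abs
        simp only [sub_self, abs_zero] at this
        exact this.congr (fun n => by congr 1; ring)
      have a3 := ((hv t ht x hx').sub_const (v t x)).abs
      have a4 := ((hw t ht x hx').sub_const (w t x)).abs
      have a5 := ((hr t ht x hx').sub_const (r t x)).abs
      have := ((((a1.add a2).add a3).add a4).const_mul C).add (a5.const_mul Lam)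
      simpa using this
    have h1 : Tendsto (fun n => Q n (Jt n t) (I n x)) F (𝓝 (G t x (v t x) (w t x) (r t x))) := by
      rw [tendsto_iff_norm_sub_tendsto_zero]
      refine squeeze_zero' (Eventually.of_forall fun n => norm_nonneg _) ?_ h0
      filter_upwards [e1, e2] with n h1 h2
      have i1 : 0 < I n x := by
        by_contra hcon
        have : I n x = 0 := by omega
        rw [this] at h1; simp at h1
      have i2 : I n x < N n := by
        rw [← (hG n).kn] at h2
        exact_mod_cast lt_of_mul_lt_mul_left h2 (hG n).k_pos.le
      rw [Real.norm_eq_abs, (hG n).eq_int _ (hJJ n t ht) _ i1 i2]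
      have b1 := D.G_lip ((Jt n t : ℝ) * H n) t (-ℓ + (I n x : ℝ) * K n) x
        (V n (Jt n t) (I n x)) (v t x) (W n (Jt n t) (I n x)) (w t x) (R n (Jt n t) (I n x))
      have b2 := abs_sub_le_of_mono hlam.le D.lam_le
        (fun r r' hr => D.G_mono t x (v t x) (w t x) r r' hr) (R n (Jt n t) (I n x)) (r t x)
      exact (abs_sub_le _ _ _).trans (add_le_add b1 b2)
    exact tendsto_nhds_unique (hq t ht x hx') h1
  · intro t ht
    have hx' : -ℓ ∈ Icc (-ℓ) ℓ := ⟨le_rfl, by linarith⟩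
    have hI0 : ∀ n, I n (-ℓ) = 0 := fun n => by simp [hI]
    have h0 : Tendsto (fun n => C * (|(Jt n t : ℝ) * H n - t| +
        |V n (Jt n t) (I n (-ℓ)) - v t (-ℓ)|) + Lam * |W n (Jt n t) (I n (-ℓ)) - w t (-ℓ)|)
        F (𝓝 0) := by
      have a1 : Tendsto (fun n => |(Jt n t : ℝ) * H n - t|) F (𝓝 0) := by
        have := ((hJx t ht).sub_const t).abs
        simp only [sub_self, abs_zero] at this
        exact this.congr (fun n => by rw [mul_comm])
      have a3 := ((hv t ht _ hx').sub_const (v t (-ℓ))).abs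
      have a4 := ((hw t ht _ hx').sub_const (w t (-ℓ))).abs
      have := ((a1.add a3).const_mul C).add (a4.const_mul Lam)
      simpa using this
    have h1 : Tendsto (fun n => Q n (Jt n t) (I n (-ℓ))) F (𝓝 (Hl t (v t (-ℓ)) (w t (-ℓ)))) := by
      rw [tendsto_iff_norm_sub_tendsto_zero]
      refine squeeze_zero (fun n => norm_nonneg _) (fun n => ?_) h0
      rw [Real.norm_eq_abs, hI0, (hG n).eq_l _ (hJJ n t ht)]
      have b1 := D.Hl_lip ((Jt n t : ℝ) * H n) t (V n (Jt n t) 0) (v t (-ℓ)) (W n (Jt n t) 0)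
      have b2 := abs_sub_le_of_mono hlam.le D.lam_le
        (fun r r' hr => D.Hl_mono t (v t (-ℓ)) r r' hr) (W n (Jt n t) 0) (w t (-ℓ))
      exact (abs_sub_le _ _ _).trans (add_le_add b1 b2)
    exact tendsto_nhds_unique (hq t ht _ hx') h1
  · intro t ht
    have hx' : ℓ ∈ Icc (-ℓ) ℓ := ⟨by linarith, le_rfl⟩
    have hI0 : ∀ n, I n ℓ = N n := fun n => by
      have : (ℓ + ℓ) / K n = N n := by
        rw [div_eq_iff (hG n).k_pos.ne', mul_comm, (hG n).kn]; ring
      simp [hI, this]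
    have h0 : Tendsto (fun n => C * (|(Jt n t : ℝ) * H n - t| +
        |V n (Jt n t) (I n ℓ) - v t ℓ|) + Lam * |W n (Jt n t) (I n ℓ) - w t ℓ|)
        F (𝓝 0) := by
      have a1 : Tendsto (fun n => |(Jt n t : ℝ) * H n - t|) F (𝓝 0) := by
        have := ((hJx t ht).sub_const t).abs
        simp only [sub_self, abs_zero] at this
        exact this.congr (fun n => by rw [mul_comm])
      have a3 := ((hv t ht _ hx').sub_const (v t ℓ)).abs
      have a4 := ((hw t ht _ hx').sub_const (w t ℓ)).abs
      have := ((a1.add a3).const_mul C).add (a4.const_mul Lam)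
      simpa using this
    have h1 : Tendsto (fun n => Q n (Jt n t) (I n ℓ)) F (𝓝 (Hr t (v t ℓ) (w t ℓ))) := by
      rw [tendsto_iff_norm_sub_tendsto_zero]
      refine squeeze_zero (fun n => norm_nonneg _) (fun n => ?_) h0
      rw [Real.norm_eq_abs, hI0, (hG n).eq_r _ (hJJ n t ht)]
      have b1 := D.Hr_lip ((Jt n t : ℝ) * H n) t (V n (Jt n t) (N n)) (v t ℓ) (W n (Jt n t) (N n))
      have b2 := abs_sub_le_of_mono (φ := fun p => - Hr t (v t ℓ) p) hlam.le D.lam_le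
        (fun r r' hr => by
          obtain ⟨a1, a2⟩ := D.Hr_mono t (v t ℓ) r r' hr
          constructor <;> linarith) (W n (Jt n t) (N n)) (w t ℓ)
      have e : ∀ a b : ℝ, |-a - -b| = |a - b| := fun a b => by rw [← abs_neg]; congr 1; ring
      rw [e] at b2
      exact (abs_sub_le _ _ _).trans (add_le_add b1 b2)
    exact tendsto_nhds_unique (hq t ht _ hx') h1
  · intro x hx
    have h0 : (0:ℝ) ∈ Icc 0 T := ⟨le_rfl, hT.le⟩
    have h1 : Tendsto (fun n => -ℓ + (I n x : ℝ) * K n) F (𝓝[Icc (-ℓ) ℓ] x) := by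
      rw [tendsto_nhdsWithin_iff]
      constructor
      · have := (hIx x hx).const_add (-ℓ)
        rw [show -ℓ + (x + ℓ) = x by ring] at this
        exact this.congr (fun n => by ring)
      · refine Eventually.of_forall fun n => ?_
        have b1 := (floor_div_bounds (hG n).k_pos (by linarith [hx.1] : 0 ≤ x + ℓ)).1
        have b2 : 0 ≤ (I n x : ℝ) * K n := mul_nonneg (Nat.cast_nonneg _) (hG n).k_pos.le
        simp only [hI] at b2 ⊢
        constructor <;> linarith [hx.2]
    have h2 := (hc x hx).tendsto.comp h1
    have h3 : Tendsto (fun n => V n (Jt n 0) (I n x)) F (𝓝 (u0 x)) := by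
      refine h2.congr (fun n => ?_)
      have : Jt n 0 = 0 := by simp [hJt]
      rw [this, (hG n).init _ (hIN n x hx)]; rfl
    exact tendsto_nhds_unique (hv 0 h0 x hx) h3

/-- Parabolic refinement `h ~ k²` of the mesh gives a limit solution. -/
theorem exists_limitSol (D : StarData lam Lam C G Hl Hr) {ℓ T α A : ℝ} {u0 u1 u2 : ℝ → ℝ}
    (hα : 0 < α) (hα1 : α < 1) (hℓ : 0 < ℓ) (hT : 0 < T) (hA : 0 ≤ A)
    (I : InitData ℓ α A u0 u1 u2)
    (cl : G 0 (-ℓ) (u0 (-ℓ)) (u1 (-ℓ)) (u2 (-ℓ)) = Hl 0 (u0 (-ℓ)) (u1 (-ℓ)))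
    (cr : G 0 ℓ (u0 ℓ) (u1 ℓ) (u2 ℓ) = Hr 0 (u0 ℓ) (u1 ℓ)) :
    ∃ B v q w r, LimitSol ℓ T α B G Hl Hr u0 v q w r := by
  obtain ⟨B, P, hP, n0, h⟩ := exists_gridApprox D hα hα1 hℓ hT hA I cl cr
  have hP1 : (1:ℝ) ≤ P := by exact_mod_cast hP
  choose V Q W R hG using fun n : ℕ => h (n + n0 + 1) (by omega)
  have hlim : Tendsto (fun n : ℕ => ((n + n0 + 1 : ℕ):ℝ)) atTop atTop :=
    tendsto_natCast_atTop_atTop.comp (tendsto_add_atTop_nat (n0 + 1))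
  have hK : Tendsto (fun n : ℕ => 2 * ℓ / ((n + n0 + 1 : ℕ):ℝ)) atTop (𝓝 0) :=
    tendsto_const_nhds.div_atTop hlim
  have hH : Tendsto (fun n : ℕ => T / (((n + n0 + 1 : ℕ):ℝ) ^ 2 * P)) atTop (𝓝 0) := by
    refine tendsto_const_nhds.div_atTop (tendsto_atTop_mono (fun n => ?_) hlim)
    have : (1:ℝ) ≤ ((n + n0 + 1 : ℕ):ℝ) := by exact_mod_cast (by omega)
    nlinarith
  obtain ⟨v, q, w, r, hL⟩ := limitSol_of_gridApprox D hα hℓ hT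
    (fun x hx => (I.d1 x hx).continuousAt.continuousWithinAt) hK hH hG
  exact ⟨B, v, q, w, r, hL⟩

end

/-! ### Regularity of the limit -/

/-- A classical solution `v` with `q = v_t`, `w = v_x`, `r = v_xx` of the fully nonlinear problem
`v_t = G(t,x,v,v_x,v_xx)`, `v_t = Hl` at `-ℓ`, `v_t = Hr` at `ℓ`, in the parabolic Hölder class.
The spatial derivatives are two-sided also at `±ℓ`, so `v` is extended beyond `[-ℓ,ℓ]`. -/
structure SmoothSol (ℓ T α B : ℝ) (G : ℝ → ℝ → ℝ → ℝ → ℝ → ℝ) (Hl Hr : ℝ → ℝ → ℝ → ℝ)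
    (u0 : ℝ → ℝ) (v q w r : ℝ → ℝ → ℝ) : Prop where
  dt : ∀ t ∈ Ioo 0 T, ∀ x ∈ Icc (-ℓ) ℓ, HasDerivAt (fun s => v s x) (q t x) t
  dx : ∀ t ∈ Icc 0 T, ∀ x, HasDerivAt (v t) (w t x) x
  dxx : ∀ t ∈ Icc 0 T, ∀ x ∈ Icc (-ℓ) ℓ, HasDerivAt (w t) (r t x) x
  v_bd : ∀ t ∈ Icc 0 T, ∀ x ∈ Icc (-ℓ) ℓ, |v t x| ≤ B
  q_bd : ∀ t ∈ Icc 0 T, ∀ x ∈ Icc (-ℓ) ℓ, |q t x| ≤ B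
  w_bd : ∀ t ∈ Icc 0 T, ∀ x ∈ Icc (-ℓ) ℓ, |w t x| ≤ B
  r_bd : ∀ t ∈ Icc 0 T, ∀ x ∈ Icc (-ℓ) ℓ, |r t x| ≤ B
  v_tm : ∀ t ∈ Icc 0 T, ∀ s ∈ Icc 0 T, ∀ x ∈ Icc (-ℓ) ℓ, |v t x - v s x| ≤ B * |t - s|
  v_sp : ∀ t ∈ Icc 0 T, ∀ x ∈ Icc (-ℓ) ℓ, ∀ y ∈ Icc (-ℓ) ℓ, |v t x - v t y| ≤ B * |x - y|
  q_sp : ∀ t ∈ Icc 0 T, ∀ x ∈ Icc (-ℓ) ℓ, ∀ y ∈ Icc (-ℓ) ℓ, |q t x - q t y| ≤ B * |x - y| ^ α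
  r_sp : ∀ t ∈ Icc 0 T, ∀ x ∈ Icc (-ℓ) ℓ, ∀ y ∈ Icc (-ℓ) ℓ, |r t x - r t y| ≤ B * |x - y| ^ α
  q_tm : ∀ t ∈ Icc 0 T, ∀ s ∈ Icc 0 T, ∀ x ∈ Icc (-ℓ) ℓ, |q t x - q s x| ≤ B * |t - s| ^ (α / 2)
  r_tm : ∀ t ∈ Icc 0 T, ∀ s ∈ Icc 0 T, ∀ x ∈ Icc (-ℓ) ℓ, |r t x - r s x| ≤ B * |t - s| ^ (α / 2)
  w_tm : ∀ t ∈ Icc 0 T, ∀ s ∈ Icc 0 T, ∀ x ∈ Icc (-ℓ) ℓ,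
    |w t x - w s x| ≤ B * |t - s| ^ ((1 + α) / 2)
  eq_int : ∀ t ∈ Icc 0 T, ∀ x ∈ Ioo (-ℓ) ℓ, q t x = G t x (v t x) (w t x) (r t x)
  eq_l : ∀ t ∈ Icc 0 T, q t (-ℓ) = Hl t (v t (-ℓ)) (w t (-ℓ))
  eq_r : ∀ t ∈ Icc 0 T, q t ℓ = Hr t (v t ℓ) (w t ℓ)
  init : ∀ x ∈ Icc (-ℓ) ℓ, v 0 x = u0 x

theorem exists_mem_abs_sub_eq {ℓ x ρ : ℝ} (hx : x ∈ Icc (-ℓ) ℓ) (hρ : 0 ≤ ρ) (hρℓ : ρ ≤ ℓ) :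
    ∃ y ∈ Icc (-ℓ) ℓ, |y - x| = ρ := by
  rcases le_total x 0 with h | h
  · exact ⟨x + ρ, ⟨by linarith [hx.1], by linarith⟩, by
      rw [add_sub_cancel_left, abs_of_nonneg hρ]⟩
  · exact ⟨x - ρ, ⟨by linarith, by linarith [hx.2]⟩, by
      rw [sub_sub_cancel_left, abs_neg, abs_of_nonneg hρ]⟩

/-- Interpolation: a slope is controlled by a difference quotient and the Taylor remainder. -/
theorem slope_le {a σ e1 e2 y x ρ : ℝ} (hρ : 0 < ρ) (hy : |y - x| = ρ)
    (h1 : |a - (y - x) * σ| ≤ ρ * e1) (h2 : |a| ≤ ρ * e2) : |σ| ≤ e1 + e2 := by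
  have h3 : |(y - x) * σ| ≤ ρ * (e1 + e2) := by
    calc |(y - x) * σ| = |a - (a - (y - x) * σ)| := by rw [sub_sub_cancel]
      _ ≤ |a| + |a - (y - x) * σ| := abs_sub _ _
      _ ≤ _ := by linarith
  rw [abs_mul, hy] at h3
  exact le_of_mul_le_mul_left h3 hρ

theorem abs_le_rpow_of_le {α x L : ℝ} (hα : 0 < α) (hα1 : α < 1) (hL : |x| ≤ L) :
    |x| ≤ L ^ (1 - α) * |x| ^ α := le_rpow_of_le hα hα1 (abs_nonneg _) hL

section
variable {lam Lam C : ℝ} {G : ℝ → ℝ → ℝ → ℝ → ℝ → ℝ} {Hl Hr : ℝ → ℝ → ℝ → ℝ}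
variable {ℓ T α B : ℝ} {u0 : ℝ → ℝ} {v q w r : ℝ → ℝ → ℝ}

theorem continuousOn_of_holder {f : ℝ → ℝ} {s : Set ℝ} (hα : 0 < α)
    (h : ∀ x ∈ s, ∀ y ∈ s, |f x - f y| ≤ B * |x - y| ^ α) : ContinuousOn f s := by
  intro x hx
  rw [ContinuousWithinAt, tendsto_iff_norm_sub_tendsto_zero]
  have h0 : Tendsto (fun y => B * |y - x| ^ α) (𝓝[s] x) (𝓝 0) := by
    have : ContinuousAt (fun y : ℝ => B * |y - x| ^ α) x := by
      refine continuousAt_const.mul (ContinuousAt.rpow_const ?_ (Or.inr hα.le))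
      fun_prop
    have h2 := this.tendsto.mono_left (nhdsWithin_le_nhds (s := s))
    simpa [Real.zero_rpow hα.ne'] using h2
  refine squeeze_zero' (Eventually.of_forall fun _ => norm_nonneg _) ?_ h0
  filter_upwards [self_mem_nhdsWithin] with y hy
  exact h y hy x hx

theorem hasDerivWithinAt_of_rem {f : ℝ → ℝ} {s : Set ℝ} {x d β : ℝ} (hβ : 0 < β)
    (h : ∀ y ∈ s, |f y - f x - (y - x) * d| ≤ |y - x| * (B * |y - x| ^ β)) :
    HasDerivWithinAt f d s x := by
  rw [hasDerivWithinAt_iff_isLittleO]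
  have h0 : Tendsto (fun y => B * |y - x| ^ β) (𝓝[s] x) (𝓝 0) := by
    have : ContinuousAt (fun y : ℝ => B * |y - x| ^ β) x := by
      refine continuousAt_const.mul (ContinuousAt.rpow_const ?_ (Or.inr hβ.le))
      fun_prop
    have h2 := this.tendsto.mono_left (nhdsWithin_le_nhds (s := s))
    simpa [Real.zero_rpow hβ.ne'] using h2
  rw [Asymptotics.isLittleO_iff]
  intro c hc
  filter_upwards [self_mem_nhdsWithin, h0.eventually (gt_mem_nhds hc)] with y hy hyc
  rw [smul_eq_mul, Real.norm_eq_abs, Real.norm_eq_abs, mul_comm c]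
  exact (h y hy).trans (mul_le_mul_of_nonneg_left hyc.le (abs_nonneg _))

theorem LimitSol.B_nonneg (S : LimitSol ℓ T α B G Hl Hr u0 v q w r) (hℓ : 0 < ℓ) (hT : 0 < T) :
    0 ≤ B :=
  (abs_nonneg _).trans (S.v_bd 0 ⟨le_rfl, hT.le⟩ 0 ⟨by linarith, hℓ.le⟩)

theorem LimitSol.dt_within (S : LimitSol ℓ T α B G Hl Hr u0 v q w r) (hα : 0 < α) {t x : ℝ}
    (ht : t ∈ Icc 0 T) (hx : x ∈ Icc (-ℓ) ℓ) :
    HasDerivWithinAt (fun s => v s x) (q t x) (Icc 0 T) t :=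
  hasDerivWithinAt_of_rem (half_pos hα) fun s hs => S.v_tm t ht s hs x hx

theorem LimitSol.dx_within (S : LimitSol ℓ T α B G Hl Hr u0 v q w r) {t x : ℝ}
    (ht : t ∈ Icc 0 T) (hx : x ∈ Icc (-ℓ) ℓ) :
    HasDerivWithinAt (v t) (w t x) (Icc (-ℓ) ℓ) x :=
  hasDerivWithinAt_of_rem one_pos fun y hy => by
    rw [Real.rpow_one]; exact S.v_sp t ht x hx y hy

theorem LimitSol.dxx_within (S : LimitSol ℓ T α B G Hl Hr u0 v q w r) (hα : 0 < α) {t x : ℝ}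
    (ht : t ∈ Icc 0 T) (hx : x ∈ Icc (-ℓ) ℓ) :
    HasDerivWithinAt (w t) (r t x) (Icc (-ℓ) ℓ) x :=
  hasDerivWithinAt_of_rem hα fun y hy => S.w_sp t ht x hx y hy

theorem LimitSol.v_lip_tm (S : LimitSol ℓ T α B G Hl Hr u0 v q w r) (hα : 0 < α) {t s x : ℝ}
    (ht : t ∈ Icc 0 T) (hs : s ∈ Icc 0 T) (hx : x ∈ Icc (-ℓ) ℓ) :
    |v t x - v s x| ≤ B * |t - s| :=
  (convex_Icc 0 T).norm_image_sub_le_of_norm_hasDerivWithin_le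
    (fun _ hz => S.dt_within hα hz hx) (fun z hz => S.q_bd z hz x hx) hs ht

theorem LimitSol.v_lip_sp (S : LimitSol ℓ T α B G Hl Hr u0 v q w r) {t x y : ℝ}
    (ht : t ∈ Icc 0 T) (hx : x ∈ Icc (-ℓ) ℓ) (hy : y ∈ Icc (-ℓ) ℓ) :
    |v t x - v t y| ≤ B * |x - y| :=
  (convex_Icc (-ℓ) ℓ).norm_image_sub_le_of_norm_hasDerivWithin_le
    (fun _ hz => S.dx_within ht hz) (fun z hz => S.w_bd t ht z hz) hy hx

/-- First interpolation step: `v_x` is `1/2`-Hölder in time. -/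
theorem LimitSol.w_half (S : LimitSol ℓ T α B G Hl Hr u0 v q w r) (hα : 0 < α) (hℓ : 0 < ℓ)
    (hT : 0 < T) {c : ℝ} (hc : 0 < c) (hcℓ : c * T ^ (1 / 2 : ℝ) ≤ ℓ) {t s x : ℝ}
    (ht : t ∈ Icc 0 T) (hs : s ∈ Icc 0 T) (hx : x ∈ Icc (-ℓ) ℓ) :
    |w t x - w s x| ≤ (2 * B * c + 2 * B / c) * |t - s| ^ (1 / 2 : ℝ) := by
  have hB := S.B_nonneg hℓ hT
  rcases eq_or_ne t s with rfl | hts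
  · simp
  set d := |t - s| with hd
  have hd0 : 0 < d := abs_pos.2 (sub_ne_zero.2 hts)
  have hdT : d ≤ T := by rw [hd, abs_le]; constructor <;> linarith [ht.1, ht.2, hs.1, hs.2]
  set ρ := c * d ^ (1 / 2 : ℝ) with hρ
  have hrp := Real.rpow_pos_of_pos hd0 (1 / 2 : ℝ)
  have hρ0 : 0 < ρ := by positivity
  have hρℓ : ρ ≤ ℓ := le_trans (mul_le_mul_of_nonneg_left
    (Real.rpow_le_rpow hd0.le hdT (by norm_num)) hc.le) hcℓ
  have hdd : d = d ^ (1 / 2 : ℝ) * d ^ (1 / 2 : ℝ) := by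
    rw [← Real.rpow_add hd0]; norm_num
  obtain ⟨y, hy, hyx⟩ := exists_mem_abs_sub_eq hx hρ0.le hρℓ
  have h1 := S.v_sp t ht x hx y hy
  have h2 := S.v_sp s hs x hx y hy
  rw [hyx] at h1 h2
  have h3 := S.v_lip_tm hα ht hs hx
  have h4 := S.v_lip_tm hα ht hs hy
  have h5 := slope_le (a := (v t y - v s y) - (v t x - v s x)) (σ := w t x - w s x)
    (e1 := 2 * B * ρ) (e2 := 2 * B / c * d ^ (1 / 2 : ℝ)) hρ0 hyx
    (by
      have : (v t y - v s y) - (v t x - v s x) - (y - x) * (w t x - w s x)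
        = (v t y - v t x - (y - x) * w t x) - (v s y - v s x - (y - x) * w s x) := by ring
      rw [this]
      exact (abs_sub _ _).trans (by linarith))
    (by
      refine (abs_sub _ _).trans ((add_le_add h4 h3).trans (le_of_eq ?_))
      rw [← hd, hρ]
      conv_lhs => rw [hdd]
      field_simp
      ring)
  refine h5.trans (le_of_eq ?_)
  rw [hρ]; ring

/-- By continuity the equation holds up to the end points. -/
theorem LimitSol.eq_closed (D : StarData lam Lam C G Hl Hr) (S : LimitSol ℓ T α B G Hl Hr u0 v q w r)
    (hα : 0 < α) (hℓ : 0 < ℓ) {t x : ℝ} (ht : t ∈ Icc 0 T) (hx : x ∈ Icc (-ℓ) ℓ) :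
    q t x = G t x (v t x) (w t x) (r t x) := by
  have hq := continuousOn_of_holder hα (S.q_sp t ht)
  have hr := continuousOn_of_holder hα (S.r_sp t ht)
  have hv : ContinuousOn (v t) (Icc (-ℓ) ℓ) := fun y hy => (S.dx_within ht hy).continuousWithinAt
  have hw : ContinuousOn (w t) (Icc (-ℓ) ℓ) :=
    fun y hy => (S.dxx_within hα ht hy).continuousWithinAt
  have hG : ContinuousOn (fun y => G t y (v t y) (w t y) (r t y)) (Icc (-ℓ) ℓ) := by
    intro y hy
    rw [ContinuousWithinAt, tendsto_iff_norm_sub_tendsto_zero]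
    have h0 : Tendsto (fun z => C * (|z - y| + |v t z - v t y| + |w t z - w t y|)
        + Lam * |r t z - r t y|) (𝓝[Icc (-ℓ) ℓ] y) (𝓝 0) := by
      have h1 : ContinuousWithinAt (fun z => C * (|z - y| + |v t z - v t y| + |w t z - w t y|)
        + Lam * |r t z - r t y|) (Icc (-ℓ) ℓ) y := by
        have := hv y hy
        have := hw y hy
        have := hr y hy
        have : ContinuousWithinAt (fun z : ℝ => z) (Icc (-ℓ) ℓ) y := continuousWithinAt_id
        fun_prop
      simpa using h1.tendsto
    refine squeeze_zero (fun _ => norm_nonneg _) (fun z => ?_) h0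
    have h1 := D.G_lip t t z y (v t z) (v t y) (w t z) (w t y) (r t z)
    have h2 := abs_sub_le_of_mono D.lam_pos.le D.lam_le
      (fun a b hab => D.G_mono t y (v t y) (w t y) a b hab) (r t z) (r t y)
    rw [sub_self, abs_zero, zero_add] at h1
    exact (abs_sub_le _ _ _).trans (add_le_add h1 h2)
  have hcl : closure (Ioo (-ℓ) ℓ) = Icc (-ℓ) ℓ := closure_Ioo (by linarith)
  exact Set.EqOn.of_subset_closure (s := Ioo (-ℓ) ℓ) (t := Icc (-ℓ) ℓ)
    (fun y hy => S.eq_int t ht y hy) hq hG Ioo_subset_Icc_self hcl.ge hx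

/-- Time regularity of `v_xx`, read off from the equation by inverting `G` in its last argument. -/
theorem LimitSol.r_half (D : StarData lam Lam C G Hl Hr) (S : LimitSol ℓ T α B G Hl Hr u0 v q w r)
    (hα : 0 < α) (hα1 : α < 1) (hℓ : 0 < ℓ) (hT : 0 < T) {K : ℝ} (hK : 0 ≤ K)
    (hw : ∀ t ∈ Icc 0 T, ∀ s ∈ Icc 0 T, ∀ x ∈ Icc (-ℓ) ℓ,
      |w t x - w s x| ≤ K * |t - s| ^ (1 / 2 : ℝ)) :
    ∃ K', 0 ≤ K' ∧ ∀ t ∈ Icc 0 T, ∀ s ∈ Icc 0 T, ∀ x ∈ Icc (-ℓ) ℓ,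
      |r t x - r s x| ≤ K' * |t - s| ^ (α / 2) := by
  have hB := S.B_nonneg hℓ hT
  have hC := D.C_nonneg
  have hl := D.lam_pos
  have e1 : 0 ≤ T ^ (1 - α / 2) := Real.rpow_nonneg hT.le _
  have e2 : 0 ≤ T ^ (1 / 2 - α / 2) := Real.rpow_nonneg hT.le _
  refine ⟨(B + C * (T ^ (1 - α / 2) + B * T ^ (1 - α / 2) + K * T ^ (1 / 2 - α / 2))) / lam,
    by positivity, fun t ht s hs x hx => ?_⟩
  set d := |t - s| with hd
  have hd0 : 0 ≤ d := abs_nonneg _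
  have hdT : d ≤ T := by rw [hd, abs_le]; constructor <;> linarith [ht.1, ht.2, hs.1, hs.2]
  have h1 : d ≤ T ^ (1 - α / 2) * d ^ (α / 2) :=
    le_rpow_of_le (half_pos hα) (by linarith) hd0 hdT
  have h2 : d ^ (1 / 2 : ℝ) ≤ T ^ (1 / 2 - α / 2) * d ^ (α / 2) := by
    have : d ^ (1 / 2 : ℝ) = d ^ (1 / 2 - α / 2) * d ^ (α / 2) := by
      rw [← Real.rpow_add_of_nonneg hd0 (by linarith) (by linarith)]; congr 1; ring
    rw [this]
    exact mul_le_mul_of_nonneg_right (Real.rpow_le_rpow hd0 hdT (by linarith))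
      (Real.rpow_nonneg hd0 _)
  have h3 := S.q_tm t ht s hs x hx
  have h4 := S.v_lip_tm hα ht hs hx
  have h5 := hw t ht s hs x hx
  have h6 := D.G_lip t s x x (v t x) (v s x) (w t x) (w s x) (r s x)
  have h7 : lam * |r t x - r s x| ≤ |G t x (v t x) (w t x) (r t x) - G t x (v t x) (w t x) (r s x)| := by
    rcases le_total (r s x) (r t x) with h | h
    · rw [abs_of_nonneg (sub_nonneg.2 h)]
      exact (D.G_mono t x (v t x) (w t x) _ _ h).1.trans (le_abs_self _)
    · rw [abs_sub_comm, abs_of_nonneg (sub_nonneg.2 h), abs_sub_comm]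
      exact (D.G_mono t x (v t x) (w t x) _ _ h).1.trans (le_abs_self _)
  have h8 : |G t x (v t x) (w t x) (r t x) - G t x (v t x) (w t x) (r s x)| ≤
      |q t x - q s x| + |G t x (v t x) (w t x) (r s x) - G s x (v s x) (w s x) (r s x)| := by
    rw [S.eq_closed D hα hℓ ht hx, S.eq_closed D hα hℓ hs hx]
    have : G t x (v t x) (w t x) (r t x) - G t x (v t x) (w t x) (r s x)
      = (G t x (v t x) (w t x) (r t x) - G s x (v s x) (w s x) (r s x))
        - (G t x (v t x) (w t x) (r s x) - G s x (v s x) (w s x) (r s x)) := by ring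
    rw [this]
    exact abs_sub _ _
  rw [sub_self, abs_zero, add_zero, ← hd] at h6
  rw [← hd] at h3 h4 h5
  rw [div_mul_eq_mul_div, le_div_iff₀ hl, mul_comm _ lam]
  refine h7.trans (h8.trans ((add_le_add h3 h6).trans ?_))
  rw [add_mul, mul_assoc C]
  refine add_le_add_right (mul_le_mul_of_nonneg_left ?_ hC) _
  nlinarith [mul_le_mul_of_nonneg_left h1 hB, mul_le_mul_of_nonneg_left h2 hK]

/-- Second interpolation step: `v_x` is `(1+α)/2`-Hölder in time. -/
theorem LimitSol.w_time (S : LimitSol ℓ T α B G Hl Hr u0 v q w r) (hα : 0 < α) (hα1 : α < 1)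
    (hℓ : 0 < ℓ) (hT : 0 < T) {K c : ℝ} (hK : 0 ≤ K) (hc : 0 < c)
    (hcℓ : c * T ^ (1 / 2 : ℝ) ≤ ℓ)
    (hr : ∀ t ∈ Icc 0 T, ∀ s ∈ Icc 0 T, ∀ x ∈ Icc (-ℓ) ℓ,
      |r t x - r s x| ≤ K * |t - s| ^ (α / 2)) {t s x : ℝ}
    (ht : t ∈ Icc 0 T) (hs : s ∈ Icc 0 T) (hx : x ∈ Icc (-ℓ) ℓ) :
    |w t x - w s x| ≤ (K * c + 2 * B * c * c ^ α + B * c ^ α / c) * |t - s| ^ ((1 + α) / 2) := by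
  have hB := S.B_nonneg hℓ hT
  rcases eq_or_ne t s with rfl | hts
  · simp [Real.zero_rpow (show (1 + α) / 2 ≠ 0 by positivity)]
  set d := |t - s| with hd
  have hd0 : 0 < d := abs_pos.2 (sub_ne_zero.2 hts)
  have hdT : d ≤ T := by rw [hd, abs_le]; constructor <;> linarith [ht.1, ht.2, hs.1, hs.2]
  set ρ := c * d ^ (1 / 2 : ℝ) with hρ
  have hrp := Real.rpow_pos_of_pos hd0 (1 / 2 : ℝ)
  have hrp2 := Real.rpow_pos_of_pos hd0 (α / 2 : ℝ)
  have hcp := Real.rpow_pos_of_pos hc α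
  have hρ0 : 0 < ρ := by positivity
  have hρℓ : ρ ≤ ℓ := le_trans (mul_le_mul_of_nonneg_left
    (Real.rpow_le_rpow hd0.le hdT (by norm_num)) hc.le) hcℓ
  have hdd : d = d ^ (1 / 2 : ℝ) * d ^ (1 / 2 : ℝ) := by
    rw [← Real.rpow_add hd0]; norm_num
  have hda : d ^ ((1 + α) / 2) = d ^ (1 / 2 : ℝ) * d ^ (α / 2) := by
    rw [← Real.rpow_add hd0]; congr 1; ring
  have hρα : ρ ^ α = c ^ α * d ^ (α / 2) := by
    rw [hρ, Real.mul_rpow hc.le hrp.le, ← Real.rpow_mul hd0.le]; congr 2; ring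
  obtain ⟨y, hy, hyx⟩ := exists_mem_abs_sub_eq hx hρ0.le hρℓ
  have hsub : uIcc x y ⊆ Icc (-ℓ) ℓ := (convex_Icc (-ℓ) ℓ).ordConnected.uIcc_subset hx hy
  have h1 : |(v t y - v s y) - (v t x - v s x) - (y - x) * (w t x - w s x)|
      ≤ ρ * (K * d ^ (α / 2) * ρ + 2 * B * ρ * ρ ^ α) := by
    have key := (convex_uIcc x y).norm_image_sub_le_of_norm_hasDerivWithin_le
      (f := fun z => (v t z - v s z) - (z - x) * (w t x - w s x))
      (f' := fun z => (w t z - w s z) - 1 * (w t x - w s x))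
      (C := K * d ^ (α / 2) * ρ + 2 * B * ρ * ρ ^ α) (x := x) (y := y)
      (fun z hz => (((S.dx_within ht (hsub hz)).sub (S.dx_within hs (hsub hz))).mono hsub).sub
        (((hasDerivAt_id z).sub_const x).mul_const _).hasDerivWithinAt)
      (fun z hz => by
        have hzx : |z - x| ≤ ρ := hyx ▸ abs_sub_le_of_mem_uIcc hz
        have a1 := S.w_sp t ht x hx z (hsub hz)
        have a2 := S.w_sp s hs x hx z (hsub hz)
        have a3 := hr t ht s hs x hx
        have a4 : |z - x| * (B * |z - x| ^ α) ≤ ρ * (B * ρ ^ α) := by gcongr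
        have e : (w t z - w s z) - 1 * (w t x - w s x)
          = (w t z - w t x - (z - x) * r t x) - (w s z - w s x - (z - x) * r s x)
            + (z - x) * (r t x - r s x) := by ring
        have a5 : |(z - x) * (r t x - r s x)| ≤ ρ * (K * d ^ (α / 2)) := by
          rw [abs_mul]; gcongr
        rw [e, Real.norm_eq_abs]
        refine (abs_add_le _ _).trans ((add_le_add (abs_sub _ _) a5).trans ?_)
        linarith)
      left_mem_uIcc right_mem_uIcc
    simp only [Real.norm_eq_abs, hyx, sub_self, zero_mul, sub_zero] at key
    rw [mul_comm ρ]
    refine le_trans (le_of_eq ?_) key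
    congr 1; ring
  have h2 : |(v t y - v s y) - (v t x - v s x)| ≤ ρ * (B * c ^ α / c * d ^ ((1 + α) / 2)) := by
    have key := (convex_Icc 0 T).norm_image_sub_le_of_norm_hasDerivWithin_le
      (f := fun z => v z y - v z x) (f' := fun z => q z y - q z x) (C := B * ρ ^ α)
      (fun z hz => (S.dt_within hα hz hy).sub (S.dt_within hα hz hx))
      (fun z hz => by
        have := S.q_sp z hz y hy x hx
        rwa [hyx] at this) hs ht
    simp only [Real.norm_eq_abs, ← hd] at key
    rw [hρα] at key
    have e1 : (v t y - v s y) - (v t x - v s x) = v t y - v t x - (v s y - v s x) := by ring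
    rw [e1]
    refine key.trans (le_of_eq ?_)
    rw [hda, hρ]
    nth_rewrite 2 [hdd]
    field_simp
  refine (slope_le hρ0 hyx h1 h2).trans (le_of_eq ?_)
  rw [hρα, hda, hρ]; ring

/-- The limit, extended beyond `[-ℓ,ℓ]` by integrating the clamped second derivative twice. -/
theorem smoothSol_of_limitSol (D : StarData lam Lam C G Hl Hr)
    (S : LimitSol ℓ T α B G Hl Hr u0 v q w r) (hα : 0 < α) (hα1 : α < 1) (hℓ : 0 < ℓ)
    (hT : 0 < T) : ∃ B' v' w', SmoothSol ℓ T α B' G Hl Hr u0 v' q w' r := by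
  have hB := S.B_nonneg hℓ hT
  have hll : -ℓ ≤ ℓ := by linarith
  have hTp := Real.rpow_pos_of_pos hT (1 / 2 : ℝ)
  set c := ℓ / T ^ (1 / 2 : ℝ) with hc
  have hc0 : 0 < c := by positivity
  have hcℓ : c * T ^ (1 / 2 : ℝ) ≤ ℓ := by rw [hc, div_mul_cancel₀ _ hTp.ne']
  obtain ⟨K, hK, hr⟩ := S.r_half D hα hα1 hℓ hT (K := 2 * B * c + 2 * B / c) (by positivity)
    fun t ht s hs x hx => S.w_half hα hℓ hT hc0 hcℓ ht hs hx
  have hw := fun t ht s hs x hx => S.w_time hα hα1 hℓ hT hK hc0 hcℓ hr (t := t) (s := s) (x := x)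
    ht hs hx
  set K2 := K * c + 2 * B * c * c ^ α + B * c ^ α / c with hK2
  have hcp := Real.rpow_pos_of_pos hc0 α
  have hK20 : 0 ≤ K2 := by positivity
  set e : ℝ → ℝ := fun x => (projIcc (-ℓ) ℓ hll x : ℝ) with he
  have hec : Continuous e := continuous_subtype_val.comp continuous_projIcc
  have hem : ∀ x, e x ∈ Icc (-ℓ) ℓ := fun x => (projIcc (-ℓ) ℓ hll x).2
  have hee : ∀ x ∈ Icc (-ℓ) ℓ, e x = x := fun x hx => by simp only [he]; rw [projIcc_of_mem hll hx]
  set W : ℝ → ℝ → ℝ := fun t x => w t (-ℓ) + ∫ s in (-ℓ)..x, r t (e s) with hW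
  set V : ℝ → ℝ → ℝ := fun t x => v t (-ℓ) + ∫ s in (-ℓ)..x, W t s with hV
  have hrc : ∀ t ∈ Icc 0 T, Continuous fun s => r t (e s) := fun t ht =>
    (continuousOn_of_holder hα (S.r_sp t ht)).comp_continuous hec hem
  have hWd : ∀ t ∈ Icc 0 T, ∀ x, HasDerivAt (W t) (r t (e x)) x := fun t ht x =>
    ((hrc t ht).integral_hasStrictDerivAt (-ℓ) x).hasDerivAt.const_add _
  have hWc : ∀ t ∈ Icc 0 T, Continuous (W t) := fun t ht =>
    continuous_iff_continuousAt.2 fun x => (hWd t ht x).continuousAt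
  have hVd : ∀ t ∈ Icc 0 T, ∀ x, HasDerivAt (V t) (W t x) x := fun t ht x =>
    ((hWc t ht).integral_hasStrictDerivAt (-ℓ) x).hasDerivAt.const_add _
  have hWw : ∀ t ∈ Icc 0 T, ∀ x ∈ Icc (-ℓ) ℓ, W t x = w t x := fun t ht =>
    eq_of_has_deriv_right_eq (f' := r t)
      (fun x hx => by
        have := (hWd t ht x).hasDerivWithinAt (s := Ici x)
        rwa [hee x (Ico_subset_Icc_self hx)] at this)
      (fun x hx => (S.dxx_within hα ht (Ico_subset_Icc_self hx)).mono_of_mem_nhdsWithin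
        (Icc_mem_nhdsGE_of_mem hx))
      (hWc t ht).continuousOn (fun x hx => (S.dxx_within hα ht hx).continuousWithinAt)
      (by simp [hW])
  have hVv : ∀ t ∈ Icc 0 T, ∀ x ∈ Icc (-ℓ) ℓ, V t x = v t x := fun t ht =>
    eq_of_has_deriv_right_eq (f' := w t)
      (fun x hx => by
        have := (hVd t ht x).hasDerivWithinAt (s := Ici x)
        rwa [hWw t ht x (Ico_subset_Icc_self hx)] at this)
      (fun x hx => (S.dx_within ht (Ico_subset_Icc_self hx)).mono_of_mem_nhdsWithin
        (Icc_mem_nhdsGE_of_mem hx))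
      (fun x _ => (hVd t ht x).continuousAt.continuousWithinAt)
      (fun x hx => (S.dx_within ht hx).continuousWithinAt)
      (by simp [hV])
  have hmin : -ℓ ∈ Icc (-ℓ) ℓ := ⟨le_rfl, hll⟩
  have hmax : ℓ ∈ Icc (-ℓ) ℓ := ⟨hll, le_rfl⟩
  have m1 : B ≤ max B (max K K2) := le_max_left _ _
  have m2 : K ≤ max B (max K K2) := (le_max_left _ _).trans (le_max_right _ _)
  have m3 : K2 ≤ max B (max K K2) := (le_max_right _ _).trans (le_max_right _ _)
  have up : ∀ {a b d k : ℝ}, 0 ≤ d → k ≤ max B (max K K2) → |a - b| ≤ k * d →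
      |a - b| ≤ max B (max K K2) * d := fun hd hk h => h.trans (mul_le_mul_of_nonneg_right hk hd)
  refine ⟨max B (max K K2), V, W, ?_⟩
  constructor
  · intro t ht x hx
    have h1 := (S.dt_within hα (Ioo_subset_Icc_self ht) hx).hasDerivAt (Icc_mem_nhds ht.1 ht.2)
    refine h1.congr_of_eventuallyEq ?_
    filter_upwards [Icc_mem_nhds ht.1 ht.2] with s hs using hVv s hs x hx
  · exact hVd
  · intro t ht x hx
    have := hWd t ht x
    rwa [hee x hx] at this
  · intro t ht x hx; rw [hVv t ht x hx]; exact (S.v_bd t ht x hx).trans m1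
  · intro t ht x hx; exact (S.q_bd t ht x hx).trans m1
  · intro t ht x hx; rw [hWw t ht x hx]; exact (S.w_bd t ht x hx).trans m1
  · intro t ht x hx; exact (S.r_bd t ht x hx).trans m1
  · intro t ht s hs x hx; rw [hVv t ht x hx, hVv s hs x hx]
    exact up (abs_nonneg _) m1 (S.v_lip_tm hα ht hs hx)
  · intro t ht x hx y hy; rw [hVv t ht x hx, hVv t ht y hy]
    exact up (abs_nonneg _) m1 (S.v_lip_sp ht hx hy)
  · intro t ht x hx y hy; exact up (by positivity) m1 (S.q_sp t ht x hx y hy)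
  · intro t ht x hx y hy; exact up (by positivity) m1 (S.r_sp t ht x hx y hy)
  · intro t ht x hx y hy; exact up (by positivity) m1 (S.q_tm t ht x hx y hy)
  · intro t ht x hx y hy; exact up (by positivity) m2 (hr t ht x hx y hy)
  · intro t ht s hs x hx; rw [hWw t ht x hx, hWw s hs x hx]
    exact up (by positivity) m3 (hw t ht s hs x hx)
  · intro t ht x hx
    rw [hVv t ht x (Ioo_subset_Icc_self hx), hWw t ht x (Ioo_subset_Icc_self hx)]
    exact S.eq_int t ht x hx
  · intro t ht; rw [hVv t ht _ hmin, hWw t ht _ hmin]; exact S.eq_l t ht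
  · intro t ht; rw [hVv t ht _ hmax, hWw t ht _ hmax]; exact S.eq_r t ht
  · intro x hx; rw [hVv 0 ⟨le_rfl, hT.le⟩ x hx]; exact S.init x hx

end

/-! ### Maximum principle and the doubling of variables -/

/-- A function on `[0,t₁] × K`, `K` compact, that starts nonpositive and has negative time
derivative at every positive spatial maximum stays nonpositive. -/
theorem nonpos_of_deriv_neg_at_max {X : Type*} [TopologicalSpace X] {K : Set X} (hK : IsCompact K)
    {t1 : ℝ} {F : ℝ → X → ℝ}
    (hF : ContinuousOn (fun p : ℝ × X => F p.1 p.2) (Icc 0 t1 ×ˢ K)) (h0 : ∀ z ∈ K, F 0 z ≤ 0)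
    (h : ∀ t ∈ Ioc 0 t1, ∀ z ∈ K, 0 < F t z → (∀ z' ∈ K, F t z' ≤ F t z) →
      ∃ d < 0, HasDerivAt (fun s => F s z) d t) :
    ∀ t ∈ Icc 0 t1, ∀ z ∈ K, F t z ≤ 0 := by
  intro t ht z hz
  by_contra! hpos
  obtain ⟨⟨s, y⟩, ⟨hs, hy⟩, hmax⟩ := (isCompact_Icc.prod hK).exists_isMaxOn ⟨(t, z), ht, hz⟩ hF
  have hmax' : ∀ s' ∈ Icc 0 t1, ∀ y' ∈ K, F s' y' ≤ F s y := fun s' hs' y' hy' =>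
    hmax (a := (s', y')) ⟨hs', hy'⟩
  have hsy : 0 < F s y := hpos.trans_le (hmax' t ht z hz)
  simp only at hs hy
  have hs0 : 0 < s := by
    rcases hs.1.eq_or_lt with h1 | h1
    · rw [← h1] at hsy; exact absurd (h0 y hy) (not_le.2 hsy)
    · exact h1
  obtain ⟨d, hd, hder⟩ := h s ⟨hs0, hs.2⟩ y hy hsy fun y' hy' => hmax' s hs y' hy'
  have h1 := (hasDerivAt_iff_tendsto_slope.1 hder).mono_left
    (nhdsWithin_mono s (fun x (hx : x ∈ Iio s) => ne_of_lt hx))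
  obtain ⟨x, hx1, hx2⟩ := ((h1.eventually (gt_mem_nhds hd)).and
    (Ioo_mem_nhdsLT hs0)).exists
  have h3 := hmax' x ⟨hx2.1.le, hx2.2.le.trans hs.2⟩ y hy
  rw [slope_def_field, div_neg_iff] at hx1
  rcases hx1 with h4 | h4 <;> linarith [hx2.2, h4.1, h4.2]

/-- Second-order necessary condition at a local maximum. -/
theorem snd_deriv_nonpos_of_isLocalMax {f f' : ℝ → ℝ} {x D : ℝ} (hmax : IsLocalMax f x)
    (hf : ∀ᶠ y in 𝓝 x, HasDerivAt f (f' y) y) (hf' : HasDerivAt f' D x) : D ≤ 0 := by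
  by_contra! hD
  have h0 : f' x = 0 := hmax.hasDerivAt_eq_zero hf.self_of_nhds
  have h1 := (hasDerivAt_iff_tendsto_slope.1 hf').mono_left
    (nhdsWithin_mono x (fun y (hy : y ∈ Ioi x) => ne_of_gt hy))
  have h2 : ∀ᶠ y in 𝓝[>] x, 0 < f' y := by
    filter_upwards [h1.eventually (lt_mem_nhds hD), self_mem_nhdsWithin] with y hy hxy
    rw [slope_def_field, h0, sub_zero, div_pos_iff] at hy
    have : x < y := hxy
    rcases hy with h4 | h4 <;> linarith [h4.1, h4.2]
  obtain ⟨u, hu, hu2⟩ := mem_nhdsGT_iff_exists_Ioo_subset.1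
    (h2.and ((hf.and hmax).filter_mono nhdsWithin_le_nhds))
  have hxu : x < u := hu
  have hsub : ∀ y ∈ Ioo x u, 0 < f' y ∧ HasDerivAt f (f' y) y ∧ f y ≤ f x := fun y hy => hu2 hy
  have hm : (x + u) / 2 ∈ Ioo x u := ⟨by linarith, by linarith⟩
  obtain ⟨ξ, hξ, hs⟩ := exists_hasDerivAt_eq_slope f f' hm.1
    (fun y hy => by
      rcases hy.1.eq_or_lt with h | h
      · rw [← h]; exact hf.self_of_nhds.continuousAt.continuousWithinAt
      · exact (hsub y ⟨h, hy.2.trans_lt hm.2⟩).2.1.continuousAt.continuousWithinAt)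
    (fun y hy => (hsub y ⟨hy.1, hy.2.trans hm.2⟩).2.1)
  have h3 := (hsub ξ ⟨hξ.1, hξ.2.trans hm.2⟩).1
  rw [hs, div_pos_iff] at h3
  have h4 := (hsub _ hm).2.2
  rcases h3 with h | h <;> linarith [h.1, h.2, hm.1]

theorem deriv_nonneg_of_max_left {f : ℝ → ℝ} {x c D : ℝ} (hc : c < x)
    (hf : HasDerivAt f D x) (hmax : ∀ y ∈ Ioo c x, f y ≤ f x) : 0 ≤ D := by
  by_contra! hd
  have h1 := (hasDerivAt_iff_tendsto_slope.1 hf).mono_left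
    (nhdsWithin_mono x (fun y (hx : y ∈ Iio x) => ne_of_lt hx))
  obtain ⟨y, hx1, hx2⟩ := ((h1.eventually (gt_mem_nhds hd)).and (Ioo_mem_nhdsLT hc)).exists
  have h3 := hmax y hx2
  rw [slope_def_field, div_neg_iff] at hx1
  rcases hx1 with h4 | h4 <;> linarith [hx2.2, h4.1, h4.2]

theorem deriv_nonpos_of_max_right {f : ℝ → ℝ} {x c D : ℝ} (hc : x < c)
    (hf : HasDerivAt f D x) (hmax : ∀ y ∈ Ioo x c, f y ≤ f x) : D ≤ 0 := by
  by_contra! hd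
  have h1 := (hasDerivAt_iff_tendsto_slope.1 hf).mono_left
    (nhdsWithin_mono x (fun y (hx : y ∈ Ioi x) => ne_of_gt hx))
  obtain ⟨y, hx1, hx2⟩ := ((h1.eventually (lt_mem_nhds hd)).and (Ioo_mem_nhdsGT hc)).exists
  have h3 := hmax y hx2
  rw [slope_def_field, div_pos_iff] at hx1
  rcases hx1 with h4 | h4 <;> linarith [hx2.1, h4.1, h4.2]

/-- A concave modulus `h` on `[0,s₀]` with `h'' = -ψ(h')`, slope `h' = h1 ∈ [q₀,q₁]` and final
value `m`. -/
structure Modulus (ψ : ℝ → ℝ) (q0 q1 s0 m : ℝ) (h h1 : ℝ → ℝ) : Prop where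
  s0_pos : 0 < s0
  zero : h 0 = 0
  final : h s0 = m
  cont : ContinuousOn h (Icc 0 s0)
  dh : ∀ r ∈ Ioo 0 s0, HasDerivAt h (h1 r) r
  dh1 : ∀ r ∈ Ioo 0 s0, HasDerivAt h1 (-ψ (h1 r)) r
  mem : ∀ r ∈ Ioo 0 s0, h1 r ∈ Icc q0 q1
  lower : ∀ r ∈ Icc 0 s0, q0 * r ≤ h r
  upper : ∀ r ∈ Icc 0 s0, h r ≤ q1 * r

/-- Doubling of variables: the modulus of continuity `h` is preserved by the evolution as soon
as `U_t` has a sign at points where `U_x = h'` and `|U_xx| ≥ -h''`, or at end points with steep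
slope. The maximum of `U(t,x) - U(t,y) - h(x-y) - εt` over `y ≤ x` is analysed. -/
theorem le_modulus {ψ : ℝ → ℝ} {q0 q1 s0 m : ℝ} {h h1 : ℝ → ℝ} (H : Modulus ψ q0 q1 s0 m h h1)
    {t1 c d : ℝ} {U Ut Ux Uxx : ℝ → ℝ → ℝ}
    (hU : ContinuousOn (fun p : ℝ × ℝ => U p.1 p.2) (Icc 0 t1 ×ˢ Icc c d))
    (hUt : ∀ t ∈ Ioc 0 t1, ∀ x ∈ Icc c d, HasDerivAt (fun s => U s x) (Ut t x) t)
    (hUx : ∀ t ∈ Ioc 0 t1, ∀ x ∈ Icc c d, HasDerivAt (U t) (Ux t x) x)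
    (hUxx : ∀ t ∈ Ioc 0 t1, ∀ x ∈ Ioo c d, HasDerivAt (Ux t) (Uxx t x) x)
    (hinit : ∀ x ∈ Icc c d, ∀ y ∈ Icc c d, y ≤ x → U 0 x - U 0 y ≤ q0 * (x - y))
    (hosc : ∀ t ∈ Ioc 0 t1, ∀ x ∈ Icc c d, ∀ y ∈ Icc c d, U t x - U t y ≤ m)
    (hsup : ∀ t ∈ Ioc 0 t1, ∀ x ∈ Ioo c d, q0 ≤ Ux t x → Ux t x ≤ q1 →
      Uxx t x ≤ -ψ (Ux t x) → Ut t x ≤ 0)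
    (hsub : ∀ t ∈ Ioc 0 t1, ∀ x ∈ Ioo c d, q0 ≤ Ux t x → Ux t x ≤ q1 →
      ψ (Ux t x) ≤ Uxx t x → 0 ≤ Ut t x)
    (hd : ∀ t ∈ Ioc 0 t1, q0 ≤ Ux t d → Ut t d ≤ 0)
    (hc : ∀ t ∈ Ioc 0 t1, q0 ≤ Ux t c → 0 ≤ Ut t c) :
    ∀ t ∈ Icc 0 t1, ∀ x ∈ Icc c d, ∀ y ∈ Icc c d, y ≤ x → x - y ≤ s0 →
      U t x - U t y ≤ h (x - y) := by
  intro t ht x hx y hy hyx hxy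
  set K : Set (ℝ × ℝ) := (Icc c d ×ˢ Icc c d) ∩ {z | z.1 - z.2 ∈ Icc 0 s0} with hKdef
  have hK : IsCompact K := (isCompact_Icc.prod isCompact_Icc).inter_right
    (isClosed_Icc.preimage (continuous_fst.sub continuous_snd))
  have main : ∀ ε > 0, U t x - U t y - h (x - y) - ε * t ≤ 0 := by
    intro ε hε
    refine nonpos_of_deriv_neg_at_max hK (t1 := t1)
      (F := fun t (z : ℝ × ℝ) => U t z.1 - U t z.2 - h (z.1 - z.2) - ε * t) ?_ ?_ ?_
      t ht (x, y) ⟨⟨hx, hy⟩, ⟨sub_nonneg.2 hyx, hxy⟩⟩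
    · have e1 : ContinuousOn (fun p : ℝ × ℝ × ℝ => U p.1 p.2.1) (Icc 0 t1 ×ˢ K) :=
        hU.comp (f := fun p : ℝ × ℝ × ℝ => (p.1, p.2.1)) (by fun_prop)
          fun p hp => ⟨hp.1, hp.2.1.1⟩
      have e2 : ContinuousOn (fun p : ℝ × ℝ × ℝ => U p.1 p.2.2) (Icc 0 t1 ×ˢ K) :=
        hU.comp (f := fun p : ℝ × ℝ × ℝ => (p.1, p.2.2)) (by fun_prop)
          fun p hp => ⟨hp.1, hp.2.1.2⟩
      have e3 : ContinuousOn (fun p : ℝ × ℝ × ℝ => h (p.2.1 - p.2.2)) (Icc 0 t1 ×ˢ K) :=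
        H.cont.comp (f := fun p : ℝ × ℝ × ℝ => p.2.1 - p.2.2) (by fun_prop) fun p hp => hp.2.2
      exact ((e1.sub e2).sub e3).sub (by fun_prop)
    · rintro ⟨x, y⟩ ⟨⟨hx, hy⟩, hr⟩
      have h1 := hinit x hx y hy (sub_nonneg.1 hr.1)
      have h2 := H.lower _ hr
      simp only at h2 ⊢
      linarith
    · rintro t ht ⟨x, y⟩ ⟨⟨hx, hy⟩, hr⟩ hpos hmax
      simp only at hpos hmax hx hy
      change x - y ∈ Icc 0 s0 at hr
      have het : 0 < ε * t := mul_pos hε ht.1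
      -- contact occurs neither on the diagonal nor, by the oscillation bound, at distance `s0`
      have hr0 : 0 < x - y := by
        rcases hr.1.eq_or_lt with h | h
        · rw [← h, H.zero, sub_eq_zero.1 h.symm] at hpos; linarith
        · exact h
      have hrs : x - y < s0 := by
        rcases hr.2.eq_or_lt with h | h
        · rw [h, H.final] at hpos; linarith [hosc t ht x hx y hy]
        · exact h
      have hrm : x - y ∈ Ioo 0 s0 := ⟨hr0, hrs⟩
      have hq := H.mem _ hrm
      have mx : ∀ x' ∈ Icc c d, x' - y ∈ Icc 0 s0 → U t x' - h (x' - y) ≤ U t x - h (x - y) := by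
        intro x' hx' hr'
        have := hmax (x', y) ⟨⟨hx', hy⟩, hr'⟩
        simp only at this
        linarith
      have my : ∀ y' ∈ Icc c d, x - y' ∈ Icc 0 s0 → -U t y' - h (x - y') ≤ -U t y - h (x - y) := by
        intro y' hy' hr'
        have := hmax (x, y') ⟨⟨hx, hy'⟩, hr'⟩
        simp only at this
        linarith
      have dx : HasDerivAt (fun x' => U t x' - h (x' - y)) (Ux t x - h1 (x - y)) x := by
        have := (H.dh _ hrm).comp_sub_const x y
        exact (hUx t ht x hx).sub this
      have dy : HasDerivAt (fun y' => -U t y' - h (x - y')) (-Ux t y + h1 (x - y)) y := by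
        have := (H.dh _ hrm).comp_const_sub x y
        simpa using (hUx t ht y hy).fun_neg.fun_sub this
      -- at an end point only the one-sided first-order condition is available; it suffices there
      have hx0 : Ut t x ≤ 0 := by
        rcases hx.2.eq_or_lt with hxd | hxd
        · have h2 := deriv_nonneg_of_max_left (c := y) (by linarith) dx fun x' hx' =>
            mx x' ⟨hy.1.trans hx'.1.le, hx'.2.le.trans hx.2⟩
              ⟨by linarith [hx'.1], by linarith [hx'.2]⟩
          rw [hxd] at h2 hq ⊢
          exact hd t ht (by linarith [hq.1])
        · have hcx : c < x := lt_of_le_of_lt hy.1 (by linarith)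
          have hnh : ∀ᶠ x' in 𝓝 x, x' ∈ Ioo c d ∧ x' - y ∈ Ioo 0 s0 := by
            filter_upwards [Ioo_mem_nhds hcx hxd,
              Ioo_mem_nhds (show y < x by linarith) (show x < y + s0 by linarith)] with z hz1 hz2
            exact ⟨hz1, ⟨by linarith [hz2.1], by linarith [hz2.2]⟩⟩
          have hlm : IsLocalMax (fun x' => U t x' - h (x' - y)) x := by
            filter_upwards [hnh] with x' hx'
            exact mx x' (Ioo_subset_Icc_self hx'.1) (Ioo_subset_Icc_self hx'.2)
          have h2 := hlm.hasDerivAt_eq_zero dx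
          have h3 : Uxx t x - (-ψ (h1 (x - y))) ≤ 0 := by
            refine snd_deriv_nonpos_of_isLocalMax (f' := fun x' => Ux t x' - h1 (x' - y)) hlm ?_ ?_
            · filter_upwards [hnh] with x' hx'
              exact (hUx t ht x' (Ioo_subset_Icc_self hx'.1)).sub
                ((H.dh _ hx'.2).comp_sub_const x' y)
            · exact (hUxx t ht x ⟨hcx, hxd⟩).sub ((H.dh1 _ hrm).comp_sub_const x y)
          have h4 : Ux t x = h1 (x - y) := by linarith
          rw [← h4] at h3 hq
          exact hsup t ht x ⟨hcx, hxd⟩ hq.1 hq.2 (by linarith)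
      have hy0 : 0 ≤ Ut t y := by
        rcases hy.1.eq_or_lt with hyc | hyc
        · have h2 := deriv_nonpos_of_max_right (c := x) (by linarith) dy fun y' hy' =>
            my y' ⟨hy.1.trans hy'.1.le, hy'.2.le.trans hx.2⟩
              ⟨by linarith [hy'.2], by linarith [hy'.1]⟩
          rw [← hyc] at h2 hq ⊢
          exact hc t ht (by linarith [hq.1])
        · have hyd : y < d := lt_of_lt_of_le (by linarith) hx.2
          have hnh : ∀ᶠ y' in 𝓝 y, y' ∈ Ioo c d ∧ x - y' ∈ Ioo 0 s0 := by
            filter_upwards [Ioo_mem_nhds hyc hyd,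
              Ioo_mem_nhds (show x - s0 < y by linarith) (show y < x by linarith)] with z hz1 hz2
            exact ⟨hz1, ⟨by linarith [hz2.2], by linarith [hz2.1]⟩⟩
          have hlm : IsLocalMax (fun y' => -U t y' - h (x - y')) y := by
            filter_upwards [hnh] with y' hy'
            exact my y' (Ioo_subset_Icc_self hy'.1) (Ioo_subset_Icc_self hy'.2)
          have h2 := hlm.hasDerivAt_eq_zero dy
          have h3 : -Uxx t y + -(-ψ (h1 (x - y))) ≤ 0 := by
            refine snd_deriv_nonpos_of_isLocalMax (f' := fun y' => -Ux t y' + h1 (x - y')) hlm ?_ ?_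
            · filter_upwards [hnh] with y' hy'
              have := (H.dh _ hy'.2).comp_const_sub x y'
              simpa using (hUx t ht y' (Ioo_subset_Icc_self hy'.1)).fun_neg.fun_sub this
            · exact (hUxx t ht y ⟨hyc, hyd⟩).neg.add ((H.dh1 _ hrm).comp_const_sub x y)
          have h4 : Ux t y = h1 (x - y) := by linarith
          rw [← h4] at h3 hq
          exact hsub t ht y ⟨hyc, hyd⟩ hq.1 hq.2 (by linarith)
      refine ⟨Ut t x - Ut t y - ε, by linarith, ?_⟩
      have h5 := ((hUt t ht x hx).sub (hUt t ht y hy)).sub_const (h (x - y))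
      exact h5.sub (by simpa using (hasDerivAt_id t).const_mul ε)
  have hlim : Tendsto (fun ε : ℝ => U t x - U t y - h (x - y) - ε * t) (𝓝[>] 0)
      (𝓝 (U t x - U t y - h (x - y) - 0 * t)) := by
    apply Tendsto.mono_left _ nhdsWithin_le_nhds
    apply Continuous.tendsto
    fun_prop
  have := le_of_tendsto hlim (by filter_upwards [self_mem_nhdsWithin] with ε hε using main ε hε)
  linarith

/-- Consequence of the modulus bound for the slope. -/
theorem slope_le_of_le_modulus {ψ : ℝ → ℝ} {q0 q1 s0 m : ℝ} {h h1 : ℝ → ℝ}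
    (H : Modulus ψ q0 q1 s0 m h h1) {c d D x : ℝ} {U : ℝ → ℝ} (hcd : c < d) (hx : x ∈ Icc c d)
    (hU : ∀ x ∈ Icc c d, ∀ y ∈ Icc c d, y ≤ x → x - y ≤ s0 → U x - U y ≤ h (x - y))
    (hD : HasDerivAt U D x) : D ≤ q1 := by
  have hs := H.s0_pos
  have hD' : HasDerivAt (fun y => U y - q1 * y) (D - q1) x := by
    simpa using hD.fun_sub ((hasDerivAt_id x).const_mul q1)
  rcases hx.2.eq_or_lt with hxd | hxd
  · have hDn : HasDerivAt (fun y => -(U y - q1 * y)) (-(D - q1)) x := hD'.neg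
    have := deriv_nonneg_of_max_left (c := max c (x - s0)) (max_lt (by linarith) (by linarith)) hDn
      fun y hy => by
      have h1 := max_lt_iff.1 hy.1
      have h2 := hU x hx y ⟨h1.1.le, hy.2.le.trans hx.2⟩ hy.2.le (by linarith)
      have h3 := H.upper (x - y) ⟨by linarith [hy.2], by linarith⟩
      linarith
    linarith
  · have := deriv_nonpos_of_max_right (c := min d (x + s0)) (lt_min hxd (by linarith)) hD'
      fun y hy => by
      have h1 := lt_min_iff.1 hy.2
      have h2 := hU y ⟨hx.1.trans hy.1.le, h1.1.le⟩ x hx hy.1.le (by linarith)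
      have h3 := H.upper (y - x) ⟨by linarith [hy.1], by linarith⟩
      linarith
    linarith

/-- The Bernstein-Nagumo modulus, obtained by inverting `p ↦ ∫ 1/ψ`. -/
theorem exists_modulus {ψ : ℝ → ℝ} {q0 q1 : ℝ} (hq : q0 < q1) (hψ : ContinuousOn ψ (Icc q0 q1))
    (hψ1 : ∀ p ∈ Icc q0 q1, 1 ≤ ψ p) :
    ∃ s0 h h1, Modulus ψ q0 q1 s0 (∫ ρ in q0..q1, ρ / ψ ρ) h h1 := by
  set e : ℝ → ℝ := fun x => (projIcc q0 q1 hq.le x : ℝ) with he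
  have hec : Continuous e := continuous_subtype_val.comp continuous_projIcc
  have hem : ∀ x, e x ∈ Icc q0 q1 := fun x => (projIcc q0 q1 hq.le x).2
  have hee : ∀ x ∈ Icc q0 q1, e x = x := fun x hx => by
    simp only [he]; rw [projIcc_of_mem hq.le hx]
  set φ : ℝ → ℝ := fun x => ψ (e x) with hφ
  have hφc : Continuous φ := hψ.comp_continuous hec hem
  have hφ1 : ∀ x, 1 ≤ φ x := fun x => hψ1 _ (hem x)
  have hφ0 : ∀ x, 0 < φ x := fun x => zero_lt_one.trans_le (hφ1 x)
  have hic : Continuous fun x => (φ x)⁻¹ := hφc.inv₀ fun x => (hφ0 x).ne'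
  obtain ⟨b, hb⟩ := (isCompact_Icc.image_of_continuousOn hψ).bddAbove
  have hφb : ∀ x, φ x ≤ b := fun x => hb ⟨e x, hem x, rfl⟩
  have hb0 : 0 < b := (hφ0 0).trans_le (hφb 0)
  -- `h1` runs backwards along the inverse of `E`, so that `h1 0 = q1` and `h1 s0 = q0`
  set E : ℝ → ℝ := fun p => ∫ x in q0..p, (φ x)⁻¹ with hE
  have hEd : ∀ p, HasDerivAt E (φ p)⁻¹ p := fun p =>
    (hic.integral_hasStrictDerivAt q0 p).hasDerivAt
  have hEm : StrictMono E := strictMono_of_hasDerivAt_pos hEd fun p => inv_pos.2 (hφ0 p)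
  have hEc : Continuous E := continuous_iff_continuousAt.2 fun p => (hEd p).continuousAt
  have hmono : Monotone fun p => E p - b⁻¹ * p := by
    refine monotone_of_hasDerivAt_nonneg (f' := fun p => (φ p)⁻¹ - b⁻¹) (fun p => ?_) fun p => ?_
    · simpa using (hEd p).fun_sub ((hasDerivAt_id p).const_mul b⁻¹)
    · exact sub_nonneg.2 (inv_anti₀ (hφ0 p) (hφb p))
  have hE0 : E q0 = 0 := by simp [hE]
  have hbi : 0 < b⁻¹ := inv_pos.2 hb0
  have hsurj : Function.Surjective E := by
    refine hEc.surjective ?_ ?_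
    · refine tendsto_atTop_mono' _ (f₁ := fun p => b⁻¹ * p + -(b⁻¹ * q0)) ?_
        (tendsto_atTop_add_const_right _ _ (tendsto_id.const_mul_atTop hbi))
      filter_upwards [eventually_ge_atTop q0] with p hp
      have h2 := hmono hp
      simp only [hE0] at h2
      linarith
    · refine tendsto_atBot_mono' _ (f₁ := fun p => b⁻¹ * p + -(b⁻¹ * q0)) ?_
        (tendsto_atBot_add_const_right _ _ (tendsto_id.const_mul_atBot hbi))
      filter_upwards [eventually_le_atBot q0] with p hp
      have h2 := hmono hp
      simp only [hE0] at h2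
      linarith
  set P := hEm.orderIsoOfSurjective E hsurj with hP
  have hPE : ∀ p, P.symm (E p) = p := fun p => P.symm_apply_apply p
  have hEP : ∀ r, E (P.symm r) = r := fun r => P.apply_symm_apply r
  have hPd : ∀ r, HasDerivAt P.symm (φ (P.symm r)) r := fun r => by
    have := HasDerivAt.of_local_left_inverse (f := E) (g := P.symm) (a := r)
      P.symm.continuous.continuousAt (hEd _) (inv_pos.2 (hφ0 _)).ne'
      (Eventually.of_forall hEP)
    rwa [inv_inv] at this
  set s0 := E q1 with hs0
  have hs0p : 0 < s0 := by rw [← hE0]; exact hEm hq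
  set h1 : ℝ → ℝ := fun r => P.symm (s0 - r) with hh1
  have hmem : ∀ r ∈ Icc 0 s0, h1 r ∈ Icc q0 q1 := fun r hr => by
    constructor
    · rw [← hPE q0, hE0]; exact P.symm.monotone (by linarith [hr.2])
    · rw [← hPE q1]; exact P.symm.monotone (by linarith [hr.1])
  have hh1d : ∀ r, HasDerivAt h1 (-φ (h1 r)) r := fun r => (hPd (s0 - r)).comp_const_sub s0 r
  have hic2 : Continuous fun x => x / φ x := continuous_id.div hφc fun x => (hφ0 x).ne'
  set h : ℝ → ℝ := fun r => -∫ ρ in q1..(h1 r), ρ / φ ρ with hh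
  have hhd : ∀ r, HasDerivAt h (h1 r) r := fun r => by
    have h2 := ((hic2.integral_hasStrictDerivAt q1 (h1 r)).hasDerivAt.comp r (hh1d r)).neg
    refine h2.congr_deriv ?_
    have := (hφ0 (h1 r)).ne'
    field_simp
  have hh0 : h 0 = 0 := by
    have : h1 0 = q1 := by simp only [hh1, sub_zero]; exact hPE q1
    simp [hh, this]
  have hhs : h s0 = ∫ ρ in q0..q1, ρ / ψ ρ := by
    have h2 : h1 s0 = q0 := by simp only [hh1, sub_self]; rw [← hE0]; exact hPE q0
    simp only [hh, h2]
    rw [intervalIntegral.integral_symm, neg_neg]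
    refine intervalIntegral.integral_congr fun x hx => ?_
    rw [uIcc_of_le hq.le] at hx
    simp only [hφ, hee x hx]
  have hhc : Continuous h := continuous_iff_continuousAt.2 fun r => (hhd r).continuousAt
  refine ⟨s0, h, h1, hs0p, hh0, hhs, hhc.continuousOn, fun r _ => hhd r, fun r hr => ?_,
    fun r hr => hmem r (Ioo_subset_Icc_self hr), fun r hr => ?_, fun r hr => ?_⟩
  · have := hh1d r
    simp only [hφ] at this
    rwa [hee _ (hmem r (Ioo_subset_Icc_self hr))] at this
  · have h2 := (convex_Icc 0 s0).mul_sub_le_image_sub_of_le_deriv (f := h) (C := q0)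
      hhc.continuousOn (fun r _ => (hhd r).differentiableAt.differentiableWithinAt)
      (fun r hr => by
        rw [interior_Icc] at hr
        rw [(hhd r).deriv]; exact (hmem r (Ioo_subset_Icc_self hr)).1)
      0 ⟨le_rfl, hs0p.le⟩ r hr hr.1
    rwa [hh0, sub_zero, sub_zero] at h2
  · have h2 := (convex_Icc 0 s0).image_sub_le_mul_sub_of_deriv_le (f := h) (C := q1)
      hhc.continuousOn (fun r _ => (hhd r).differentiableAt.differentiableWithinAt)
      (fun r hr => by
        rw [interior_Icc] at hr
        rw [(hhd r).deriv]; exact (hmem r (Ioo_subset_Icc_self hr)).2)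
      0 ⟨le_rfl, hs0p.le⟩ r hr hr.1
    rwa [hh0, sub_zero, sub_zero] at h2

/-! ### A priori bounds and uniqueness -/

/-- Two-sided version of the modulus estimate, obtained by applying `le_modulus` to `U` and
`-U`. -/
theorem abs_slope_le {ψ : ℝ → ℝ} {q0 q1 s0 m : ℝ} {h h1 : ℝ → ℝ} (H : Modulus ψ q0 q1 s0 m h h1)
    {t1 c d : ℝ} (hcd : c < d) {U Ut Ux Uxx : ℝ → ℝ → ℝ}
    (hU : ContinuousOn (fun p : ℝ × ℝ => U p.1 p.2) (Icc 0 t1 ×ˢ Icc c d))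
    (hUt : ∀ t ∈ Ioc 0 t1, ∀ x ∈ Icc c d, HasDerivAt (fun s => U s x) (Ut t x) t)
    (hUx : ∀ t ∈ Ioc 0 t1, ∀ x ∈ Icc c d, HasDerivAt (U t) (Ux t x) x)
    (hUxx : ∀ t ∈ Ioc 0 t1, ∀ x ∈ Ioo c d, HasDerivAt (Ux t) (Uxx t x) x)
    (hinit : ∀ x ∈ Icc c d, ∀ y ∈ Icc c d, |U 0 x - U 0 y| ≤ q0 * |x - y|)
    (hosc : ∀ t ∈ Ioc 0 t1, ∀ x ∈ Icc c d, ∀ y ∈ Icc c d, |U t x - U t y| ≤ m)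
    (hint : ∀ σ s : ℝ, (σ = 1 ∨ σ = -1) → (s = 1 ∨ s = -1) → ∀ t ∈ Ioc 0 t1, ∀ x ∈ Ioo c d,
      q0 ≤ σ * Ux t x → σ * Ux t x ≤ q1 → ψ (σ * Ux t x) ≤ s * Uxx t x → 0 ≤ s * Ut t x)
    (hd : ∀ σ : ℝ, (σ = 1 ∨ σ = -1) → ∀ t ∈ Ioc 0 t1, q0 ≤ σ * Ux t d → σ * Ut t d ≤ 0)
    (hc : ∀ σ : ℝ, (σ = 1 ∨ σ = -1) → ∀ t ∈ Ioc 0 t1, q0 ≤ σ * Ux t c → 0 ≤ σ * Ut t c) :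
    ∀ t ∈ Ioc 0 t1, ∀ x ∈ Icc c d, |Ux t x| ≤ q1 := by
  intro t ht x hx
  have key : ∀ σ : ℝ, (σ = 1 ∨ σ = -1) → σ * Ux t x ≤ q1 := by
    intro σ hσ
    have hσ1 : |σ| = 1 := by rcases hσ with rfl | rfl <;> simp
    have hσn : -σ = 1 ∨ -σ = -1 := by rcases hσ with rfl | rfl <;> simp
    refine slope_le_of_le_modulus H hcd hx (U := fun y => σ * U t y) ?_
      ((hUx t ht x hx).const_mul σ)
    refine le_modulus H (U := fun t x => σ * U t x) (Ut := fun t x => σ * Ut t x)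
      (Ux := fun t x => σ * Ux t x) (Uxx := fun t x => σ * Uxx t x) (continuousOn_const.mul hU)
      (fun t ht x hx => (hUt t ht x hx).const_mul σ)
      (fun t ht x hx => (hUx t ht x hx).const_mul σ)
      (fun t ht x hx => (hUxx t ht x hx).const_mul σ) ?_ ?_ ?_ ?_
      (fun t ht h => hd σ hσ t ht h) (fun t ht h => hc σ hσ t ht h) t (Ioc_subset_Icc_self ht)
    · intro x hx y hy hyx
      rw [← mul_sub]
      refine (le_abs_self _).trans ?_
      rw [abs_mul, hσ1, one_mul]
      have := hinit x hx y hy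
      rwa [abs_of_nonneg (sub_nonneg.2 hyx)] at this
    · intro t ht x hx y hy
      rw [← mul_sub]
      refine (le_abs_self _).trans ?_
      rw [abs_mul, hσ1, one_mul]
      exact hosc t ht x hx y hy
    · intro t ht x hx h1 h2 h3
      have := hint σ (-σ) hσ hσn t ht x hx h1 h2 (by linarith)
      linarith
    · intro t ht x hx h1 h2 h3
      exact hint σ σ hσ hσ t ht x hx h1 h2 h3
  have k1 := key 1 (Or.inl rfl)
  have k2 := key (-1) (Or.inr rfl)
  exact abs_le.2 ⟨by linarith, by linarith⟩

set_option maxHeartbeats 1000000 in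
/-- Bound for `u_xx`, depending only on the data: the difference quotient
`(u(t,x+k) - u(t,x))/k` solves an equation with quadratic growth in its slope, so the modulus
estimate with `ψ(ρ) = Dρ²` applies. The Hölder constant `A` of `u_xx` enters only through the
smallness of `k`. -/
theorem exists_snd_deriv_bound {ℓ M L1 lam C1 F S : ℝ} (hℓ : 0 < ℓ) (hL1 : 0 ≤ L1)
    (hlam : 0 < lam) (hC1 : 0 ≤ C1) (hF : 0 ≤ F) :
    ∃ L2 : ℝ, ∀ (a f : ℝ → ℝ → ℝ → ℝ → ℝ) (u ut ux uxx : ℝ → ℝ → ℝ) (t1 A α : ℝ), 0 < α → 0 ≤ A →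
      (∀ t ∈ Ioc 0 t1, ∀ x ∈ Icc (-ℓ) ℓ, ∀ x' ∈ Icc (-ℓ) ℓ, ∀ z ∈ Icc (-M) M, ∀ z' ∈ Icc (-M) M,
        ∀ p ∈ Icc (-L1) L1, ∀ p' ∈ Icc (-L1) L1,
        |a t x z p - a t x' z' p'| ≤ C1 * (|x - x'| + |z - z'| + |p - p'|) ∧
        |f t x z p - f t x' z' p'| ≤ C1 * (|x - x'| + |z - z'| + |p - p'|) ∧
        lam ≤ a t x z p ∧ |f t x z p| ≤ F) →
      ContinuousOn (fun p : ℝ × ℝ => u p.1 p.2) (Icc 0 t1 ×ˢ Icc (-ℓ) ℓ) →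
      (∀ t ∈ Ioc 0 t1, ∀ x ∈ Icc (-ℓ) ℓ, HasDerivAt (fun s => u s x) (ut t x) t ∧
        HasDerivAt (u t) (ux t x) x ∧ HasDerivAt (ux t) (uxx t x) x ∧
        |u t x| ≤ M ∧ |ux t x| ≤ L1) →
      (∀ t ∈ Ioc 0 t1, ∀ x ∈ Ioo (-ℓ) ℓ,
        ut t x = a t x (u t x) (ux t x) * uxx t x + f t x (u t x) (ux t x)) →
      (∀ t ∈ Ioc 0 t1, |ut t ℓ| ≤ F ∧ |ut t (-ℓ)| ≤ F) →
      (∀ t ∈ Ioc 0 t1, ∀ x ∈ Ioo (-ℓ) ℓ, ∀ y ∈ Ioo (-ℓ) ℓ,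
        |uxx t x - uxx t y| ≤ A * |x - y| ^ α) →
      (∀ k > 0, ∀ x y, x ∈ Icc (-ℓ) (ℓ - k) → y ∈ Icc (-ℓ) (ℓ - k) →
        |(u 0 (x + k) - u 0 x) - (u 0 (y + k) - u 0 y)| ≤ k * (S * |x - y|)) →
      ∀ t ∈ Ioc 0 t1, ∀ x ∈ Ioo (-ℓ) ℓ, |uxx t x| ≤ L2 := by
  set D : ℝ := 1 + C1 * (3 * (2 + L1)) / lam with hD
  have hD1 : 1 ≤ D := by rw [hD]; have : 0 ≤ C1 * (3 * (2 + L1)) / lam := by positivity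
                         linarith
  set q0 : ℝ := max 1 (max S (1 + 2 * F / lam)) with hq0
  have hq1 : 1 ≤ q0 := le_max_left _ _
  have hqS : S ≤ q0 := (le_max_left _ _).trans (le_max_right _ _)
  have hqF : 1 + 2 * F / lam ≤ q0 := (le_max_right _ _).trans (le_max_right _ _)
  have hqF' : 2 * F ≤ lam * (q0 - 1) := by
    have : 2 * F / lam ≤ q0 - 1 := by linarith
    rw [div_le_iff₀ hlam] at this
    linarith
  have hq00 : 0 < q0 := by linarith
  -- chosen so that `∫ ρ / (D ρ²)` over `[q0, q1]` exceeds the oscillation `2 L1` of the quotient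
  set q1 : ℝ := q0 * Real.exp (D * (2 * L1 + 1)) with hq1d
  have hexp : 1 < Real.exp (D * (2 * L1 + 1)) := Real.one_lt_exp_iff.2 (by positivity)
  have hqq : q0 < q1 := by rw [hq1d]; exact lt_mul_of_one_lt_right hq00 hexp
  obtain ⟨s0, h, h1, H⟩ := exists_modulus (ψ := fun ρ => D * ρ ^ 2) hqq (by fun_prop)
    (fun p hp => by nlinarith [hp.1, mul_self_nonneg (p - 1)])
  have hm : ∫ ρ in q0..q1, ρ / (D * ρ ^ 2) = 2 * L1 + 1 := by
    have e1 : ∫ ρ in q0..q1, ρ / (D * ρ ^ 2) = ∫ ρ in q0..q1, D⁻¹ * (1 / ρ) := by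
      refine intervalIntegral.integral_congr fun ρ hρ => ?_
      rw [uIcc_of_le hqq.le] at hρ
      have : ρ ≠ 0 := (hq00.trans_le hρ.1).ne'
      field_simp
    rw [e1, intervalIntegral.integral_const_mul, integral_one_div_of_pos hq00 (hq00.trans hqq),
      hq1d, mul_div_cancel_left₀ _ hq00.ne', Real.log_exp]
    field_simp
  rw [hm] at H
  refine ⟨q1 + 1, ?_⟩
  intro a f u ut ux uxx t1 A α hα hA hdata hcont hder heq hbd hhol hinit t ht x hx
  -- a step `k` small enough that `x + k < ℓ` and the Hölder remainder `A k^α` is at most one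
  obtain ⟨k, hk0, hkx, hkA⟩ : ∃ k > 0, x < ℓ - k ∧ A * k ^ α ≤ 1 := by
    have h2 : Tendsto (fun k : ℝ => A * k ^ α) (𝓝[>] 0) (𝓝 (A * 0 ^ α)) :=
      ((Real.continuousAt_rpow_const 0 α (Or.inr hα.le)).tendsto.const_mul A).mono_left
        nhdsWithin_le_nhds
    rw [Real.zero_rpow hα.ne', mul_zero] at h2
    obtain ⟨k, hk1, hk2⟩ := ((h2.eventually (gt_mem_nhds one_pos)).and
      (Ioo_mem_nhdsGT (show 0 < ℓ - x by linarith [hx.2]))).exists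
    exact ⟨k, hk2.1, by linarith [hk2.2], hk1.le⟩
  have hcd : -ℓ < ℓ - k := hx.1.trans hkx
  have hkm : ∀ y ∈ Icc (-ℓ) (ℓ - k), y ∈ Icc (-ℓ) ℓ ∧ y + k ∈ Icc (-ℓ) ℓ := fun y hy =>
    ⟨⟨hy.1, by linarith [hy.2]⟩, ⟨by linarith [hy.1], by linarith [hy.2]⟩⟩
  have hclose : ∀ t ∈ Ioc 0 t1, ∀ y ∈ Icc (-ℓ) (ℓ - k), ∀ y' ∈ Ioo (-ℓ) ℓ, y ≤ y' → y' ≤ y + k →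
      |(ux t (y + k) - ux t y) / k - uxx t y'| ≤ 1 := by
    intro t ht y hy y' hy' h1 h2
    obtain ⟨ξ, hξ, hs⟩ := exists_hasDerivAt_eq_slope (ux t) (uxx t) (show y < y + k by linarith)
      (fun z hz => (hder t ht z ⟨hy.1.trans hz.1,
        hz.2.trans (hkm y hy).2.2⟩).2.2.1.continuousAt.continuousWithinAt)
      (fun z hz => (hder t ht z ⟨hy.1.trans hz.1.le, hz.2.le.trans (hkm y hy).2.2⟩).2.2.1)
    rw [add_sub_cancel_left] at hs
    rw [← hs]
    have h3 : |ξ - y'| ≤ k := abs_le.2 ⟨by linarith [hξ.1], by linarith [hξ.2]⟩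
    refine (hhol t ht ξ ⟨hy.1.trans_lt hξ.1, hξ.2.trans_le (hkm y hy).2.2⟩ y' hy').trans
      (le_trans ?_ hkA)
    exact mul_le_mul_of_nonneg_left (Real.rpow_le_rpow (abs_nonneg _) h3 hα.le) hA
  have main := abs_slope_le H hcd (t1 := t1)
    (U := fun t y => (u t (y + k) - u t y) / k) (Ut := fun t y => (ut t (y + k) - ut t y) / k)
    (Ux := fun t y => (ux t (y + k) - ux t y) / k)
    (Uxx := fun t y => (uxx t (y + k) - uxx t y) / k)
    (by
      refine ContinuousOn.div_const (ContinuousOn.sub ?_ ?_) k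
      · exact hcont.comp (f := fun p : ℝ × ℝ => (p.1, p.2 + k)) (by fun_prop)
          fun p hp => ⟨hp.1, (hkm _ hp.2).2⟩
      · exact hcont.mono (prod_mono le_rfl fun y hy => (hkm y hy).1))
    (fun t ht y hy => ((hder t ht _ (hkm y hy).2).1.fun_sub (hder t ht _ (hkm y hy).1).1).div_const k)
    (fun t ht y hy => (((hder t ht _ (hkm y hy).2).2.1.comp_add_const y k).fun_sub
      (hder t ht _ (hkm y hy).1).2.1).div_const k)
    (fun t ht y hy => (((hder t ht _ (hkm y (Ioo_subset_Icc_self hy)).2).2.2.1.comp_add_const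
      y k).fun_sub (hder t ht _ (hkm y (Ioo_subset_Icc_self hy)).1).2.2.1).div_const k)
    (by
      intro y hy z hz
      rw [← sub_div, abs_div, abs_of_pos hk0, div_le_iff₀ hk0, mul_comm _ k]
      refine (hinit k hk0 y z hy hz).trans (mul_le_mul_of_nonneg_left ?_ hk0.le)
      exact mul_le_mul_of_nonneg_right hqS (abs_nonneg _))
    (by
      intro t ht y hy z hz
      have hq : ∀ y ∈ Icc (-ℓ) (ℓ - k), |(u t (y + k) - u t y) / k| ≤ L1 := by
        intro y hy
        have := (convex_Icc (-ℓ) ℓ).norm_image_sub_le_of_norm_hasDerivWithin_le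
          (fun z hz => (hder t ht z hz).2.1.hasDerivWithinAt)
          (fun z hz => (hder t ht z hz).2.2.2.2) (hkm y hy).1 (hkm y hy).2
        rw [add_sub_cancel_left, Real.norm_eq_abs, Real.norm_eq_abs, abs_of_pos hk0] at this
        rw [abs_div, abs_of_pos hk0, div_le_iff₀ hk0]
        exact this
      have := (abs_sub _ _).trans (add_le_add (hq y hy) (hq z hz))
      linarith)
    ?_ ?_ ?_ t ht x ⟨hx.1.le, hkx.le⟩
  · have h2 := hclose t ht x ⟨hx.1.le, hkx.le⟩ x hx le_rfl (by linarith)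
    have h3 : |uxx t x| ≤ |(ux t (x + k) - ux t x) / k| +
        |(ux t (x + k) - ux t x) / k - uxx t x| := by
      have := abs_sub ((ux t (x + k) - ux t x) / k) ((ux t (x + k) - ux t x) / k - uxx t x)
      rwa [sub_sub_cancel] at this
    linarith
  · intro σ s hσ hs t ht y hy h1 h2 h3
    have hyI := Ioo_subset_Icc_self hy
    have hy1 : y ∈ Ioo (-ℓ) ℓ := ⟨hy.1, by linarith [hy.2]⟩
    have hy2 : y + k ∈ Ioo (-ℓ) ℓ := ⟨by linarith [hy.1], by linarith [hy.2]⟩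
    have hs1 : |s| = 1 := by rcases hs with rfl | rfl <;> simp
    have hσ1 : |σ| = 1 := by rcases hσ with rfl | rfl <;> simp
    set X := (ux t (y + k) - ux t y) / k with hX
    set ρ := σ * X with hρ
    have hρ0 : 1 ≤ ρ := hq1.trans h1
    have hXρ : |X| = ρ := by
      have : |ρ| = |X| := by rw [hρ, abs_mul, hσ1, one_mul]
      rw [← this, abs_of_nonneg (by linarith)]
    have hu2 : |uxx t y| ≤ ρ + 1 := by
      have h4 := hclose t ht y hyI y hy1 le_rfl (by linarith)
      have := abs_sub X (X - uxx t y)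
      rw [sub_sub_cancel] at this
      linarith
    obtain ⟨-, dux, -, b1, b2⟩ := hder t ht y (hkm y hyI).1
    obtain ⟨-, -, -, b3, b4⟩ := hder t ht (y + k) (hkm y hyI).2
    obtain ⟨c1, c2, c3, -⟩ := hdata t ht (y + k) (hkm y hyI).2 y (hkm y hyI).1
      (u t (y + k)) (abs_le.1 b3) (u t y) (abs_le.1 b1) (ux t (y + k)) (abs_le.1 b4)
      (ux t y) (abs_le.1 b2)
    have hul : |u t (y + k) - u t y| ≤ k * L1 := by
      have := (convex_Icc (-ℓ) ℓ).norm_image_sub_le_of_norm_hasDerivWithin_le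
        (fun z hz => (hder t ht z hz).2.1.hasDerivWithinAt)
        (fun z hz => (hder t ht z hz).2.2.2.2) (hkm y hyI).1 (hkm y hyI).2
      rw [add_sub_cancel_left, Real.norm_eq_abs, Real.norm_eq_abs, abs_of_pos hk0] at this
      linarith
    have hpl : |ux t (y + k) - ux t y| = k * ρ := by
      rw [← hXρ, hX, abs_div, abs_of_pos hk0]; field_simp
    have hsum : |y + k - y| + |u t (y + k) - u t y| + |ux t (y + k) - ux t y|
        ≤ k * (1 + L1 + ρ) := by
      rw [add_sub_cancel_left, abs_of_pos hk0, hpl]; linarith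
    have hsum' := mul_le_mul_of_nonneg_left hsum hC1
    have e1 := heq t ht y hy1
    have e2 := heq t ht (y + k) hy2
    set aa := a t (y + k) (u t (y + k)) (ux t (y + k))
    set a' := a t y (u t y) (ux t y)
    set ff := f t (y + k) (u t (y + k)) (ux t (y + k))
    set f' := f t y (u t y) (ux t y)
    have e3 : s * ((ut t (y + k) - ut t y) / k) =
        aa * (s * ((uxx t (y + k) - uxx t y) / k)) +
          (s * ((aa - a') * uxx t y) + s * (ff - f')) / k := by
      rw [e1, e2]; field_simp; ring
    have f1 : |s * ((aa - a') * uxx t y)| ≤ C1 * (k * (1 + L1 + ρ)) * (ρ + 1) := by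
      rw [abs_mul, hs1, one_mul, abs_mul]
      exact mul_le_mul (c1.trans hsum') hu2 (abs_nonneg _) (by positivity)
    have f2 : |s * (ff - f')| ≤ C1 * (k * (1 + L1 + ρ)) := by
      rw [abs_mul, hs1, one_mul]; exact c2.trans hsum'
    have f3 : -(C1 * (1 + L1 + ρ) * (ρ + 2)) ≤
        (s * ((aa - a') * uxx t y) + s * (ff - f')) / k := by
      rw [le_div_iff₀ hk0]
      have g1 := neg_abs_le (s * ((aa - a') * uxx t y))
      have g2 := neg_abs_le (s * (ff - f'))
      have g3 : -(C1 * (1 + L1 + ρ) * (ρ + 2)) * k =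
        -(C1 * (k * (1 + L1 + ρ)) * (ρ + 1)) - C1 * (k * (1 + L1 + ρ)) := by ring
      linarith
    have f4 : lam * (D * ρ ^ 2) ≤ aa * (s * ((uxx t (y + k) - uxx t y) / k)) :=
      mul_le_mul c3 h3 (by positivity) (hlam.le.trans c3)
    have f5 : C1 * (1 + L1 + ρ) * (ρ + 2) ≤ lam * (D * ρ ^ 2) := by
      have g1 : lam * D = lam + C1 * (3 * (2 + L1)) := by rw [hD]; field_simp
      have g2 : (1 + L1 + ρ) * (ρ + 2) ≤ ((2 + L1) * ρ) * (3 * ρ) := by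
        refine mul_le_mul ?_ (by linarith) (by linarith) (by positivity)
        nlinarith
      have g3 := mul_le_mul_of_nonneg_left g2 hC1
      have g4 : lam * (D * ρ ^ 2) = lam * ρ ^ 2 + C1 * ((2 + L1) * ρ * (3 * ρ)) := by
        rw [← mul_assoc, g1]; ring
      have g5 : 0 ≤ lam * ρ ^ 2 := by positivity
      linarith
    rw [e3]; linarith
  · intro σ hσ t ht h1
    have hσ1 : |σ| = 1 := by rcases hσ with rfl | rfl <;> simp
    have hyI : ℓ - k ∈ Icc (-ℓ) (ℓ - k) := ⟨hcd.le, le_rfl⟩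
    have hyo : ℓ - k ∈ Ioo (-ℓ) ℓ := ⟨hcd, by linarith⟩
    obtain ⟨-, -, -, b1, b2⟩ := hder t ht (ℓ - k) (hkm _ hyI).1
    obtain ⟨-, -, c3, c4⟩ := hdata t ht (ℓ - k) (hkm _ hyI).1 (ℓ - k) (hkm _ hyI).1
      _ (abs_le.1 b1) _ (abs_le.1 b1) _ (abs_le.1 b2) _ (abs_le.1 b2)
    have h2 := hclose t ht (ℓ - k) hyI (ℓ - k) hyo le_rfl (by linarith)
    have e1 := heq t ht (ℓ - k) hyo
    have h4 := (hbd t ht).1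
    set X := (ux t (ℓ - k + k) - ux t (ℓ - k)) / k
    have h5 : q0 - 1 ≤ σ * uxx t (ℓ - k) := by
      have : |σ * (X - uxx t (ℓ - k))| ≤ 1 := by rw [abs_mul, hσ1, one_mul]; exact h2
      have := (abs_le.1 this).2
      linarith
    have h6 : 2 * F ≤ a t (ℓ - k) (u t (ℓ - k)) (ux t (ℓ - k)) * (σ * uxx t (ℓ - k)) :=
      hqF'.trans (mul_le_mul c3 h5 (by linarith) (hlam.le.trans c3))
    have h7 : |σ * f t (ℓ - k) (u t (ℓ - k)) (ux t (ℓ - k))| ≤ F := by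
      rw [abs_mul, hσ1, one_mul]; exact c4
    have h8 : |σ * ut t ℓ| ≤ F := by rw [abs_mul, hσ1, one_mul]; exact h4
    have h9 : σ * ut t (ℓ - k) = a t (ℓ - k) (u t (ℓ - k)) (ux t (ℓ - k)) * (σ * uxx t (ℓ - k)) +
      σ * f t (ℓ - k) (u t (ℓ - k)) (ux t (ℓ - k)) := by rw [e1]; ring
    rw [sub_add_cancel, ← mul_div_assoc]
    refine div_nonpos_of_nonpos_of_nonneg ?_ hk0.le
    have := (abs_le.1 h7).1
    have := (abs_le.1 h8).2
    linarith
  · intro σ hσ t ht h1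
    have hσ1 : |σ| = 1 := by rcases hσ with rfl | rfl <;> simp
    have hyI : -ℓ ∈ Icc (-ℓ) (ℓ - k) := ⟨le_rfl, hcd.le⟩
    have hyo : -ℓ + k ∈ Ioo (-ℓ) ℓ := ⟨by linarith, by linarith⟩
    obtain ⟨-, -, -, b1, b2⟩ := hder t ht (-ℓ + k) (hkm _ hyI).2
    obtain ⟨-, -, c3, c4⟩ := hdata t ht (-ℓ + k) (hkm _ hyI).2 (-ℓ + k) (hkm _ hyI).2
      _ (abs_le.1 b1) _ (abs_le.1 b1) _ (abs_le.1 b2) _ (abs_le.1 b2)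
    have h2 := hclose t ht (-ℓ) hyI (-ℓ + k) hyo (by linarith) le_rfl
    have e1 := heq t ht (-ℓ + k) hyo
    have h4 := (hbd t ht).2
    set X := (ux t (-ℓ + k) - ux t (-ℓ)) / k
    have h5 : q0 - 1 ≤ σ * uxx t (-ℓ + k) := by
      have : |σ * (X - uxx t (-ℓ + k))| ≤ 1 := by rw [abs_mul, hσ1, one_mul]; exact h2
      have := (abs_le.1 this).2
      linarith
    have h6 : 2 * F ≤ a t (-ℓ + k) (u t (-ℓ + k)) (ux t (-ℓ + k)) * (σ * uxx t (-ℓ + k)) :=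
      hqF'.trans (mul_le_mul c3 h5 (by linarith) (hlam.le.trans c3))
    have h7 : |σ * f t (-ℓ + k) (u t (-ℓ + k)) (ux t (-ℓ + k))| ≤ F := by
      rw [abs_mul, hσ1, one_mul]; exact c4
    have h8 : |σ * ut t (-ℓ)| ≤ F := by rw [abs_mul, hσ1, one_mul]; exact h4
    have h9 : σ * ut t (-ℓ + k) =
      a t (-ℓ + k) (u t (-ℓ + k)) (ux t (-ℓ + k)) * (σ * uxx t (-ℓ + k)) +
      σ * f t (-ℓ + k) (u t (-ℓ + k)) (ux t (-ℓ + k)) := by rw [e1]; ring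
    rw [← mul_div_assoc]
    refine div_nonneg ?_ hk0.le
    have := (abs_le.1 h7).1
    have := (abs_le.1 h8).2
    linarith

/-- Comparison principle for the fully nonlinear problem. -/
theorem StarData.comparison {lam Lam C : ℝ} {G : ℝ → ℝ → ℝ → ℝ → ℝ → ℝ} {Hl Hr : ℝ → ℝ → ℝ → ℝ}
    (D : StarData lam Lam C G Hl Hr) {ℓ t1 : ℝ} (hℓ : 0 < ℓ) {u ut ux uxx v vt vx vxx : ℝ → ℝ → ℝ}
    (hu : ContinuousOn (fun p : ℝ × ℝ => u p.1 p.2) (Icc 0 t1 ×ˢ Icc (-ℓ) ℓ))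
    (hv : ContinuousOn (fun p : ℝ × ℝ => v p.1 p.2) (Icc 0 t1 ×ˢ Icc (-ℓ) ℓ))
    (hud : ∀ t ∈ Ioc 0 t1, ∀ x ∈ Icc (-ℓ) ℓ, HasDerivAt (fun s => u s x) (ut t x) t ∧
        HasDerivAt (u t) (ux t x) x ∧ HasDerivAt (ux t) (uxx t x) x)
    (hvd : ∀ t ∈ Ioc 0 t1, ∀ x ∈ Icc (-ℓ) ℓ, HasDerivAt (fun s => v s x) (vt t x) t ∧
        HasDerivAt (v t) (vx t x) x ∧ HasDerivAt (vx t) (vxx t x) x)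
    (hue : ∀ t ∈ Ioc 0 t1, ∀ x ∈ Ioo (-ℓ) ℓ, ut t x = G t x (u t x) (ux t x) (uxx t x))
    (hve : ∀ t ∈ Ioc 0 t1, ∀ x ∈ Ioo (-ℓ) ℓ, vt t x = G t x (v t x) (vx t x) (vxx t x))
    (hub : ∀ t ∈ Ioc 0 t1, ut t (-ℓ) = Hl t (u t (-ℓ)) (ux t (-ℓ)) ∧
      ut t ℓ = Hr t (u t ℓ) (ux t ℓ))
    (hvb : ∀ t ∈ Ioc 0 t1, vt t (-ℓ) = Hl t (v t (-ℓ)) (vx t (-ℓ)) ∧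
      vt t ℓ = Hr t (v t ℓ) (vx t ℓ))
    (h0 : ∀ x ∈ Icc (-ℓ) ℓ, u 0 x ≤ v 0 x) :
    ∀ t ∈ Icc 0 t1, ∀ x ∈ Icc (-ℓ) ℓ, u t x ≤ v t x := by
  have hexp := fun t => Real.exp_pos (-((C + 1) * t))
  have main := nonpos_of_deriv_neg_at_max (isCompact_Icc (a := -ℓ) (b := ℓ)) (t1 := t1)
    (F := fun t x => (u t x - v t x) * Real.exp (-((C + 1) * t)))
    ((hu.sub hv).mul (by fun_prop))
    (fun x hx => mul_nonpos_of_nonpos_of_nonneg (sub_nonpos.2 (h0 x hx)) (hexp 0).le) ?_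
  · intro t ht x hx
    have := main t ht x hx
    have := nonpos_of_mul_nonpos_left this (hexp t)
    linarith
  · intro t ht x hx hpos hmax
    have hp : 0 < u t x - v t x := pos_of_mul_pos_left hpos (hexp t).le
    have hm : ∀ y ∈ Icc (-ℓ) ℓ, u t y - v t y ≤ u t x - v t x := fun y hy =>
      le_of_mul_le_mul_right (hmax y hy) (hexp t)
    obtain ⟨u1, u2, u3⟩ := hud t ht x hx
    obtain ⟨v1, v2, v3⟩ := hvd t ht x hx
    have hdx := u2.fun_sub v2
    have key : ut t x - vt t x ≤ C * (u t x - v t x) := by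
      rcases hx.1.eq_or_lt with hxl | hxl
      · have h1 := deriv_nonpos_of_max_right (c := ℓ) (by linarith) hdx
          fun y hy => hm y ⟨hx.1.trans hy.1.le, hy.2.le⟩
        subst hxl
        rw [(hub t ht).1, (hvb t ht).1]
        have h2 := (D.Hl_mono t (u t (-ℓ)) _ _ (sub_nonpos.1 h1)).1
        have h3 := D.Hl_lip t t (u t (-ℓ)) (v t (-ℓ)) (vx t (-ℓ))
        rw [sub_self, abs_zero, zero_add, abs_of_pos hp] at h3
        have h4 := (abs_le.1 h3).2
        nlinarith [mul_nonneg D.lam_pos.le (sub_nonneg.2 (sub_nonpos.1 h1))]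
      rcases hx.2.eq_or_lt with hxr | hxr
      · have h1 := deriv_nonneg_of_max_left (c := -ℓ) (by linarith) hdx
          fun y hy => hm y ⟨hy.1.le, hy.2.le.trans hx.2⟩
        subst hxr
        rw [(hub t ht).2, (hvb t ht).2]
        have h2 := (D.Hr_mono t (u t x) _ _ (sub_nonneg.1 h1)).1
        have h3 := D.Hr_lip t t (u t x) (v t x) (vx t x)
        rw [sub_self, abs_zero, zero_add, abs_of_pos hp] at h3
        have h4 := (abs_le.1 h3).2
        nlinarith [mul_nonneg D.lam_pos.le h1]
      · have hn : ∀ᶠ y in 𝓝 x, y ∈ Icc (-ℓ) ℓ := Icc_mem_nhds hxl hxr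
        have hlm : IsLocalMax (fun y => u t y - v t y) x := by
          filter_upwards [hn] with y hy using hm y hy
        have h1 : ux t x = vx t x := sub_eq_zero.1 (hlm.hasDerivAt_eq_zero hdx)
        have h2 : uxx t x - vxx t x ≤ 0 :=
          snd_deriv_nonpos_of_isLocalMax (f' := fun y => ux t y - vx t y) hlm
            (by filter_upwards [hn] with y hy using (hud t ht y hy).2.1.fun_sub (hvd t ht y hy).2.1)
            (u3.fun_sub v3)
        rw [hue t ht x ⟨hxl, hxr⟩, hve t ht x ⟨hxl, hxr⟩, h1]
        have h3 := (D.G_mono t x (u t x) (vx t x) _ _ (sub_nonpos.1 h2)).1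
        have h4 := D.G_lip t t x x (u t x) (v t x) (vx t x) (vx t x) (vxx t x)
        simp only [sub_self, abs_zero, zero_add, add_zero, abs_of_pos hp] at h4
        have h5 := (abs_le.1 h4).2
        nlinarith [mul_nonneg D.lam_pos.le (sub_nonneg.2 (sub_nonpos.1 h2))]
    have hde : HasDerivAt (fun s => Real.exp (-((C + 1) * s)))
        (Real.exp (-((C + 1) * t)) * -((C + 1) * 1)) t :=
      (((hasDerivAt_id t).const_mul (C + 1)).fun_neg).exp
    refine ⟨_, ?_, (u1.fun_sub v1).fun_mul hde⟩
    have e : (ut t x - vt t x) * Real.exp (-((C + 1) * t)) +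
        (u t x - v t x) * (Real.exp (-((C + 1) * t)) * -((C + 1) * 1)) =
        Real.exp (-((C + 1) * t)) * (ut t x - vt t x - (C + 1) * (u t x - v t x)) := by ring
    rw [e]
    exact mul_neg_of_pos_of_neg (hexp t) (by linarith)

/-! ### The truncated problem -/

/-- Truncation of `x` to `[a,b]`. -/
def cl (a b x : ℝ) : ℝ := max a (min b x)

theorem cl_mem {a b : ℝ} (hab : a ≤ b) (x : ℝ) : cl a b x ∈ Icc a b :=
  ⟨le_max_left _ _, max_le hab (min_le_left _ _)⟩

theorem cl_eq {a b x : ℝ} (hx : x ∈ Icc a b) : cl a b x = x := by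
  rw [cl, min_eq_right hx.2, max_eq_right hx.1]

theorem cl_sub {a b x y : ℝ} (h : y ≤ x) : 0 ≤ cl a b x - cl a b y ∧ cl a b x - cl a b y ≤ x - y := by
  unfold cl
  rcases max_cases a (min b x) with h1 | h1 <;> rcases max_cases a (min b y) with h2 | h2 <;>
  rcases min_cases b x with h3 | h3 <;> rcases min_cases b y with h4 | h4 <;>
  constructor <;> linarith [h1.1, h1.2, h2.1, h2.2, h3.1, h3.2, h4.1, h4.2]

theorem abs_cl_sub (a b x y : ℝ) : |cl a b x - cl a b y| ≤ |x - y| := by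
  rcases le_total y x with h | h
  · have := cl_sub (a := a) (b := b) h
    rw [abs_of_nonneg this.1, abs_of_nonneg (by linarith)]; exact this.2
  · have := cl_sub (a := a) (b := b) h
    rw [abs_sub_comm, abs_of_nonneg this.1, abs_sub_comm, abs_of_nonneg (by linarith)]; exact this.2

/-- Right-hand side `a·r + f` with all arguments truncated, continued with slope one in the
second derivative. -/
def trG (T ℓ M L R : ℝ) (a f : ℝ → ℝ → ℝ → ℝ → ℝ) (t x z p r : ℝ) : ℝ :=
  a (cl 0 T t) (cl (-ℓ) ℓ x) (cl (-M) M z) (cl (-L) L p) * cl (-R) R r + (r - cl (-R) R r) +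
    f (cl 0 T t) (cl (-ℓ) ℓ x) (cl (-M) M z) (cl (-L) L p)

/-- Flux `b·p` with truncated arguments, continued with slope one in `p`. -/
def trB (T M L : ℝ) (b : ℝ → ℝ → ℝ) (t z p : ℝ) : ℝ :=
  b (cl 0 T t) (cl (-M) M z) * cl (-L) L p + (p - cl (-L) L p)

theorem trB_mono {T M L lam Lam : ℝ} {b : ℝ → ℝ → ℝ} (hT : 0 ≤ T) (hM : 0 ≤ M)
    (h1 : lam ≤ 1) (h2 : 1 ≤ Lam)
    (hb : ∀ t ∈ Icc 0 T, ∀ z ∈ Icc (-M) M, lam ≤ b t z ∧ b t z ≤ Lam) {t z p p' : ℝ}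
    (h : p' ≤ p) : lam * (p - p') ≤ trB T M L b t z p - trB T M L b t z p' ∧
      trB T M L b t z p - trB T M L b t z p' ≤ Lam * (p - p') := by
  have hb' := hb _ (cl_mem hT t) _ (cl_mem (show -M ≤ M by linarith) z)
  have hc := cl_sub (a := -L) (b := L) h
  unfold trB
  constructor <;> nlinarith

theorem trB_lip {T M L C : ℝ} {b : ℝ → ℝ → ℝ} (hT : 0 ≤ T) (hM : 0 ≤ M) (hL : 0 ≤ L) (hC : 0 ≤ C)
    (hb : ∀ t ∈ Icc 0 T, ∀ t' ∈ Icc 0 T, ∀ z ∈ Icc (-M) M, ∀ z' ∈ Icc (-M) M,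
      |b t z - b t' z'| ≤ C * (|t - t'| + |z - z'|)) (t t' z z' p : ℝ) :
    |trB T M L b t z p - trB T M L b t' z' p| ≤ C * L * (|t - t'| + |z - z'|) := by
  have hMM : -M ≤ M := by linarith
  have h1 := hb _ (cl_mem hT t) _ (cl_mem hT t') _ (cl_mem hMM z) _ (cl_mem hMM z')
  have h2 := abs_cl_sub 0 T t t'
  have h3 := abs_cl_sub (-M) M z z'
  have h4 : |cl (-L) L p| ≤ L := abs_le.2 (cl_mem (show -L ≤ L by linarith) p)
  have e : trB T M L b t z p - trB T M L b t' z' p =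
      (b (cl 0 T t) (cl (-M) M z) - b (cl 0 T t') (cl (-M) M z')) * cl (-L) L p := by
    unfold trB; ring
  rw [e, abs_mul]
  calc _ ≤ (C * (|t - t'| + |z - z'|)) * L :=
        mul_le_mul (h1.trans (mul_le_mul_of_nonneg_left (add_le_add h2 h3) hC)) h4
          (abs_nonneg _) (by positivity)
    _ = _ := by ring

/-- The truncated problem is uniformly parabolic and globally Lipschitz. -/
theorem starData_trunc {T ℓ M L R lam Lam C : ℝ} {a f : ℝ → ℝ → ℝ → ℝ → ℝ}
    {bl br gl gr : ℝ → ℝ → ℝ} (hT : 0 ≤ T) (hℓ : 0 ≤ ℓ) (hM : 0 ≤ M) (hL : 0 ≤ L) (hR : 0 ≤ R)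
    (hlam : 0 < lam) (h1 : lam ≤ 1) (h2 : 1 ≤ Lam) (hC : 0 ≤ C)
    (ha : ∀ t ∈ Icc 0 T, ∀ x ∈ Icc (-ℓ) ℓ, ∀ z ∈ Icc (-M) M, ∀ p ∈ Icc (-L) L,
      lam ≤ a t x z p ∧ a t x z p ≤ Lam ∧ |f t x z p| ≤ C)
    (hal : ∀ t ∈ Icc 0 T, ∀ x ∈ Icc (-ℓ) ℓ, ∀ z ∈ Icc (-M) M, ∀ p ∈ Icc (-L) L,
      ∀ t' ∈ Icc 0 T, ∀ x' ∈ Icc (-ℓ) ℓ, ∀ z' ∈ Icc (-M) M, ∀ p' ∈ Icc (-L) L,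
      |a t x z p - a t' x' z' p'| ≤ C * (|t - t'| + |x - x'| + |z - z'| + |p - p'|) ∧
      |f t x z p - f t' x' z' p'| ≤ C * (|t - t'| + |x - x'| + |z - z'| + |p - p'|))
    (hb : ∀ t ∈ Icc 0 T, ∀ z ∈ Icc (-M) M, (lam ≤ bl t z ∧ bl t z ≤ Lam) ∧
      (lam ≤ br t z ∧ br t z ≤ Lam) ∧ |gl t z| ≤ C ∧ |gr t z| ≤ C)
    (hbl : ∀ t ∈ Icc 0 T, ∀ t' ∈ Icc 0 T, ∀ z ∈ Icc (-M) M, ∀ z' ∈ Icc (-M) M,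
      |bl t z - bl t' z'| ≤ C * (|t - t'| + |z - z'|) ∧
      |br t z - br t' z'| ≤ C * (|t - t'| + |z - z'|) ∧
      |gl t z - gl t' z'| ≤ C * (|t - t'| + |z - z'|) ∧
      |gr t z - gr t' z'| ≤ C * (|t - t'| + |z - z'|)) :
    StarData lam Lam (C * (R + L + 1)) (trG T ℓ M L R a f)
      (fun t z p => gl (cl 0 T t) (cl (-M) M z) + trB T M L bl t z p)
      (fun t z p => gr (cl 0 T t) (cl (-M) M z) - trB T M L br t z p) := by
  have hMM : -M ≤ M := by linarith
  have hLL : -L ≤ L := by linarith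
  have hRR : -R ≤ R := by linarith
  have hll : -ℓ ≤ ℓ := by linarith
  have cl0 : ∀ {k : ℝ}, 0 ≤ k → cl (-k) k 0 = 0 := fun hk => cl_eq ⟨by linarith, hk⟩
  have hCC : C ≤ C * (R + L + 1) := le_mul_of_one_le_right hC (by linarith)
  have hgz : ∀ {g : ℝ → ℝ → ℝ}, (∀ t ∈ Icc 0 T, ∀ t' ∈ Icc 0 T, ∀ z ∈ Icc (-M) M,
      ∀ z' ∈ Icc (-M) M, |g t z - g t' z'| ≤ C * (|t - t'| + |z - z'|)) → ∀ t t' z z' : ℝ,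
      |g (cl 0 T t) (cl (-M) M z) - g (cl 0 T t') (cl (-M) M z')| ≤
        C * (|t - t'| + |z - z'|) := fun hg t t' z z' =>
    (hg _ (cl_mem hT t) _ (cl_mem hT t') _ (cl_mem hMM z) _ (cl_mem hMM z')).trans
      (mul_le_mul_of_nonneg_left (add_le_add (abs_cl_sub 0 T t t') (abs_cl_sub (-M) M z z')) hC)
  refine ⟨hlam, h1.trans h2, by positivity, ?_, ?_, ?_, ?_, ?_, ?_, ?_, ?_, ?_⟩
  · intro t x z p r r' h
    have ha' := ha _ (cl_mem hT t) _ (cl_mem hll x) _ (cl_mem hMM z) _ (cl_mem hLL p)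
    have hc := cl_sub (a := -R) (b := R) h
    unfold trG
    constructor <;> nlinarith
  · intro t t' x x' z z' p p' r
    have h3 := hal _ (cl_mem hT t) _ (cl_mem hll x) _ (cl_mem hMM z) _ (cl_mem hLL p)
      _ (cl_mem hT t') _ (cl_mem hll x') _ (cl_mem hMM z') _ (cl_mem hLL p')
    have h4 := abs_cl_sub 0 T t t'
    have h5 := abs_cl_sub (-ℓ) ℓ x x'
    have h6 := abs_cl_sub (-M) M z z'
    have h7 := abs_cl_sub (-L) L p p'
    have h8 : |cl (-R) R r| ≤ R := abs_le.2 (cl_mem hRR r)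
    have h9 := mul_le_mul_of_nonneg_left (add_le_add (add_le_add (add_le_add h4 h5) h6) h7) hC
    unfold trG
    set A := a (cl 0 T t) (cl (-ℓ) ℓ x) (cl (-M) M z) (cl (-L) L p)
    set A' := a (cl 0 T t') (cl (-ℓ) ℓ x') (cl (-M) M z') (cl (-L) L p')
    set F := f (cl 0 T t) (cl (-ℓ) ℓ x) (cl (-M) M z) (cl (-L) L p)
    set F' := f (cl 0 T t') (cl (-ℓ) ℓ x') (cl (-M) M z') (cl (-L) L p')
    set Sg := |t - t'| + |x - x'| + |z - z'| + |p - p'| with hSg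
    have hSg0 : 0 ≤ Sg := by positivity
    have e : A * cl (-R) R r + (r - cl (-R) R r) + F - (A' * cl (-R) R r + (r - cl (-R) R r) + F')
      = (A - A') * cl (-R) R r + (F - F') := by ring
    have f1 : |(A - A') * cl (-R) R r| ≤ C * Sg * R := by
      rw [abs_mul]
      exact mul_le_mul (h3.1.trans h9) h8 (abs_nonneg _) (by positivity)
    rw [e]
    refine (abs_add_le _ _).trans ((add_le_add f1 (h3.2.trans h9)).trans ?_)
    have : 0 ≤ C * Sg * L := by positivity
    linarith
  · intro t x z p
    have ha' := ha _ (cl_mem hT t) _ (cl_mem hll x) _ (cl_mem hMM z) _ (cl_mem hLL p)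
    unfold trG
    rw [cl0 hR, mul_zero, sub_zero, zero_add, zero_add]
    exact ha'.2.2.trans hCC
  · intro t z p p' h
    have := trB_mono (L := L) hT hM h1 h2 (fun t ht z hz => (hb t ht z hz).1) (t := t) (z := z) h
    simp only [add_sub_add_left_eq_sub]
    exact this
  · intro t z p p' h
    have := trB_mono (L := L) hT hM h1 h2 (fun t ht z hz => (hb t ht z hz).2.1) (t := t) (z := z) h
    simp only [sub_sub_sub_cancel_left]
    exact this
  · intro t t' z z' p
    have e1 := trB_lip hT hM hL hC (fun t ht t' ht' z hz z' hz' => (hbl t ht t' ht' z hz z' hz').1)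
      t t' z z' p
    have e2 := hgz (fun t ht t' ht' z hz z' hz' => (hbl t ht t' ht' z hz z' hz').2.2.1) t t' z z'
    have : 0 ≤ C * R * (|t - t'| + |z - z'|) := by positivity
    rw [add_sub_add_comm]
    refine (abs_add_le _ _).trans ((add_le_add e2 e1).trans ?_)
    linarith
  · intro t t' z z' p
    have e1 := trB_lip hT hM hL hC (fun t ht t' ht' z hz z' hz' => (hbl t ht t' ht' z hz z' hz').2.1)
      t t' z z' p
    have e2 := hgz (fun t ht t' ht' z hz z' hz' => (hbl t ht t' ht' z hz z' hz').2.2.2) t t' z z'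
    have : 0 ≤ C * R * (|t - t'| + |z - z'|) := by positivity
    rw [sub_sub_sub_comm]
    refine (abs_sub _ _).trans ((add_le_add e2 e1).trans ?_)
    linarith
  · intro t z
    have := (hb _ (cl_mem hT t) _ (cl_mem hMM z)).2.2.1
    simp only [trB, cl0 hL, mul_zero, sub_zero, add_zero]
    exact this.trans hCC
  · intro t z
    have := (hb _ (cl_mem hT t) _ (cl_mem hMM z)).2.2.2
    simp only [trB, cl0 hL, mul_zero, sub_zero, add_zero]
    exact this.trans hCC

/-- A `C¹` function is bounded and Lipschitz on compact convex sets. -/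
theorem exists_bound_lip {E : Type*} [NormedAddCommGroup E] [NormedSpace ℝ E] {f : E → ℝ}
    {s k : Set E} {n : WithTop ℕ∞} (hn : 1 ≤ n) (hf : ContDiffOn ℝ n f s) (hs : UniqueDiffOn ℝ s)
    (hk : IsCompact k) (hc : Convex ℝ k) (hks : k ⊆ s) :
    ∃ C, 0 ≤ C ∧ (∀ x ∈ k, |f x| ≤ C) ∧ ∀ x ∈ k, ∀ y ∈ k, |f x - f y| ≤ C * ‖x - y‖ := by
  obtain ⟨C1, h1⟩ := hk.exists_bound_of_continuousOn (hf.continuousOn.mono hks)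
  obtain ⟨C2, h2⟩ := hk.exists_bound_of_continuousOn
    ((hf.continuousOn_fderivWithin hs hn).mono hks)
  refine ⟨max 0 (max C1 C2), le_max_left _ _, fun x hx =>
    (h1 x hx).trans ((le_max_left _ _).trans (le_max_right _ _)), fun x hx y hy => ?_⟩
  exact hc.norm_image_sub_le_of_norm_hasFDerivWithin_le (f' := fderivWithin ℝ f s)
    (fun z hz => ((hf.differentiableOn (by exact (zero_lt_one.trans_le hn).ne') z
      (hks hz)).hasFDerivWithinAt).mono hks)
    (fun z hz => (h2 z hz).trans ((le_max_right _ _).trans (le_max_right _ _))) hy hx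

theorem exists_pos_le {E : Type*} [TopologicalSpace E] {f : E → ℝ} {k : Set E}
    (hk : IsCompact k) (hf : ContinuousOn f k) (hpos : ∀ x ∈ k, 0 < f x) :
    ∃ c > 0, ∀ x ∈ k, c ≤ f x := by
  rcases k.eq_empty_or_nonempty with rfl | hne
  · exact ⟨1, one_pos, by simp⟩
  · obtain ⟨x, hx, hmin⟩ := hk.exists_isMinOn hne hf
    exact ⟨f x, hpos x hx, fun y hy => hmin hy⟩

/-- Ellipticity and Lipschitz constants of an interior coefficient on a compact box. -/
theorem box4 {T ℓ M L : ℝ} (hT : 0 < T) (hℓ : 0 < ℓ) {a : ℝ → ℝ → ℝ → ℝ → ℝ}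
    (ha : ContDiffOn ℝ 2 (fun q : ℝ × ℝ × ℝ × ℝ => a q.1 q.2.1 q.2.2.1 q.2.2.2)
      (Icc (0:ℝ) T ×ˢ Icc (-ℓ) ℓ ×ˢ (univ : Set (ℝ × ℝ)))) :
    ∃ C, 0 ≤ C ∧ (∀ t ∈ Icc 0 T, ∀ x ∈ Icc (-ℓ) ℓ, ∀ z ∈ Icc (-M) M, ∀ p ∈ Icc (-L) L,
        |a t x z p| ≤ C) ∧
      (∀ t ∈ Icc 0 T, ∀ x ∈ Icc (-ℓ) ℓ, ∀ z ∈ Icc (-M) M, ∀ p ∈ Icc (-L) L,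
        ∀ t' ∈ Icc 0 T, ∀ x' ∈ Icc (-ℓ) ℓ, ∀ z' ∈ Icc (-M) M, ∀ p' ∈ Icc (-L) L,
        |a t x z p - a t' x' z' p'| ≤ C * (|t - t'| + |x - x'| + |z - z'| + |p - p'|)) ∧
      ((∀ t ∈ Icc (0:ℝ) T, ∀ x ∈ Icc (-ℓ) ℓ, ∀ z p : ℝ, 0 < a t x z p) →
        ∃ c > 0, ∀ t ∈ Icc 0 T, ∀ x ∈ Icc (-ℓ) ℓ, ∀ z ∈ Icc (-M) M, ∀ p ∈ Icc (-L) L,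
          c ≤ a t x z p) := by
  have hk : IsCompact (Icc (0:ℝ) T ×ˢ Icc (-ℓ) ℓ ×ˢ Icc (-M) M ×ˢ Icc (-L) L) :=
    isCompact_Icc.prod (isCompact_Icc.prod (isCompact_Icc.prod isCompact_Icc))
  have hks : Icc (0:ℝ) T ×ˢ Icc (-ℓ) ℓ ×ˢ Icc (-M) M ×ˢ Icc (-L) L ⊆
      Icc (0:ℝ) T ×ˢ Icc (-ℓ) ℓ ×ˢ (univ : Set (ℝ × ℝ)) :=
    prod_mono le_rfl (prod_mono le_rfl (subset_univ _))
  obtain ⟨C, hC, h1, h2⟩ := exists_bound_lip (by norm_num) ha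
    ((uniqueDiffOn_Icc hT).prod ((uniqueDiffOn_Icc (by linarith)).prod uniqueDiffOn_univ)) hk
    ((convex_Icc _ _).prod ((convex_Icc _ _).prod ((convex_Icc _ _).prod (convex_Icc _ _)))) hks
  refine ⟨C, hC, fun t ht x hx z hz p hp => h1 (t, x, z, p) ⟨ht, hx, hz, hp⟩, ?_, ?_⟩
  · intro t ht x hx z hz p hp t' ht' x' hx' z' hz' p' hp'
    refine (h2 (t, x, z, p) ⟨ht, hx, hz, hp⟩ (t', x', z', p') ⟨ht', hx', hz', hp'⟩).trans
      (mul_le_mul_of_nonneg_left ?_ hC)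
    have e1 := abs_nonneg (t - t')
    have e2 := abs_nonneg (x - x')
    have e3 := abs_nonneg (z - z')
    have e4 := abs_nonneg (p - p')
    simp only [Prod.mk_sub_mk, Prod.norm_mk, Real.norm_eq_abs]
    refine max_le ?_ (max_le ?_ (max_le ?_ ?_)) <;> linarith
  · intro hpos
    obtain ⟨c, hc, h⟩ := exists_pos_le hk (ha.continuousOn.mono hks)
      fun q hq => hpos _ hq.1 _ hq.2.1 _ _
    exact ⟨c, hc, fun t ht x hx z hz p hp => h (t, x, z, p) ⟨ht, hx, hz, hp⟩⟩

/-- Positivity and Lipschitz constants of a boundary coefficient on a compact box. -/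
theorem box2 {T M : ℝ} (hT : 0 < T) {b : ℝ → ℝ → ℝ}
    (hb : ContDiffOn ℝ 2 (fun q : ℝ × ℝ => b q.1 q.2) (Icc (0:ℝ) T ×ˢ (univ : Set ℝ))) :
    ∃ C, 0 ≤ C ∧ (∀ t ∈ Icc 0 T, ∀ z ∈ Icc (-M) M, |b t z| ≤ C) ∧
      (∀ t ∈ Icc 0 T, ∀ t' ∈ Icc 0 T, ∀ z ∈ Icc (-M) M, ∀ z' ∈ Icc (-M) M,
        |b t z - b t' z'| ≤ C * (|t - t'| + |z - z'|)) ∧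
      ((∀ t ∈ Icc (0:ℝ) T, ∀ z : ℝ, 0 < b t z) →
        ∃ c > 0, ∀ t ∈ Icc 0 T, ∀ z ∈ Icc (-M) M, c ≤ b t z) := by
  have hk : IsCompact (Icc (0:ℝ) T ×ˢ Icc (-M) M) := isCompact_Icc.prod isCompact_Icc
  have hks : Icc (0:ℝ) T ×ˢ Icc (-M) M ⊆ Icc (0:ℝ) T ×ˢ (univ : Set ℝ) :=
    prod_mono le_rfl (subset_univ _)
  obtain ⟨C, hC, h1, h2⟩ := exists_bound_lip (by norm_num) hb
    ((uniqueDiffOn_Icc hT).prod uniqueDiffOn_univ) hk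
    ((convex_Icc _ _).prod (convex_Icc _ _)) hks
  refine ⟨C, hC, fun t ht z hz => h1 (t, z) ⟨ht, hz⟩, ?_, ?_⟩
  · intro t ht t' ht' z hz z' hz'
    refine (h2 (t, z) ⟨ht, hz⟩ (t', z') ⟨ht', hz'⟩).trans (mul_le_mul_of_nonneg_left ?_ hC)
    have e1 := abs_nonneg (t - t')
    have e3 := abs_nonneg (z - z')
    simp only [Prod.mk_sub_mk, Prod.norm_mk, Real.norm_eq_abs]
    refine max_le ?_ ?_ <;> linarith
  · intro hpos
    obtain ⟨c, hc, h⟩ := exists_pos_le hk (hb.continuousOn.mono hks) fun q hq => hpos _ hq.1 _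
    exact ⟨c, hc, fun t ht z hz => h (t, z) ⟨ht, hz⟩⟩

/-- Common constants for all coefficients on a compact box. -/
theorem exists_box_constants {T ℓ M L : ℝ} (hT : 0 < T) (hℓ : 0 < ℓ)
    {a f : ℝ → ℝ → ℝ → ℝ → ℝ} {b g : ℝ → ℝ → ℝ → ℝ}
    (ha : ContDiffOn ℝ 2 (fun q : ℝ × ℝ × ℝ × ℝ => a q.1 q.2.1 q.2.2.1 q.2.2.2)
      (Icc (0:ℝ) T ×ˢ Icc (-ℓ) ℓ ×ˢ (univ : Set (ℝ × ℝ))))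
    (hf : ContDiffOn ℝ 2 (fun q : ℝ × ℝ × ℝ × ℝ => f q.1 q.2.1 q.2.2.1 q.2.2.2)
      (Icc (0:ℝ) T ×ˢ Icc (-ℓ) ℓ ×ˢ (univ : Set (ℝ × ℝ))))
    (hb : ContDiffOn ℝ 2 (fun q : ℝ × ℝ => b q.1 ℓ q.2) (Icc (0:ℝ) T ×ˢ (univ : Set ℝ)) ∧
      ContDiffOn ℝ 2 (fun q : ℝ × ℝ => b q.1 (-ℓ) q.2) (Icc (0:ℝ) T ×ˢ (univ : Set ℝ)))
    (hg : ContDiffOn ℝ 2 (fun q : ℝ × ℝ => g q.1 ℓ q.2) (Icc (0:ℝ) T ×ˢ (univ : Set ℝ)) ∧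
      ContDiffOn ℝ 2 (fun q : ℝ × ℝ => g q.1 (-ℓ) q.2) (Icc (0:ℝ) T ×ˢ (univ : Set ℝ)))
    (hapos : ∀ t ∈ Icc (0:ℝ) T, ∀ x ∈ Icc (-ℓ) ℓ, ∀ z p : ℝ, 0 < a t x z p)
    (hbpos : ∀ t ∈ Icc (0:ℝ) T, ∀ z : ℝ, 0 < b t ℓ z ∧ 0 < b t (-ℓ) z) :
    ∃ lam Lam C : ℝ, 0 < lam ∧ lam ≤ 1 ∧ 1 ≤ Lam ∧ 0 ≤ C ∧
    (∀ t ∈ Icc 0 T, ∀ x ∈ Icc (-ℓ) ℓ, ∀ z ∈ Icc (-M) M, ∀ p ∈ Icc (-L) L,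
      lam ≤ a t x z p ∧ a t x z p ≤ Lam ∧ |f t x z p| ≤ C) ∧
    (∀ t ∈ Icc 0 T, ∀ x ∈ Icc (-ℓ) ℓ, ∀ z ∈ Icc (-M) M, ∀ p ∈ Icc (-L) L,
      ∀ t' ∈ Icc 0 T, ∀ x' ∈ Icc (-ℓ) ℓ, ∀ z' ∈ Icc (-M) M, ∀ p' ∈ Icc (-L) L,
      |a t x z p - a t' x' z' p'| ≤ C * (|t - t'| + |x - x'| + |z - z'| + |p - p'|) ∧
      |f t x z p - f t' x' z' p'| ≤ C * (|t - t'| + |x - x'| + |z - z'| + |p - p'|)) ∧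
    (∀ t ∈ Icc 0 T, ∀ z ∈ Icc (-M) M, (lam ≤ b t (-ℓ) z ∧ b t (-ℓ) z ≤ Lam) ∧
      (lam ≤ b t ℓ z ∧ b t ℓ z ≤ Lam) ∧ |g t (-ℓ) z| ≤ C ∧ |g t ℓ z| ≤ C) ∧
    (∀ t ∈ Icc 0 T, ∀ t' ∈ Icc 0 T, ∀ z ∈ Icc (-M) M, ∀ z' ∈ Icc (-M) M,
      |b t (-ℓ) z - b t' (-ℓ) z'| ≤ C * (|t - t'| + |z - z'|) ∧
      |b t ℓ z - b t' ℓ z'| ≤ C * (|t - t'| + |z - z'|) ∧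
      |g t (-ℓ) z - g t' (-ℓ) z'| ≤ C * (|t - t'| + |z - z'|) ∧
      |g t ℓ z - g t' ℓ z'| ≤ C * (|t - t'| + |z - z'|)) := by
  obtain ⟨C1, p1, a1, b1, c1⟩ := box4 (M := M) (L := L) hT hℓ ha
  obtain ⟨C2, p2, a2, b2, -⟩ := box4 (M := M) (L := L) hT hℓ hf
  obtain ⟨C3, p3, a3, b3, c3⟩ := box2 (M := M) hT (b := fun t z => b t (-ℓ) z) hb.2
  obtain ⟨C4, p4, a4, b4, c4⟩ := box2 (M := M) hT (b := fun t z => b t ℓ z) hb.1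
  obtain ⟨C5, p5, a5, b5, -⟩ := box2 (M := M) hT (b := fun t z => g t (-ℓ) z) hg.2
  obtain ⟨C6, p6, a6, b6, -⟩ := box2 (M := M) hT (b := fun t z => g t ℓ z) hg.1
  obtain ⟨l1, q1, d1⟩ := c1 hapos
  obtain ⟨l3, q3, d3⟩ := c3 fun t ht z => (hbpos t ht z).2
  obtain ⟨l4, q4, d4⟩ := c4 fun t ht z => (hbpos t ht z).1
  set C := C1 + C2 + C3 + C4 + C5 + C6 with hC
  have m1 : min 1 (min l1 (min l3 l4)) ≤ l1 := (min_le_right _ _).trans (min_le_left _ _)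
  have m3 : min 1 (min l1 (min l3 l4)) ≤ l3 :=
    (min_le_right _ _).trans ((min_le_right _ _).trans (min_le_left _ _))
  have m4 : min 1 (min l1 (min l3 l4)) ≤ l4 :=
    (min_le_right _ _).trans ((min_le_right _ _).trans (min_le_right _ _))
  have up : ∀ {k d e : ℝ}, 0 ≤ d → k ≤ C → e ≤ k * d → e ≤ C * d := fun hd hk h =>
    h.trans (mul_le_mul_of_nonneg_right hk hd)
  refine ⟨min 1 (min l1 (min l3 l4)), 1 + C, C, lt_min one_pos (lt_min q1 (lt_min q3 q4)),
    min_le_left _ _, by linarith, by linarith, ?_, ?_, ?_, ?_⟩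
  · intro t ht x hx z hz p hp
    refine ⟨m1.trans (d1 t ht x hx z hz p hp), ?_, ?_⟩
    · linarith [(abs_le.1 (a1 t ht x hx z hz p hp)).2]
    · linarith [a2 t ht x hx z hz p hp]
  · intro t ht x hx z hz p hp t' ht' x' hx' z' hz' p' hp'
    exact ⟨up (by positivity) (by linarith) (b1 t ht x hx z hz p hp t' ht' x' hx' z' hz' p' hp'),
      up (by positivity) (by linarith) (b2 t ht x hx z hz p hp t' ht' x' hx' z' hz' p' hp')⟩
  · intro t ht z hz
    refine ⟨⟨m3.trans (d3 t ht z hz), ?_⟩, ⟨m4.trans (d4 t ht z hz), ?_⟩, ?_, ?_⟩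
    · linarith [(abs_le.1 (a3 t ht z hz)).2]
    · linarith [(abs_le.1 (a4 t ht z hz)).2]
    · linarith [a5 t ht z hz]
    · linarith [a6 t ht z hz]
  · intro t ht t' ht' z hz z' hz'
    exact ⟨up (by positivity) (by linarith) (b3 t ht t' ht' z hz z' hz'),
      up (by positivity) (by linarith) (b4 t ht t' ht' z hz z' hz'),
      up (by positivity) (by linarith) (b5 t ht t' ht' z hz z' hz'),
      up (by positivity) (by linarith) (b6 t ht t' ht' z hz z' hz')⟩

/-! ### Solutions of the truncated problem that respect the truncation -/

theorem trG_eq {T ℓ M L R : ℝ} {a f : ℝ → ℝ → ℝ → ℝ → ℝ} {t x z p r : ℝ} (ht : t ∈ Icc 0 T)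
    (hx : x ∈ Icc (-ℓ) ℓ) (hz : |z| ≤ M) (hp : |p| ≤ L) (hr : |r| ≤ R) :
    trG T ℓ M L R a f t x z p r = a t x z p * r + f t x z p := by
  rw [trG, cl_eq ht, cl_eq hx, cl_eq (abs_le.1 hz), cl_eq (abs_le.1 hp), cl_eq (abs_le.1 hr),
    sub_self, add_zero]

theorem trB_eq {T M L : ℝ} {b : ℝ → ℝ → ℝ} {t z p : ℝ} (ht : t ∈ Icc 0 T) (hz : |z| ≤ M)
    (hp : |p| ≤ L) : trB T M L b t z p = b t z * p := by
  rw [trB, cl_eq ht, cl_eq (abs_le.1 hz), cl_eq (abs_le.1 hp), sub_self, add_zero]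

section
variable {ℓ T α B M L R : ℝ} {a f : ℝ → ℝ → ℝ → ℝ → ℝ} {b g : ℝ → ℝ → ℝ → ℝ}
variable {G : ℝ → ℝ → ℝ → ℝ → ℝ → ℝ} {Hl Hr : ℝ → ℝ → ℝ → ℝ}
variable {u0 : ℝ → ℝ} {v q w r : ℝ → ℝ → ℝ}

theorem SmoothSol.continuousOn (S : SmoothSol ℓ T α B G Hl Hr u0 v q w r) :
    ContinuousOn (fun p : ℝ × ℝ => v p.1 p.2) (Icc 0 T ×ˢ Icc (-ℓ) ℓ) := by
  rintro ⟨t, x⟩ ⟨ht, hx⟩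
  rw [ContinuousWithinAt, tendsto_iff_dist_tendsto_zero]
  have h : Tendsto (fun p : ℝ × ℝ => B * |p.1 - t| + B * |p.2 - x|)
      (𝓝[Icc 0 T ×ˢ Icc (-ℓ) ℓ] (t, x)) (𝓝 0) := by
    have hc : Continuous fun p : ℝ × ℝ => B * |p.1 - t| + B * |p.2 - x| := by fun_prop
    have := hc.tendsto (t, x)
    simp only [sub_self, abs_zero, mul_zero, add_zero] at this
    exact this.mono_left nhdsWithin_le_nhds
  refine squeeze_zero' (Eventually.of_forall fun _ => dist_nonneg) ?_ h
  filter_upwards [self_mem_nhdsWithin] with p hp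
  rw [Real.dist_eq]
  have h1 := S.v_tm p.1 hp.1 t ht p.2 hp.2
  have h2 := S.v_sp t ht p.2 hp.2 x hx
  exact (abs_sub_le _ _ _).trans (add_le_add h1 h2)

theorem SmoothSol.timeDeriv_eq (S : SmoothSol ℓ T α B G Hl Hr u0 v q w r) {t x : ℝ}
    (ht : t ∈ Ioo 0 T) (hx : x ∈ Icc (-ℓ) ℓ) : timeDeriv v t x = q t x :=
  (S.dt t ht x hx).deriv

theorem SmoothSol.spaceDeriv_eq (S : SmoothSol ℓ T α B G Hl Hr u0 v q w r) {t : ℝ}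
    (ht : t ∈ Icc 0 T) : spaceDeriv v t = w t :=
  funext fun x => (S.dx t ht x).deriv

theorem SmoothSol.spaceDeriv2_eq (S : SmoothSol ℓ T α B G Hl Hr u0 v q w r) {t x : ℝ}
    (ht : t ∈ Icc 0 T) (hx : x ∈ Icc (-ℓ) ℓ) : spaceDeriv2 v t x = r t x := by
  rw [spaceDeriv2, S.spaceDeriv_eq ht]
  exact (S.dxx t ht x hx).deriv

theorem SmoothSol.memP (S : SmoothSol ℓ T α B G Hl Hr u0 v q w r) (hℓ : 0 < ℓ) {τ : ℝ}
    (hτ : τ ≤ T) : MemP α τ (Ioo (-ℓ) ℓ) v := by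
  have hcl : closure (Ioo (-ℓ) ℓ) = Icc (-ℓ) ℓ := closure_Ioo (by linarith)
  have hI : ∀ {t}, t ∈ Ioo 0 τ → t ∈ Icc 0 T := fun ht => ⟨ht.1.le, ht.2.le.trans hτ⟩
  have hO : ∀ {t}, t ∈ Ioo 0 τ → t ∈ Ioo 0 T := fun ht => ⟨ht.1, ht.2.trans_le hτ⟩
  have hx' : ∀ {x}, x ∈ Ioo (-ℓ) ℓ → x ∈ Icc (-ℓ) ℓ := fun h => Ioo_subset_Icc_self h
  refine ⟨?_, ?_, B, ?_, ⟨?_, ?_⟩, ⟨?_, ?_⟩, ?_⟩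
  · rw [hcl]
    exact S.continuousOn.mono (prod_mono (Icc_subset_Icc_right hτ) le_rfl)
  · intro t ht x hx
    rw [hcl] at hx
    refine ⟨(S.dt t (hO ht) x hx).differentiableAt, (S.dx t (hI ht) x).differentiableAt, ?_⟩
    rw [S.spaceDeriv_eq (hI ht)]
    exact (S.dxx t (hI ht) x hx).differentiableAt
  · intro t ht x hx
    rw [S.timeDeriv_eq (hO ht) (hx' hx), S.spaceDeriv_eq (hI ht), S.spaceDeriv2_eq (hI ht) (hx' hx)]
    exact ⟨S.v_bd t (hI ht) x (hx' hx), S.q_bd t (hI ht) x (hx' hx), S.w_bd t (hI ht) x (hx' hx),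
      S.r_bd t (hI ht) x (hx' hx)⟩
  · intro x hx t ht s hs
    beta_reduce
    rw [S.timeDeriv_eq (hO ht) (hx' hx), S.timeDeriv_eq (hO hs) (hx' hx)]
    exact S.q_tm t (hI ht) s (hI hs) x (hx' hx)
  · intro t ht x hx y hy
    beta_reduce
    rw [S.timeDeriv_eq (hO ht) (hx' hx), S.timeDeriv_eq (hO ht) (hx' hy)]
    exact S.q_sp t (hI ht) x (hx' hx) y (hx' hy)
  · intro x hx t ht s hs
    beta_reduce
    rw [S.spaceDeriv2_eq (hI ht) (hx' hx), S.spaceDeriv2_eq (hI hs) (hx' hx)]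
    exact S.r_tm t (hI ht) s (hI hs) x (hx' hx)
  · intro t ht x hx y hy
    beta_reduce
    rw [S.spaceDeriv2_eq (hI ht) (hx' hx), S.spaceDeriv2_eq (hI ht) (hx' hy)]
    exact S.r_sp t (hI ht) x (hx' hx) y (hx' hy)
  · intro x hx t ht s hs
    beta_reduce
    rw [S.spaceDeriv_eq (hI ht), S.spaceDeriv_eq (hI hs)]
    exact S.w_tm t (hI ht) s (hI hs) x (hx' hx)

/-- Where the bounds imposed by the truncation are not reached, the truncated problem coincides
with the original one. -/
theorem SmoothSol.sol (S : SmoothSol ℓ T α B (trG T ℓ M L R a f)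
      (fun t z p => g (cl 0 T t) (-ℓ) (cl (-M) M z) + trB T M L (fun t z => b t (-ℓ) z) t z p)
      (fun t z p => g (cl 0 T t) ℓ (cl (-M) M z) - trB T M L (fun t z => b t ℓ z) t z p)
      u0 v q w r) (hℓ : 0 < ℓ) {τ : ℝ} (hτ : τ ≤ T)
    (hv : ∀ t ∈ Ioo 0 τ, ∀ x ∈ Icc (-ℓ) ℓ, |v t x| ≤ M ∧ |w t x| ≤ L)
    (hr : ∀ t ∈ Ioo 0 τ, ∀ x ∈ Ioo (-ℓ) ℓ, |r t x| ≤ R) :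
    MemP α τ (Ioo (-ℓ) ℓ) v ∧ SolQ2a τ ℓ a f b g u0 v := by
  have hm := S.memP hℓ hτ
  have hcl : closure (Ioo (-ℓ) ℓ) = Icc (-ℓ) ℓ := closure_Ioo (by linarith)
  have hlm : -ℓ ∈ Icc (-ℓ) ℓ := left_mem_Icc.2 (by linarith)
  have hrm : ℓ ∈ Icc (-ℓ) ℓ := right_mem_Icc.2 (by linarith)
  have hI : ∀ {t}, t ∈ Ioo 0 τ → t ∈ Icc 0 T := fun ht => ⟨ht.1.le, ht.2.le.trans hτ⟩
  have hO : ∀ {t}, t ∈ Ioo 0 τ → t ∈ Ioo 0 T := fun ht => ⟨ht.1, ht.2.trans_le hτ⟩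
  have hx' : ∀ {x}, x ∈ Ioo (-ℓ) ℓ → x ∈ Icc (-ℓ) ℓ := fun h => Ioo_subset_Icc_self h
  obtain ⟨h1, h2, -⟩ := id hm
  rw [hcl] at h1 h2
  refine ⟨hm, ⟨h1, fun t ht x hx => h2 t ht x (hx' hx), fun t ht => ?_⟩, ?_, ?_, S.init⟩
  · exact ⟨(h2 t ht _ hrm).1, (h2 t ht _ hrm).2.1, (h2 t ht _ hlm).1, (h2 t ht _ hlm).2.1⟩
  · intro t ht x hx
    have hvx := hv t ht x (hx' hx)
    rw [S.timeDeriv_eq (hO ht) (hx' hx), S.spaceDeriv_eq (hI ht), S.spaceDeriv2_eq (hI ht) (hx' hx),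
      S.eq_int t (hI ht) x hx, trG_eq (hI ht) (hx' hx) hvx.1 hvx.2 (hr t ht x hx)]
    ring
  · intro t ht
    have e1 := hv t ht _ hlm
    have e2 := hv t ht _ hrm
    rw [S.timeDeriv_eq (hO ht) hrm, S.timeDeriv_eq (hO ht) hlm, S.spaceDeriv_eq (hI ht),
      S.eq_l t (hI ht), S.eq_r t (hI ht)]
    simp only [trB_eq (hI ht) e1.1 e1.2, trB_eq (hI ht) e2.1 e2.2, cl_eq (hI ht),
      cl_eq (abs_le.1 e1.1), cl_eq (abs_le.1 e2.1)]
    constructor <;> ring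

end

/-! ### A priori bounds for the given solution -/

/-- The classical facts about a solution on `[0,τ) × [-ℓ,ℓ]`, with derivatives as functions. -/
structure Facts (τ ℓ M α : ℝ) (a f : ℝ → ℝ → ℝ → ℝ → ℝ) (b g : ℝ → ℝ → ℝ → ℝ) (u0 : ℝ → ℝ)
    (u ut ux uxx : ℝ → ℝ → ℝ) : Prop where
  cont : ∀ t ∈ Ioo 0 τ, ContinuousOn (fun p : ℝ × ℝ => u p.1 p.2) (Icc 0 t ×ˢ Icc (-ℓ) ℓ)
  dt : ∀ t ∈ Ioo 0 τ, ∀ x ∈ Icc (-ℓ) ℓ, HasDerivAt (fun s => u s x) (ut t x) t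
  dx : ∀ t ∈ Ioo 0 τ, ∀ x ∈ Icc (-ℓ) ℓ, HasDerivAt (u t) (ux t x) x
  dxx : ∀ t ∈ Ioo 0 τ, ∀ x ∈ Icc (-ℓ) ℓ, HasDerivAt (ux t) (uxx t x) x
  holder : ∀ t ∈ Ioo 0 τ, ∃ A, 0 ≤ A ∧ ∀ s ∈ Ioc 0 t, ∀ x ∈ Ioo (-ℓ) ℓ, ∀ y ∈ Ioo (-ℓ) ℓ,
    |uxx s x - uxx s y| ≤ A * |x - y| ^ α
  bd : ∀ t ∈ Ioo 0 τ, ∀ x ∈ Icc (-ℓ) ℓ, |u t x| ≤ M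
  eq_int : ∀ t ∈ Ioo 0 τ, ∀ x ∈ Ioo (-ℓ) ℓ,
    ut t x = a t x (u t x) (ux t x) * uxx t x + f t x (u t x) (ux t x)
  eq_r : ∀ t ∈ Ioo 0 τ, ut t ℓ = g t ℓ (u t ℓ) - b t ℓ (u t ℓ) * ux t ℓ
  eq_l : ∀ t ∈ Ioo 0 τ, ut t (-ℓ) = g t (-ℓ) (u t (-ℓ)) + b t (-ℓ) (u t (-ℓ)) * ux t (-ℓ)
  init : ∀ x ∈ Icc (-ℓ) ℓ, u 0 x = u0 x

theorem abs_le_of_Ioo {ℓ M : ℝ} (hℓ : 0 < ℓ) {φ : ℝ → ℝ} (hc : ContinuousOn φ (Icc (-ℓ) ℓ))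
    (h : ∀ x ∈ Ioo (-ℓ) ℓ, |φ x| ≤ M) : ∀ x ∈ Icc (-ℓ) ℓ, |φ x| ≤ M := by
  have hcl : closure (Ioo (-ℓ) ℓ) = Icc (-ℓ) ℓ := closure_Ioo (by linarith)
  intro x hx
  rw [← hcl] at hx hc
  exact le_on_closure h hc.abs continuousOn_const hx

/-- The solution concept of the theorem yields these facts; the interior bound on `|u|` extends to
the end points by continuity. -/
theorem exists_facts {α τ ℓ M : ℝ} {a f : ℝ → ℝ → ℝ → ℝ → ℝ} {b g : ℝ → ℝ → ℝ → ℝ}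
    {u0 : ℝ → ℝ} {u : ℝ → ℝ → ℝ} (hℓ : 0 < ℓ) (hτ : 0 < τ)
    (hsol : ∀ τ' : ℝ, 0 < τ' → τ' < τ → MemP α τ' (Ioo (-ℓ) ℓ) u ∧ SolQ2a τ' ℓ a f b g u0 u)
    (hbnd : ∀ t ∈ Ioo (0:ℝ) τ, ∀ x ∈ Ioo (-ℓ) ℓ, |u t x| ≤ M) :
    Facts τ ℓ M α a f b g u0 u (timeDeriv u) (spaceDeriv u) (spaceDeriv2 u) := by
  have hcl : closure (Ioo (-ℓ) ℓ) = Icc (-ℓ) ℓ := closure_Ioo (by linarith)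
  have hmid : ∀ t ∈ Ioo 0 τ, ∃ τ', t < τ' ∧ MemP α τ' (Ioo (-ℓ) ℓ) u ∧
      SolQ2a τ' ℓ a f b g u0 u := fun t ht => ⟨(t + τ) / 2, by linarith [ht.2],
    hsol _ (by linarith [ht.1]) (by linarith [ht.2])⟩
  have hreg : ∀ t ∈ Ioo 0 τ, ∀ x ∈ Icc (-ℓ) ℓ, DifferentiableAt ℝ (fun s => u s x) t ∧
      DifferentiableAt ℝ (fun y => u t y) x ∧ DifferentiableAt ℝ (fun y => spaceDeriv u t y) x := by
    intro t ht x hx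
    obtain ⟨τ', h, hm, -⟩ := hmid t ht
    exact hm.2.1 t ⟨ht.1, h⟩ x (by rwa [hcl])
  refine ⟨?_, fun t ht x hx => (hreg t ht x hx).1.hasDerivAt,
    fun t ht x hx => (hreg t ht x hx).2.1.hasDerivAt,
    fun t ht x hx => (hreg t ht x hx).2.2.hasDerivAt, ?_, ?_, ?_, ?_, ?_, ?_⟩
  · intro t ht
    have := (hsol t ht.1 ht.2).1.1
    rwa [hcl] at this
  · intro t ht
    obtain ⟨τ', h, ⟨-, -, C, -, -, hC, -⟩, -⟩ := hmid t ht
    refine ⟨max C 0, le_max_right _ _, fun s hs x hx y hy => ?_⟩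
    exact (hC.2 s ⟨hs.1, hs.2.trans_lt h⟩ x hx y hy).trans
      (mul_le_mul_of_nonneg_right (le_max_left _ _) (Real.rpow_nonneg (abs_nonneg _) _))
  · intro t ht
    exact abs_le_of_Ioo hℓ (φ := u t)
      (fun x hx => (hreg t ht x hx).2.1.continuousAt.continuousWithinAt) (hbnd t ht)
  · intro t ht x hx
    obtain ⟨τ', h, -, hs⟩ := hmid t ht
    have := hs.2.1 t ⟨ht.1, h⟩ x hx
    linarith
  · intro t ht
    obtain ⟨τ', h, -, hs⟩ := hmid t ht
    have := (hs.2.2.1 t ⟨ht.1, h⟩).1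
    linarith
  · intro t ht
    obtain ⟨τ', h, -, hs⟩ := hmid t ht
    have := (hs.2.2.1 t ⟨ht.1, h⟩).2
    linarith
  · exact (hsol (τ / 2) (by linarith) (by linarith)).2.2.2.2

section
variable {α T τ ℓ K M q₀ : ℝ} {a f : ℝ → ℝ → ℝ → ℝ → ℝ} {b g : ℝ → ℝ → ℝ → ℝ} {ψ : ℝ → ℝ}
variable {u0 : ℝ → ℝ} {u ut ux uxx : ℝ → ℝ → ℝ}

/-- Gradient bound: the Bernstein-Nagumo condition gives `|u_x| ≤ q₁`. -/
theorem Facts.grad_bound (P : Facts τ ℓ M α a f b g u0 u ut ux uxx) (hℓ : 0 < ℓ) (hτT : τ ≤ T)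
    (hK : 0 ≤ K) (hKq : K ≤ q₀)
    (hapos : ∀ t ∈ Icc (0:ℝ) T, ∀ x ∈ Icc (-ℓ) ℓ, ∀ z p : ℝ, 0 < a t x z p)
    (hLip : ∀ x ∈ Icc (-ℓ) ℓ, ∀ y ∈ Icc (-ℓ) ℓ, |u0 x - u0 y| ≤ K * |x - y|)
    (hψreg : ContDiffOn ℝ 1 ψ (Ici 0)) (hψ1 : ∀ ρ ∈ Ici (0:ℝ), 1 ≤ ψ ρ) {q₁ : ℝ}
    (hq : q₀ < q₁) (hint : 2 * M < ∫ ρ in q₀..q₁, ρ / ψ ρ)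
    (hfa : ∀ t ∈ Icc (0:ℝ) T, ∀ x ∈ Icc (-ℓ) ℓ, ∀ z ∈ Icc (-M) M, ∀ p : ℝ,
      |f t x z p| ≤ a t x z p * ψ (|p|))
    (hbg : ∀ t ∈ Ioc (0:ℝ) T, ∀ z ∈ Icc (-M) M, ∀ p : ℝ, q₀ ≤ p →
      g t ℓ z ≤ b t ℓ z * p ∧ -g t ℓ z ≤ b t ℓ z * p ∧
      -g t (-ℓ) z ≤ b t (-ℓ) z * p ∧ g t (-ℓ) z ≤ b t (-ℓ) z * p) :
    ∀ t ∈ Ioo 0 τ, ∀ x ∈ Icc (-ℓ) ℓ, |ux t x| ≤ q₁ := by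
  intro t1 ht1 x hx
  have hq0 : 0 ≤ q₀ := hK.trans hKq
  have hsub : Icc q₀ q₁ ⊆ Ici 0 := fun p hp => hq0.trans hp.1
  obtain ⟨s0, h, h1, H⟩ := exists_modulus hq (hψreg.continuousOn.mono hsub)
    (fun p hp => hψ1 p (hsub hp))
  have hI : ∀ {t}, t ∈ Ioc 0 t1 → t ∈ Ioo 0 τ := fun ht => ⟨ht.1, ht.2.trans_lt ht1.2⟩
  have hlm : -ℓ ∈ Icc (-ℓ) ℓ := left_mem_Icc.2 (by linarith)
  have hrm : ℓ ∈ Icc (-ℓ) ℓ := right_mem_Icc.2 (by linarith)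
  refine abs_slope_le H (c := -ℓ) (d := ℓ) (t1 := t1) (by linarith) (U := u) (Ut := ut) (Ux := ux)
    (Uxx := uxx) (P.cont t1 ht1) (fun t ht x hx => P.dt t (hI ht) x hx)
    (fun t ht x hx => P.dx t (hI ht) x hx)
    (fun t ht x hx => P.dxx t (hI ht) x (Ioo_subset_Icc_self hx)) ?_ ?_ ?_ ?_ ?_ t1
    (right_mem_Ioc.2 ht1.1) x hx
  · intro x hx y hy
    rw [P.init x hx, P.init y hy]
    exact (hLip x hx y hy).trans (mul_le_mul_of_nonneg_right hKq (abs_nonneg _))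
  · intro t ht x hx y hy
    have e1 := P.bd t (hI ht) x hx
    have e2 := P.bd t (hI ht) y hy
    exact (abs_sub _ _).trans (by linarith)
  · intro σ s hσ hs t ht x hx e1 e2 e3
    have hx' := Ioo_subset_Icc_self hx
    have htT : t ∈ Icc 0 T := ⟨ht.1.le, (hI ht).2.le.trans hτT⟩
    have hp : |ux t x| = σ * ux t x := by
      rcases hσ with rfl | rfl
      · rw [one_mul] at e1 ⊢; exact abs_of_nonneg (hq0.trans e1)
      · rw [neg_one_mul] at e1 ⊢; exact abs_of_nonpos (by linarith)
    have hf := hfa t htT x hx' _ (abs_le.1 (P.bd t (hI ht) x hx')) (ux t x)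
    have ha := hapos t htT x hx' (u t x) (ux t x)
    rw [hp] at hf
    have e4 := mul_le_mul_of_nonneg_left e3 ha.le
    have e5 := abs_le.1 hf
    rw [P.eq_int t (hI ht) x hx]
    rcases hs with rfl | rfl <;> nlinarith
  · intro σ hσ t ht e1
    have htT : t ∈ Ioc 0 T := ⟨ht.1, (hI ht).2.le.trans hτT⟩
    have e2 := hbg t htT _ (abs_le.1 (P.bd t (hI ht) ℓ hrm)) _ e1
    rw [P.eq_r t (hI ht)]
    rcases hσ with rfl | rfl <;> nlinarith [e2.1, e2.2.1]
  · intro σ hσ t ht e1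
    have htT : t ∈ Ioc 0 T := ⟨ht.1, (hI ht).2.le.trans hτT⟩
    have e2 := hbg t htT _ (abs_le.1 (P.bd t (hI ht) (-ℓ) hlm)) _ e1
    rw [P.eq_l t (hI ht)]
    rcases hσ with rfl | rfl <;> nlinarith [e2.2.2.1, e2.2.2.2]

end

/-- First differences with step `k` of the initial function are Lipschitz with constant `S k`. -/
theorem second_difference_bound {ℓ α A S : ℝ} {u0 u1 u2 : ℝ → ℝ} (I : InitData ℓ α A u0 u1 u2)
    (hS : ∀ x ∈ Icc (-ℓ) ℓ, |u2 x| ≤ S) {k x y : ℝ} (hk : 0 < k) (hx : x ∈ Icc (-ℓ) (ℓ - k))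
    (hy : y ∈ Icc (-ℓ) (ℓ - k)) :
    |(u0 (x + k) - u0 x) - (u0 (y + k) - u0 y)| ≤ k * (S * |x - y|) := by
  have h1 : ∀ z ∈ Icc (-ℓ) (ℓ - k), |u1 (z + k) - u1 z| ≤ S * k := by
    intro z hz
    have := (convex_Icc (-ℓ) ℓ).norm_image_sub_le_of_norm_hasDerivWithin_le
      (f := u1) (f' := u2) (C := S) (fun y hy => (I.d2 y hy).hasDerivWithinAt) hS
      (x := z) (y := z + k) ⟨hz.1, by linarith [hz.2]⟩ ⟨by linarith [hz.1], by linarith [hz.2]⟩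
    rwa [add_sub_cancel_left, Real.norm_eq_abs, Real.norm_eq_abs, abs_of_pos hk] at this
  have := (convex_Icc (-ℓ) (ℓ - k)).norm_image_sub_le_of_norm_hasDerivWithin_le
      (f := fun z => u0 (z + k) - u0 z) (f' := fun z => u1 (z + k) - u1 z) (C := S * k)
      (fun z hz => (((I.d1 (z + k) ⟨by linarith [hz.1], by linarith [hz.2]⟩).comp_add_const z k).sub
        (I.d1 z ⟨hz.1, by linarith [hz.2]⟩)).hasDerivWithinAt) h1 hy hx
  rw [Real.norm_eq_abs, Real.norm_eq_abs] at this
  refine this.trans (le_of_eq ?_)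
  ring

/-! ### Coincidence with the truncated problem and continuation -/

section
variable {α T τ ℓ M M' L1 L' R lam Lam C A S : ℝ} {a f : ℝ → ℝ → ℝ → ℝ → ℝ}
variable {b g : ℝ → ℝ → ℝ → ℝ} {u0 u1 u2 : ℝ → ℝ} {u ut ux uxx : ℝ → ℝ → ℝ}

/-- Bound on `u_xx`: with the gradient under control the problem is uniformly parabolic with
Lipschitz coefficients. -/
theorem Facts.snd_bound (P : Facts τ ℓ M α a f b g u0 u ut ux uxx) (hα : 0 < α) (hℓ : 0 < ℓ)
    (hτT : τ ≤ T) (hL1 : 0 ≤ L1) (hM : M ≤ M') (hL : L1 ≤ L')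
    (hux : ∀ t ∈ Ioo 0 τ, ∀ x ∈ Icc (-ℓ) ℓ, |ux t x| ≤ L1)
    (hlam : 0 < lam) (h2 : 1 ≤ Lam) (hC : 0 ≤ C)
    (ha : ∀ t ∈ Icc 0 T, ∀ x ∈ Icc (-ℓ) ℓ, ∀ z ∈ Icc (-M') M', ∀ p ∈ Icc (-L') L',
      lam ≤ a t x z p ∧ a t x z p ≤ Lam ∧ |f t x z p| ≤ C)
    (hal : ∀ t ∈ Icc 0 T, ∀ x ∈ Icc (-ℓ) ℓ, ∀ z ∈ Icc (-M') M', ∀ p ∈ Icc (-L') L',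
      ∀ t' ∈ Icc 0 T, ∀ x' ∈ Icc (-ℓ) ℓ, ∀ z' ∈ Icc (-M') M', ∀ p' ∈ Icc (-L') L',
      |a t x z p - a t' x' z' p'| ≤ C * (|t - t'| + |x - x'| + |z - z'| + |p - p'|) ∧
      |f t x z p - f t' x' z' p'| ≤ C * (|t - t'| + |x - x'| + |z - z'| + |p - p'|))
    (hb : ∀ t ∈ Icc 0 T, ∀ z ∈ Icc (-M') M', (lam ≤ b t (-ℓ) z ∧ b t (-ℓ) z ≤ Lam) ∧
      (lam ≤ b t ℓ z ∧ b t ℓ z ≤ Lam) ∧ |g t (-ℓ) z| ≤ C ∧ |g t ℓ z| ≤ C)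
    (I : InitData ℓ α A u0 u1 u2) (hS : ∀ x ∈ Icc (-ℓ) ℓ, |u2 x| ≤ S) :
    ∃ L2, ∀ t ∈ Ioo 0 τ, ∀ x ∈ Ioo (-ℓ) ℓ, |uxx t x| ≤ L2 := by
  obtain ⟨L2, h⟩ := exists_snd_deriv_bound (ℓ := ℓ) (M := M) (L1 := L1) (lam := lam) (C1 := C)
    (F := C + Lam * L1) (S := S) hℓ hL1 hlam hC (by positivity)
  refine ⟨L2, fun t1 ht1 x hx => ?_⟩
  have hI : ∀ {t}, t ∈ Ioc 0 t1 → t ∈ Ioo 0 τ := fun ht => ⟨ht.1, ht.2.trans_lt ht1.2⟩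
  have hT : ∀ {t}, t ∈ Ioc 0 t1 → t ∈ Icc 0 T := fun ht => ⟨ht.1.le, (hI ht).2.le.trans hτT⟩
  have hlm : -ℓ ∈ Icc (-ℓ) ℓ := left_mem_Icc.2 (by linarith)
  have hrm : ℓ ∈ Icc (-ℓ) ℓ := right_mem_Icc.2 (by linarith)
  have hMs : Icc (-M) M ⊆ Icc (-M') M' := Icc_subset_Icc (by linarith) hM
  have hLs : Icc (-L1) L1 ⊆ Icc (-L') L' := Icc_subset_Icc (by linarith) hL
  have hL0 : 0 ≤ Lam * L1 := by positivity
  obtain ⟨Au, hAu, hAh⟩ := P.holder t1 ht1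
  have hbl : ∀ {t y bb gg : ℝ}, t ∈ Ioc 0 t1 → y ∈ Icc (-ℓ) ℓ → (lam ≤ bb ∧ bb ≤ Lam) →
      |gg| ≤ C → |gg| + |bb * ux t y| ≤ C + Lam * L1 := by
    intro t y bb gg ht hy h3 h4
    refine add_le_add h4 ?_
    rw [abs_mul, abs_of_nonneg (hlam.le.trans h3.1)]
    exact mul_le_mul h3.2 (hux t (hI ht) y hy) (abs_nonneg _) (by linarith)
  refine h a f u ut ux uxx t1 Au α hα hAu ?_ (P.cont t1 ht1)
    (fun t ht x hx => ⟨P.dt t (hI ht) x hx, P.dx t (hI ht) x hx, P.dxx t (hI ht) x hx,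
      P.bd t (hI ht) x hx, hux t (hI ht) x hx⟩) (fun t ht x hx => P.eq_int t (hI ht) x hx)
    ?_ hAh ?_ t1 (right_mem_Ioc.2 ht1.1) x hx
  · intro t ht x hx x' hx' z hz z' hz' p hp p' hp'
    have e1 := hal t (hT ht) x hx z (hMs hz) p (hLs hp) t (hT ht) x' hx' z' (hMs hz') p' (hLs hp')
    have e2 := ha t (hT ht) x hx z (hMs hz) p (hLs hp)
    rw [sub_self, abs_zero, zero_add] at e1
    exact ⟨e1.1, e1.2, e2.1, e2.2.2.trans (by linarith)⟩
  · intro t ht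
    have e1 := hb t (hT ht) _ (hMs (abs_le.1 (P.bd t (hI ht) ℓ hrm)))
    have e2 := hb t (hT ht) _ (hMs (abs_le.1 (P.bd t (hI ht) (-ℓ) hlm)))
    rw [P.eq_r t (hI ht), P.eq_l t (hI ht)]
    exact ⟨(abs_sub _ _).trans (hbl ht hrm e1.2.1 e1.2.2.2),
      (abs_add_le _ _).trans (hbl ht hlm e2.1 e2.2.2.1)⟩
  · intro k hk x y hx hy
    have hsub : ∀ {z}, z ∈ Icc (-ℓ) (ℓ - k) → z ∈ Icc (-ℓ) ℓ ∧ z + k ∈ Icc (-ℓ) ℓ := fun hz =>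
      ⟨⟨hz.1, by linarith [hz.2]⟩, ⟨by linarith [hz.1], by linarith [hz.2]⟩⟩
    rw [P.init _ (hsub hx).1, P.init _ (hsub hx).2, P.init _ (hsub hy).1, P.init _ (hsub hy).2]
    exact second_difference_bound I hS hk hx hy

variable {B : ℝ} {v q w r : ℝ → ℝ → ℝ}

/-- A solution obeying the truncation bounds also solves the truncated problem, hence equals
its solution by the comparison principle. -/
theorem Facts.eq_smoothSol (P : Facts τ ℓ M α a f b g u0 u ut ux uxx)
    (D : StarData lam Lam C (trG T ℓ M' L' R a f)
      (fun t z p => g (cl 0 T t) (-ℓ) (cl (-M') M' z) + trB T M' L' (fun t z => b t (-ℓ) z) t z p)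
      (fun t z p => g (cl 0 T t) ℓ (cl (-M') M' z) - trB T M' L' (fun t z => b t ℓ z) t z p))
    (S : SmoothSol ℓ T α B (trG T ℓ M' L' R a f)
      (fun t z p => g (cl 0 T t) (-ℓ) (cl (-M') M' z) + trB T M' L' (fun t z => b t (-ℓ) z) t z p)
      (fun t z p => g (cl 0 T t) ℓ (cl (-M') M' z) - trB T M' L' (fun t z => b t ℓ z) t z p)
      u0 v q w r) (hℓ : 0 < ℓ) (hτT : τ ≤ T) (hM : M ≤ M')
    (hux : ∀ t ∈ Ioo 0 τ, ∀ x ∈ Icc (-ℓ) ℓ, |ux t x| ≤ L')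
    (huxx : ∀ t ∈ Ioo 0 τ, ∀ x ∈ Ioo (-ℓ) ℓ, |uxx t x| ≤ R) :
    ∀ t ∈ Ico 0 τ, ∀ x ∈ Icc (-ℓ) ℓ, v t x = u t x := by
  intro t1 ht1' x hx
  rcases ht1'.1.eq_or_lt with h0 | h0
  · rw [← h0, S.init x hx, P.init x hx]
  have ht1 : t1 ∈ Ioo 0 τ := ⟨h0, ht1'.2⟩
  have hI : ∀ {t}, t ∈ Ioc 0 t1 → t ∈ Ioo 0 τ := fun ht => ⟨ht.1, ht.2.trans_lt ht1.2⟩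
  have hT : ∀ {t}, t ∈ Ioc 0 t1 → t ∈ Icc 0 T := fun ht => ⟨ht.1.le, (hI ht).2.le.trans hτT⟩
  have hTo : ∀ {t}, t ∈ Ioc 0 t1 → t ∈ Ioo 0 T := fun ht => ⟨ht.1, (hI ht).2.trans_le hτT⟩
  have hlm : -ℓ ∈ Icc (-ℓ) ℓ := left_mem_Icc.2 (by linarith)
  have hrm : ℓ ∈ Icc (-ℓ) ℓ := right_mem_Icc.2 (by linarith)
  have cu := P.cont t1 ht1
  have cv := S.continuousOn.mono (prod_mono (Icc_subset_Icc_right (ht1.2.le.trans hτT))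
    (le_refl (Icc (-ℓ) ℓ)))
  have du : ∀ t ∈ Ioc 0 t1, ∀ x ∈ Icc (-ℓ) ℓ, HasDerivAt (fun s => u s x) (ut t x) t ∧
      HasDerivAt (u t) (ux t x) x ∧ HasDerivAt (ux t) (uxx t x) x := fun t ht x hx =>
    ⟨P.dt t (hI ht) x hx, P.dx t (hI ht) x hx, P.dxx t (hI ht) x hx⟩
  have dv : ∀ t ∈ Ioc 0 t1, ∀ x ∈ Icc (-ℓ) ℓ, HasDerivAt (fun s => v s x) (q t x) t ∧
      HasDerivAt (v t) (w t x) x ∧ HasDerivAt (w t) (r t x) x := fun t ht x hx =>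
    ⟨S.dt t (hTo ht) x hx, S.dx t (hT ht) x, S.dxx t (hT ht) x hx⟩
  have eu : ∀ t ∈ Ioc 0 t1, ∀ x ∈ Ioo (-ℓ) ℓ, ut t x =
      trG T ℓ M' L' R a f t x (u t x) (ux t x) (uxx t x) := by
    intro t ht x hx
    have hx' := Ioo_subset_Icc_self hx
    rw [trG_eq (hT ht) hx' ((P.bd t (hI ht) x hx').trans hM) (hux t (hI ht) x hx')
      (huxx t (hI ht) x hx), P.eq_int t (hI ht) x hx]
  have ev := fun t ht x hx => S.eq_int t (hT (t := t) ht) x hx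
  have bu : ∀ t ∈ Ioc 0 t1,
      ut t (-ℓ) = (g (cl 0 T t) (-ℓ) (cl (-M') M' (u t (-ℓ))) +
        trB T M' L' (fun t z => b t (-ℓ) z) t (u t (-ℓ)) (ux t (-ℓ))) ∧
      ut t ℓ = (g (cl 0 T t) ℓ (cl (-M') M' (u t ℓ)) -
        trB T M' L' (fun t z => b t ℓ z) t (u t ℓ) (ux t ℓ)) := by
    intro t ht
    have e1 := (P.bd t (hI ht) _ hlm).trans hM
    have e2 := (P.bd t (hI ht) _ hrm).trans hM
    rw [trB_eq (hT ht) e1 (hux t (hI ht) _ hlm), trB_eq (hT ht) e2 (hux t (hI ht) _ hrm),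
      cl_eq (hT ht), cl_eq (abs_le.1 e1), cl_eq (abs_le.1 e2)]
    exact ⟨P.eq_l t (hI ht), P.eq_r t (hI ht)⟩
  have bv := fun t ht => And.intro (S.eq_l t (hT (t := t) ht)) (S.eq_r t (hT (t := t) ht))
  have i0 : ∀ x ∈ Icc (-ℓ) ℓ, v 0 x = u 0 x := fun x hx => by rw [S.init x hx, P.init x hx]
  exact le_antisymm
    (D.comparison hℓ cv cu dv du ev eu bv bu (fun x hx => (i0 x hx).le) t1 (right_mem_Icc.2 h0.le)
      x hx)
    (D.comparison hℓ cu cv du dv eu ev bu bv (fun x hx => (i0 x hx).ge) t1 (right_mem_Icc.2 h0.le)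
      x hx)

end

theorem exists_small_time {B c1 c2 : ℝ} (h1 : 0 < c1) (h2 : 0 < c2) :
    ∃ δ > 0, ∀ ρ : ℝ, |ρ| < δ → B * |ρ| ≤ 1 ∧ B * |ρ| ^ c1 ≤ 1 ∧ B * |ρ| ^ c2 ≤ 1 := by
  have key : ∀ c : ℝ, 0 < c → ∀ᶠ ρ in 𝓝 (0:ℝ), B * |ρ| ^ c ≤ 1 := by
    intro c hc
    have : Continuous fun ρ : ℝ => B * |ρ| ^ c :=
      continuous_const.mul (continuous_abs.rpow_const fun _ => Or.inr hc.le)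
    have ht := this.tendsto 0
    rw [abs_zero, Real.zero_rpow hc.ne', mul_zero] at ht
    filter_upwards [ht.eventually (gt_mem_nhds one_pos)] with ρ h using h.le
  have k1 := key 1 one_pos
  simp only [Real.rpow_one] at k1
  obtain ⟨δ, hδ, h⟩ := Metric.eventually_nhds_iff.1 (k1.and ((key c1 h1).and (key c2 h2)))
  exact ⟨δ, hδ, fun ρ hρ => h (by rwa [Real.dist_eq, sub_zero])⟩

/-- The initial function, with its derivatives and their common bound. -/
theorem exists_initData {α ℓ : ℝ} {u0 : ℝ → ℝ} (h : MemC2 α ℓ u0) :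
    ∃ A S : ℝ, 0 ≤ A ∧ 0 ≤ S ∧ InitData ℓ α A u0 (deriv u0) (deriv (deriv u0)) ∧
      ∀ x ∈ Icc (-ℓ) ℓ, |u0 x| ≤ S ∧ |deriv u0 x| ≤ S ∧ |deriv (deriv u0) x| ≤ S := by
  obtain ⟨h0, h1, h2, C, hC⟩ := h
  obtain ⟨S0, s0⟩ := isCompact_Icc.exists_bound_of_continuousOn h0
  obtain ⟨S1, s1⟩ := isCompact_Icc.exists_bound_of_continuousOn
    (fun x hx => (h1 x hx).2.continuousAt.continuousWithinAt : ContinuousOn (deriv u0) (Icc (-ℓ) ℓ))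
  obtain ⟨S2, s2⟩ := isCompact_Icc.exists_bound_of_continuousOn h2
  refine ⟨max C 0, max 0 (max S0 (max S1 S2)), le_max_right _ _, le_max_left _ _,
    ⟨fun x hx => (h1 x hx).1.hasDerivAt, fun x hx => (h1 x hx).2.hasDerivAt, fun x hx y hy => ?_⟩,
    fun x hx => ⟨(s0 x hx).trans ?_, (s1 x hx).trans ?_, (s2 x hx).trans ?_⟩⟩
  · exact (hC x hx y hy).trans
      (mul_le_mul_of_nonneg_right (le_max_left _ _) (Real.rpow_nonneg (abs_nonneg _) _))
  · exact (le_max_left _ _).trans (le_max_right _ _)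
  · exact (le_max_left _ _).trans ((le_max_right _ _).trans (le_max_right _ _))
  · exact (le_max_right _ _).trans ((le_max_right _ _).trans (le_max_right _ _))

section
variable {ℓ T α B M L R τ : ℝ} {G : ℝ → ℝ → ℝ → ℝ → ℝ → ℝ} {Hl Hr : ℝ → ℝ → ℝ → ℝ}
variable {u0 : ℝ → ℝ} {u ux uxx v q w r : ℝ → ℝ → ℝ}

/-- If `v = u` on a time slice, the bounds for `u`, `u_x`, `u_xx` transfer to `v`, `w`, `r`. -/
theorem SmoothSol.transfer (S : SmoothSol ℓ T α B G Hl Hr u0 v q w r) (hℓ : 0 < ℓ) {t : ℝ}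
    (ht : t ∈ Icc 0 T) (he : ∀ x ∈ Icc (-ℓ) ℓ, v t x = u t x)
    (dx : ∀ x ∈ Icc (-ℓ) ℓ, HasDerivAt (u t) (ux t x) x)
    (dxx : ∀ x ∈ Icc (-ℓ) ℓ, HasDerivAt (ux t) (uxx t x) x)
    (h0 : ∀ x ∈ Icc (-ℓ) ℓ, |u t x| ≤ M) (h1 : ∀ x ∈ Icc (-ℓ) ℓ, |ux t x| ≤ L)
    (h2 : ∀ x ∈ Ioo (-ℓ) ℓ, |uxx t x| ≤ R) :
    (∀ x ∈ Icc (-ℓ) ℓ, |v t x| ≤ M ∧ |w t x| ≤ L) ∧ ∀ x ∈ Ioo (-ℓ) ℓ, |r t x| ≤ R := by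
  have e1 : ∀ x ∈ Ioo (-ℓ) ℓ, w t x = ux t x := fun x hx =>
    (S.dx t ht x).unique ((dx x (Ioo_subset_Icc_self hx)).congr_of_eventuallyEq
      (by filter_upwards [Ioo_mem_nhds hx.1 hx.2] with y hy using he y (Ioo_subset_Icc_self hy)))
  have e2 : ∀ x ∈ Ioo (-ℓ) ℓ, r t x = uxx t x := fun x hx =>
    (S.dxx t ht x (Ioo_subset_Icc_self hx)).unique
      ((dxx x (Ioo_subset_Icc_self hx)).congr_of_eventuallyEq
      (by filter_upwards [Ioo_mem_nhds hx.1 hx.2] with y hy using e1 y hy))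
  have hw := abs_le_of_Ioo hℓ (φ := w t)
    (fun x hx => (S.dxx t ht x hx).continuousAt.continuousWithinAt)
    (fun x hx => by rw [e1 x hx]; exact h1 x (Ioo_subset_Icc_self hx))
  exact ⟨fun x hx => ⟨by rw [he x hx]; exact h0 x hx, hw x hx⟩,
    fun x hx => by rw [e2 x hx]; exact h2 x hx⟩

/-- Bounds valid before time `τ < T` persist, up to adding one, for a short time after `τ`. -/
theorem SmoothSol.extend (S : SmoothSol ℓ T α B G Hl Hr u0 v q w r) (hα : 0 < α) (hτ : 0 < τ)
    (hτT : τ < T)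
    (h : ∀ t ∈ Ioo 0 τ, (∀ x ∈ Icc (-ℓ) ℓ, |v t x| ≤ M ∧ |w t x| ≤ L) ∧
      ∀ x ∈ Ioo (-ℓ) ℓ, |r t x| ≤ R) :
    ∃ τ', τ < τ' ∧ τ' ≤ T ∧ ∀ t ∈ Ioo 0 τ',
      (∀ x ∈ Icc (-ℓ) ℓ, |v t x| ≤ M + 1 ∧ |w t x| ≤ L + 1) ∧
      ∀ x ∈ Ioo (-ℓ) ℓ, |r t x| ≤ R + 1 := by
  obtain ⟨δ, hδ, hδ'⟩ := exists_small_time (B := B) (c1 := (1 + α) / 2) (c2 := α / 2)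
    (by positivity) (by positivity)
  refine ⟨min T (τ + δ / 2), lt_min hτT (by linarith), min_le_left _ _, fun t ht => ?_⟩
  have htT : t ∈ Icc 0 T := ⟨ht.1.le, ht.2.le.trans (min_le_left _ _)⟩
  have ht2 : t < τ + δ / 2 := ht.2.trans_le (min_le_right _ _)
  obtain ⟨s, hs, hst⟩ : ∃ s ∈ Ioo 0 τ, |t - s| < δ := by
    by_cases htτ : t < τ
    · exact ⟨t, ⟨ht.1, htτ⟩, by rwa [sub_self, abs_zero]⟩
    · have m1 := le_max_left (τ / 2) (τ - δ / 4)
      have m2 := le_max_right (τ / 2) (τ - δ / 4)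
      have m3 : max (τ / 2) (τ - δ / 4) < τ := max_lt (by linarith) (by linarith)
      exact ⟨max (τ / 2) (τ - δ / 4), ⟨by linarith, m3⟩, by rw [abs_lt]; constructor <;> linarith⟩
  have hsT : s ∈ Icc 0 T := ⟨hs.1.le, hs.2.le.trans hτT.le⟩
  obtain ⟨d1, d2, d3⟩ := hδ' _ hst
  have tri : ∀ {p p' d k : ℝ}, |p - p'| ≤ d → d ≤ 1 → |p'| ≤ k → |p| ≤ k + 1 := by
    intro p p' d k k1 k2 k3
    have := abs_add_le (p - p') p'
    rw [sub_add_cancel] at this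
    linarith
  obtain ⟨e1, e2⟩ := h s hs
  refine ⟨fun x hx => ⟨tri (S.v_tm t htT s hsT x hx) d1 (e1 x hx).1,
    tri (S.w_tm t htT s hsT x hx) d2 (e1 x hx).2⟩, fun x hx => ?_⟩
  exact tri (S.r_tm t htT s hsT x (Ioo_subset_Icc_self hx)) d3 (e2 x hx)

end

/-- Corollary 3.5: global existence criterion. If the unique maximal solution of (1),
(2a) is bounded by `M` and the Bernstein-Nagumo conditions hold, then the solution is
global, i.e. it extends to an element of `C^{1+α/2,2+α}(Ω_T)` solving the problem. -/
theorem bounded_solutions_are_global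
    (α T ℓ K M q₀ τinf : ℝ) (hα : α ∈ Ioo (0:ℝ) 1) (hT : 0 < T) (hl : 0 < ℓ)
    (hM : 0 < M) (hK : 0 ≤ K) (hKq : K ≤ q₀)
    (a f : ℝ → ℝ → ℝ → ℝ → ℝ) (b g : ℝ → ℝ → ℝ → ℝ) (ψ : ℝ → ℝ)
    (u0 : ℝ → ℝ) (u : ℝ → ℝ → ℝ)
    (ha : ContDiffOn ℝ 2 (fun q : ℝ × ℝ × ℝ × ℝ => a q.1 q.2.1 q.2.2.1 q.2.2.2)
      (Icc (0:ℝ) T ×ˢ Icc (-ℓ) ℓ ×ˢ (univ : Set (ℝ × ℝ))))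
    (hf : ContDiffOn ℝ 2 (fun q : ℝ × ℝ × ℝ × ℝ => f q.1 q.2.1 q.2.2.1 q.2.2.2)
      (Icc (0:ℝ) T ×ˢ Icc (-ℓ) ℓ ×ˢ (univ : Set (ℝ × ℝ))))
    (hb : ContDiffOn ℝ 2 (fun q : ℝ × ℝ => b q.1 ℓ q.2) (Icc (0:ℝ) T ×ˢ (univ : Set ℝ)) ∧
      ContDiffOn ℝ 2 (fun q : ℝ × ℝ => b q.1 (-ℓ) q.2) (Icc (0:ℝ) T ×ˢ (univ : Set ℝ)))
    (hg : ContDiffOn ℝ 2 (fun q : ℝ × ℝ => g q.1 ℓ q.2) (Icc (0:ℝ) T ×ˢ (univ : Set ℝ)) ∧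
      ContDiffOn ℝ 2 (fun q : ℝ × ℝ => g q.1 (-ℓ) q.2) (Icc (0:ℝ) T ×ˢ (univ : Set ℝ)))
    (hapos : ∀ t ∈ Icc (0:ℝ) T, ∀ x ∈ Icc (-ℓ) ℓ, ∀ z p : ℝ, 0 < a t x z p)
    (hbpos : ∀ t ∈ Icc (0:ℝ) T, ∀ z : ℝ, 0 < b t ℓ z ∧ 0 < b t (-ℓ) z)
    (hu0 : MemC2 α ℓ u0)
    (hcompat_r : -(b 0 ℓ (u0 ℓ)) * deriv u0 ℓ + g 0 ℓ (u0 ℓ)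
      = a 0 ℓ (u0 ℓ) (deriv u0 ℓ) * deriv (deriv u0) ℓ + f 0 ℓ (u0 ℓ) (deriv u0 ℓ))
    (hcompat_l : b 0 (-ℓ) (u0 (-ℓ)) * deriv u0 (-ℓ) + g 0 (-ℓ) (u0 (-ℓ))
      = a 0 (-ℓ) (u0 (-ℓ)) (deriv u0 (-ℓ)) * deriv (deriv u0) (-ℓ)
        + f 0 (-ℓ) (u0 (-ℓ)) (deriv u0 (-ℓ)))
    (hLip : ∀ x ∈ Icc (-ℓ) ℓ, ∀ y ∈ Icc (-ℓ) ℓ, |u0 x - u0 y| ≤ K * |x - y|)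
    (hψreg : ContDiffOn ℝ 1 ψ (Ici 0)) (hψ1 : ∀ ρ ∈ Ici (0:ℝ), 1 ≤ ψ ρ)
    (hint : ∃ q₁ : ℝ, q₀ < q₁ ∧ 2 * M < ∫ ρ in q₀..q₁, ρ / ψ ρ)
    (hfa : ∀ t ∈ Icc (0:ℝ) T, ∀ x ∈ Icc (-ℓ) ℓ, ∀ z ∈ Icc (-M) M, ∀ p : ℝ,
      |f t x z p| ≤ a t x z p * ψ (|p|))
    (hbg : ∀ t ∈ Ioc (0:ℝ) T, ∀ z ∈ Icc (-M) M, ∀ p : ℝ, q₀ ≤ p →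
      g t ℓ z ≤ b t ℓ z * p ∧ -g t ℓ z ≤ b t ℓ z * p ∧
      -g t (-ℓ) z ≤ b t (-ℓ) z * p ∧ g t (-ℓ) z ≤ b t (-ℓ) z * p)
    (hτ : 0 < τinf) (hτT : τinf ≤ T)
    (hsol : ∀ τ : ℝ, 0 < τ → τ < τinf →
      MemP α τ (Ioo (-ℓ) ℓ) u ∧ SolQ2a τ ℓ a f b g u0 u)
    (hmax : ∀ (v : ℝ → ℝ → ℝ) (τ' : ℝ), τinf < τ' → τ' ≤ T →
      (∀ t ∈ Ico (0:ℝ) τinf, ∀ x ∈ Icc (-ℓ) ℓ, v t x = u t x) →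
      ¬(MemP α τ' (Ioo (-ℓ) ℓ) v ∧ SolQ2a τ' ℓ a f b g u0 v))
    (hbnd : ∀ t ∈ Ioo (0:ℝ) τinf, ∀ x ∈ Ioo (-ℓ) ℓ, |u t x| ≤ M) :
    ∃ v : ℝ → ℝ → ℝ, (∀ t ∈ Ico (0:ℝ) τinf, ∀ x ∈ Icc (-ℓ) ℓ, v t x = u t x) ∧
      MemP α T (Ioo (-ℓ) ℓ) v ∧ SolQ2a T ℓ a f b g u0 v := by
  have hα0 := hα.1
  obtain ⟨q₁, hq, hint⟩ := hint
  have hL1 : 0 ≤ q₁ := (hK.trans hKq).trans hq.le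
  have P := exists_facts hl hτ hsol hbnd
  have hux := P.grad_bound hl hτT hK hKq hapos hLip hψreg hψ1 hq hint hfa hbg
  obtain ⟨A, S, hA, hS, I, hSb⟩ := exists_initData hu0
  -- the cut-offs lie one above the a priori bounds, which leaves room beyond `τinf`, and above
  -- the bounds of the initial function, so that compatibility survives the truncation
  set M' := max M S + 1 with hM'
  set L' := max q₁ S + 1 with hL'
  have m1 := le_max_left M S
  have m2 := le_max_right M S
  have m3 := le_max_left q₁ S
  have m4 := le_max_right q₁ S
  obtain ⟨lam, Lam, C, hlam, hl1, hl2, hC, ka, kal, kb, kbl⟩ :=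
    exists_box_constants (M := M') (L := L') hT hl ha hf hb hg hapos hbpos
  obtain ⟨L2, huxx⟩ := P.snd_bound hα0 hl hτT hL1 (by linarith) (by linarith) hux hlam hl2 hC
    ka kal kb I (fun x hx => (hSb x hx).2.2)
  set R := max L2 S + 1 with hR
  have m5 := le_max_left L2 S
  have m6 := le_max_right L2 S
  have D := starData_trunc (R := R) (bl := fun t z => b t (-ℓ) z) (br := fun t z => b t ℓ z)
    (gl := fun t z => g t (-ℓ) z) (gr := fun t z => g t ℓ z) hT.le hl.le
    (by linarith : 0 ≤ M') (by linarith : 0 ≤ L') (by linarith : 0 ≤ R) hlam hl1 hl2 hC ka kal kb kbl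
  have h0T : (0:ℝ) ∈ Icc 0 T := left_mem_Icc.2 hT.le
  have hlm : -ℓ ∈ Icc (-ℓ) ℓ := left_mem_Icc.2 (by linarith)
  have hrm : ℓ ∈ Icc (-ℓ) ℓ := right_mem_Icc.2 (by linarith)
  have bnd : ∀ x ∈ Icc (-ℓ) ℓ, |u0 x| ≤ M' ∧ |deriv u0 x| ≤ L' ∧ |deriv (deriv u0) x| ≤ R :=
    fun x hx => ⟨(hSb x hx).1.trans (by linarith), (hSb x hx).2.1.trans (by linarith),
      (hSb x hx).2.2.trans (by linarith)⟩
  have bl := bnd _ hlm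
  have br := bnd _ hrm
  obtain ⟨B0, v0, q0', w0, r, X0⟩ := exists_limitSol D hα0 hα.2 hl hT hA I
    (by
      rw [trG_eq h0T hlm bl.1 bl.2.1 bl.2.2]
      simp only [trB_eq h0T bl.1 bl.2.1, cl_eq h0T, cl_eq (abs_le.1 bl.1)]
      linarith)
    (by
      rw [trG_eq h0T hrm br.1 br.2.1 br.2.2]
      simp only [trB_eq h0T br.1 br.2.1, cl_eq h0T, cl_eq (abs_le.1 br.1)]
      linarith)
  obtain ⟨B, v, w, X⟩ := smoothSol_of_limitSol D X0 hα0 hα.2 hl hT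
  have heq := P.eq_smoothSol D X hl hτT (by linarith) (fun t ht x hx =>
    (hux t ht x hx).trans (by linarith)) (fun t ht x hx => (huxx t ht x hx).trans (by linarith))
  have htr := fun t (ht : t ∈ Ioo 0 τinf) => X.transfer hl ⟨ht.1.le, ht.2.le.trans hτT⟩
    (heq t ⟨ht.1.le, ht.2⟩) (P.dx t ht) (P.dxx t ht) (P.bd t ht) (hux t ht) (huxx t ht)
  -- if `τinf < T` then `v` would extend the maximal solution
  rcases hτT.eq_or_lt with hEq | hlt
  · refine ⟨v, heq, X.sol hl le_rfl (fun t ht x hx => ?_) (fun t ht x hx => ?_)⟩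
    · rw [← hEq] at ht
      exact ⟨((htr t ht).1 x hx).1.trans (by linarith), ((htr t ht).1 x hx).2.trans (by linarith)⟩
    · rw [← hEq] at ht
      exact ((htr t ht).2 x hx).trans (by linarith)
  · obtain ⟨τ', h1, h2, h3⟩ := X.extend hα0 hτ hlt htr
    refine absurd (X.sol hl h2 (fun t ht x hx => ?_) (fun t ht x hx => ?_)) (hmax v τ' h1 h2 heq)
    · exact ⟨((h3 t ht).1 x hx).1.trans (by linarith), ((h3 t ht).1 x hx).2.trans (by linarith)⟩
    · exact ((h3 t ht).2 x hx).trans (by linarith)
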